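/- arXiv:2404.00831 — 5 statements merged into one kernel-verified Lean document; each statement's English description precedes it below -/
import Mathlib

section
/- For all integers m ≥ 2 and 1 ≤ r ≤ m, and every integer z with z ≥ (r^r / r!) · r · ln(m) + 1, there exist functions B⁽¹⁾, …, B⁽ᶻ⁾ : [m] → [r] (partitions of the m items into r chunks) such that for every subset S ⊆ [m] with |S| ≤ r there is some ℓ ∈ [z] for which B⁽ℓ⁾ is injective on S; that is, the list of partitions B⁽¹⁾, …, B⁽ᶻ⁾ is r-itemizing. -/
/-!
Choose the `z` partitions independently and uniformly at random. A uniform map into `q` chunks is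
injective on a fixed set of `r` items with probability `p = q (q - 1) ⋯ (q - r + 1) / q ^ r`, which
is `r! / r ^ r` for `q = r`. All `z` maps fail on that set with probability `(1 - p) ^ z`, so by the
union bound some `r`-set is itemized by none of them with probability at most
`m ^ r * (1 - p) ^ z ≤ exp (r * log m - p * z)`, which is less than `1`.
-/

open Finset

variable {α β ι : Type*}

section UnionBound

variable {Ω κ : Type*} [Fintype Ω] {p : ℝ}

theorem card_compl_le_of_le_dens [DecidableEq Ω] {s : Finset Ω} (hp : p ≤ s.dens) :
    (#sᶜ : ℝ) ≤ (1 - p) * Fintype.card Ω := by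
  have hs : p * Fintype.card Ω ≤ #s := by
    rw [← nnratCast_dens_mul_natCast_card s]
    gcongr
  have hcard : (#s : ℝ) + #sᶜ = Fintype.card Ω := mod_cast card_add_card_compl s
  linarith

theorem exists_forall_exists_mem_of_card_mul_pow_lt_one [Nonempty Ω] [Fintype ι] {T : Finset κ}
    {good : κ → Finset Ω} (hp : ∀ s ∈ T, p ≤ (good s).dens)
    (hT : #T * (1 - p) ^ Fintype.card ι < 1) :
    ∃ ω : ι → Ω, ∀ s ∈ T, ∃ i, ω i ∈ good s := by
  classical
  by_contra! hbad
  set N := Fintype.card Ω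
  set n := Fintype.card ι
  have hcover : univ ⊆ T.biUnion fun s ↦ Fintype.piFinset fun _ : ι ↦ (good s)ᶜ := fun ω _ ↦ by
    simpa using hbad ω
  have hunion : N ^ n ≤ ∑ s ∈ T, #(good s)ᶜ ^ n := by
    simpa [N, n] using (card_le_card hcover).trans card_biUnion_le
  have hN : (0 : ℝ) < N := mod_cast Fintype.card_pos
  refine lt_irrefl ((N : ℝ) ^ n) ?_
  calc (N : ℝ) ^ n ≤ ∑ s ∈ T, (#(good s)ᶜ : ℝ) ^ n := mod_cast hunion
    _ ≤ ∑ _s ∈ T, ((1 - p) * N) ^ n := by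
      gcongr with s hs
      exact card_compl_le_of_le_dens (hp s hs)
    _ = #T * (1 - p) ^ n * (N : ℝ) ^ n := by
      rw [sum_const, nsmul_eq_mul, mul_pow, mul_assoc]
    _ < (N : ℝ) ^ n := mul_lt_of_lt_one_left (pow_pos hN n) hT

end UnionBound

theorem mul_one_sub_pow_lt_one_of_log_lt {p M : ℝ} {n : ℕ} (hM : 0 < M) (hp : p ≤ 1)
    (h : Real.log M < p * n) : M * (1 - p) ^ n < 1 := by
  calc M * (1 - p) ^ n ≤ M * Real.exp (-p) ^ n :=
        mul_le_mul_of_nonneg_left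
          (pow_le_pow_left₀ (sub_nonneg.2 hp) (Real.one_sub_le_exp_neg p) n) hM.le
    _ = Real.exp (Real.log M - p * n) := by
        rw [← Real.exp_nat_mul, sub_eq_add_neg, Real.exp_add, Real.exp_log hM]
        ring_nf
    _ < 1 := Real.exp_lt_one_iff.2 (sub_neg.2 h)

section InjOn

/-- A map injective on `S` is an embedding of `S` together with an arbitrary map on the complement.
This is used to count such maps. -/
def injOnEquivEmbeddingProd (S : Finset α) [DecidablePred (· ∈ S)] :
    {f : α → β // Set.InjOn f S} ≃ (S ↪ β) × ({a // a ∉ S} → β) :=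
  calc {f : α → β // Set.InjOn f S}
      ≃ {g : (S → β) × ({a // a ∉ S} → β) // Function.Injective g.1} :=
        (Equiv.piEquivPiSubtypeProd (· ∈ S) fun _ ↦ β).subtypeEquiv fun _ ↦
          Set.injOn_iff_injective
    _ ≃ {g : S → β // Function.Injective g} × ({a // a ∉ S} → β) :=
        Equiv.prodSubtypeFstEquivSubtypeProd
    _ ≃ (S ↪ β) × ({a // a ∉ S} → β) :=
        (Equiv.subtypeInjectiveEquivEmbedding S β).prodCongr (Equiv.refl _)

variable [Fintype α] [DecidableEq α] [Fintype β]

theorem card_filter_injOn (S : Finset α) [DecidablePred fun f : α → β ↦ Set.InjOn f S] :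
    #{f : α → β | Set.InjOn f S} =
      (Fintype.card β).descFactorial #S * Fintype.card β ^ (Fintype.card α - #S) := by
  rw [← Fintype.card_subtype, Fintype.card_congr (injOnEquivEmbeddingProd S), Fintype.card_prod,
    Fintype.card_embedding_eq, Fintype.card_fun, Fintype.card_subtype_compl, Fintype.card_coe]

theorem dens_filter_injOn [Nonempty β] (S : Finset α)
    [DecidablePred fun f : α → β ↦ Set.InjOn f S] :
    dens {f : α → β | Set.InjOn f S} =
      ((Fintype.card β).descFactorial #S : ℚ≥0) / Fintype.card β ^ #S := by
  have hβ : (Fintype.card β : ℚ≥0) ≠ 0 := Nat.cast_ne_zero.2 Fintype.card_ne_zero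
  have hpow : (Fintype.card β : ℚ≥0) ^ Fintype.card α =
      Fintype.card β ^ #S * Fintype.card β ^ (Fintype.card α - #S) := by
    rw [← pow_add, Nat.add_sub_of_le (card_le_univ S)]
  rw [dens_eq_card_div_card, card_filter_injOn, Fintype.card_fun, Nat.cast_mul, Nat.cast_pow,
    Nat.cast_pow, hpow, mul_div_mul_right _ _ (pow_ne_zero _ hβ)]

end InjOn

/-- A family `B` of partitions of the items `α` into chunks `β` is `r`-itemizing if every set of at
most `r` items is itemized by some member, that is, has its items in distinct chunks. A partition is
encoded as the map sending an item to its chunk, so chunks may be empty. -/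
def IsItemizing (r : ℕ) (B : ι → α → β) : Prop :=
  ∀ S : Finset α, #S ≤ r → ∃ ℓ, Set.InjOn (B ℓ) S

variable [Fintype α] {r : ℕ}

theorem isItemizing_of_forall_card_eq {B : ι → α → β} (hr : r ≤ Fintype.card α)
    (hB : ∀ S : Finset α, #S = r → ∃ ℓ, Set.InjOn (B ℓ) S) : IsItemizing r B := by
  intro S hS
  obtain ⟨T, hST, hT⟩ := exists_superset_card_eq hS hr
  obtain ⟨ℓ, hℓ⟩ := hB T hT
  exact ⟨ℓ, hℓ.mono (coe_subset.2 hST)⟩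

variable [Fintype β]

theorem exists_isItemizing_of_card_le_card [Nonempty ι] (h : Fintype.card α ≤ Fintype.card β) :
    ∃ B : ι → α → β, IsItemizing r B := by
  obtain ⟨f⟩ := Function.Embedding.nonempty_of_card_le h
  exact ⟨fun _ ↦ f, fun _ _ ↦ ⟨Classical.arbitrary ι, f.injective.injOn⟩⟩

variable [Fintype ι] [Nonempty β]

theorem exists_isItemizing_of_log_choose_lt (hr : r ≤ Fintype.card α)
    (h : Real.log ((Fintype.card α).choose r) <
      (Fintype.card β).descFactorial r / (Fintype.card β : ℝ) ^ r * Fintype.card ι) :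
    ∃ B : ι → α → β, IsItemizing r B := by
  classical
  set p : ℝ := (Fintype.card β).descFactorial r / (Fintype.card β : ℝ) ^ r with hp_def
  have hp : p ≤ 1 := div_le_one_of_le₀ (mod_cast Nat.descFactorial_le_pow _ _) (by positivity)
  have hdens : ∀ S ∈ powersetCard r (univ : Finset α),
      p ≤ dens {f : α → β | Set.InjOn f S} := fun S hS ↦ by
    simp [hp_def, dens_filter_injOn, (mem_powersetCard.1 hS).2]
  have hunion : #(powersetCard r (univ : Finset α)) * (1 - p) ^ Fintype.card ι < 1 := by
    rw [card_powersetCard, card_univ]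
    exact mul_one_sub_pow_lt_one_of_log_lt (mod_cast Nat.choose_pos hr) hp h
  obtain ⟨B, hB⟩ := exists_forall_exists_mem_of_card_mul_pow_lt_one hdens hunion
  exact ⟨B, isItemizing_of_forall_card_eq hr fun S hS ↦ by simpa using hB S (by simp [hS])⟩

theorem exists_itemizing_partitions_general (hr : r ≤ Fintype.card β)
    (h : (Fintype.card β : ℝ) ^ r / (Fintype.card β).descFactorial r * r *
      Real.log (Fintype.card α) < Fintype.card ι) :
    ∃ B : ι → α → β, IsItemizing r B := by
  rcases le_or_gt r (Fintype.card α) with hrα | hαr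
  · have hdesc : (0 : ℝ) < (Fintype.card β).descFactorial r :=
      mod_cast Nat.descFactorial_pos.2 hr
    refine exists_isItemizing_of_log_choose_lt hrα ?_
    calc Real.log ((Fintype.card α).choose r) ≤ Real.log ((Fintype.card α : ℝ) ^ r) :=
          Real.log_le_log (mod_cast Nat.choose_pos hrα) (mod_cast Nat.choose_le_pow _ _)
      _ = r * Real.log (Fintype.card α) := Real.log_pow _ _
      _ < (Fintype.card β).descFactorial r / (Fintype.card β : ℝ) ^ r * Fintype.card ι := by
          rw [← inv_div, ← div_eq_inv_mul, lt_div_iff₀' (by positivity), ← mul_assoc]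
          exact h
  · have hι : (0 : ℝ) < Fintype.card ι := h.trans_le' (by positivity)
    have : Nonempty ι := Fintype.card_pos_iff.1 (mod_cast hι)
    exact exists_isItemizing_of_card_le_card (hαr.le.trans hr)

/-- existence of an `r`-itemizing list of `z` partitions of `[m]` into `r` chunks,
whenever `z ≥ (r^r / r!) · r · ln(m) + 1`. A partition `B : Fin m → Fin r` itemizes
`S` if it is injective on `S`. -/
theorem exists_itemizing_partitions
    (m r z : ℕ) (hm : 2 ≤ m) (hr1 : 1 ≤ r) (hrm : r ≤ m)
    (hz : ((r : ℝ) ^ r / (Nat.factorial r : ℝ)) * r * Real.log m + 1 ≤ (z : ℝ)) :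
    ∃ B : Fin z → (Fin m → Fin r),
      ∀ S : Finset (Fin m), S.card ≤ r → ∃ ℓ : Fin z, Set.InjOn (B ℓ) ↑S := by
  have : Nonempty (Fin r) := ⟨⟨0, hr1⟩⟩
  exact exists_itemizing_partitions_general (by simp)
    (by simpa [Nat.descFactorial_self] using (lt_add_one _).trans_le hz)
end

section
/- There exist universal constants c, C > 0 such that for all integers m ≥ 2, n ≥ 1, and k with C · log₂(m) ≤ k ≤ m, there is a set 𝒜 of allocations of the m items to the n bidders with the following two properties: (1) the family {Aᵢ : A ∈ 𝒜, i ∈ [n]} of all sets that any bidder can possibly receive in 𝒜 has cardinality at most 2^{c·k}; and (2) for every profile of monotone subadditive valuations v₁,…,vₙ : 2^[m] → ℝ≥0, max_{A ∈ 𝒜} Σᵢ vᵢ(Aᵢ) ≥ √(k/m) · max over all allocations A of Σᵢ vᵢ(Aᵢ). -/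
/-!
Spread the `m` items over `N ≈ √(m / k)` bins of at most `N * Q` items each, where `Q ≈ k`. At most
`N` bidders can receive more than `N * Q` items, so giving everything to the best of them captures a
`1 / N` fraction of their welfare. The set of every other bidder splits into `2 * N` chunks of at
most `Q` items, each inside one bin. If all bidders keep a random chunk, they retain a `1 / (2 * N)`
fraction of their value by subadditivity, while the expected load of a bin is at most `Q / 2`; by
Markov's inequality, discarding the bidders in overfull bins costs only another factor of `2`, and
then every bin carries at most `2 * Q` items. A perfect hash family extends the surviving chunks to
disjoint bundles, each given by a bin, a hash function and a set of hash values, so that there are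
only `2 ^ O(k)` of them.
-/

namespace SubadditiveAuction

open Finset Function
open scoped BigOperators

section Hashing

variable {α γ Ω X τ : Type*}

/-- A family `H` of functions is a perfect hash family for sets of size at most `K` if each such set
is mapped injectively by some member of the family. -/
def IsPerfectHashFamily (K : ℕ) (H : τ → α → γ) : Prop :=
  ∀ D : Finset α, #D ≤ K → ∃ s, Set.InjOn (H s) D

theorem exists_forall_exists_notMem_of_sum_pow_lt [Fintype Ω] (𝒟 : Finset X)
    (bad : X → Finset Ω) (t : ℕ) (hbad : ∑ x ∈ 𝒟, #(bad x) ^ t < Fintype.card Ω ^ t) :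
    ∃ H : Fin t → Ω, ∀ x ∈ 𝒟, ∃ s, H s ∉ bad x := by
  classical
  by_contra! hall
  have hcover : (univ : Finset (Fin t → Ω)) ⊆
      𝒟.biUnion fun x => Fintype.piFinset fun _ => bad x := fun H _ => by
    simpa only [mem_biUnion, Fintype.mem_piFinset] using hall H
  refine hbad.not_ge ?_
  calc Fintype.card Ω ^ t = #(univ : Finset (Fin t → Ω)) := by simp
    _ ≤ ∑ x ∈ 𝒟, #(Fintype.piFinset fun _ : Fin t => bad x) :=
      (card_le_card hcover).trans card_biUnion_le
    _ = ∑ x ∈ 𝒟, #(bad x) ^ t := by simp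

theorem two_pow_mul_one_sub_inv_pow_lt_one (K : ℕ) {m : ℕ} (hm : m ≠ 0) :
    (2 : ℝ) ^ m * (1 - 1 / 2 ^ K) ^ (2 ^ K * m) < 1 := by
  have hexp : (1 - 1 / (2 : ℝ) ^ K) ^ 2 ^ K ≤ Real.exp (-1) := by
    exact_mod_cast Real.one_sub_div_pow_le_exp_neg (n := 2 ^ K) (t := 1)
      (by exact_mod_cast Nat.one_le_two_pow)
  have hnonneg : 0 ≤ 1 - 1 / (2 : ℝ) ^ K :=
    sub_nonneg.2 (div_le_one_of_le₀ (one_le_pow₀ one_le_two) (by positivity))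
  rw [pow_mul, ← mul_pow]
  refine pow_lt_one₀ (by positivity) ?_ hm
  calc 2 * (1 - 1 / (2 : ℝ) ^ K) ^ 2 ^ K ≤ 2 * Real.exp (-1) := by gcongr
    _ < 1 := by
      rw [Real.exp_neg, ← div_eq_mul_inv, div_lt_one (Real.exp_pos 1)]
      exact Real.exp_one_gt_two

variable [Fintype α] [Fintype γ]

theorem card_injOn_eq [DecidableEq α] [DecidableEq γ] (D : Finset α) :
    #{h : α → γ | Set.InjOn h D} =
      (Fintype.card γ).descFactorial #D * Fintype.card γ ^ (Fintype.card α - #D) := by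
  let restrict := Equiv.piEquivPiSubtypeProd (· ∈ D) fun _ => γ
  have e : {h : α → γ // Set.InjOn h D} ≃ (D ↪ γ) × ({a // a ∉ D} → γ) :=
    (restrict.subtypeEquiv (q := fun p => Injective p.1) fun _ => Set.injOn_iff_injective).trans <|
      Equiv.prodSubtypeFstEquivSubtypeProd.trans <|
        (Equiv.subtypeInjectiveEquivEmbedding D γ).prodCongr (Equiv.refl _)
  rw [← Fintype.card_subtype, Fintype.card_congr e, Fintype.card_prod, Fintype.card_embedding_eq]
  simp [Fintype.card_subtype_compl]

theorem card_pow_le_two_pow_mul_card_injOn [DecidableEq α] [DecidableEq γ] {D : Finset α}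
    (hD : 2 * #D ≤ Fintype.card γ) :
    Fintype.card γ ^ Fintype.card α ≤ 2 ^ #D * #{h : α → γ | Set.InjOn h D} := by
  set q := Fintype.card γ
  have hhalf : q ^ #D ≤ 2 ^ #D * q.descFactorial #D :=
    calc q ^ #D ≤ (2 * (q + 1 - #D)) ^ #D := Nat.pow_le_pow_left (by omega) _
      _ = 2 ^ #D * (q + 1 - #D) ^ #D := mul_pow ..
      _ ≤ 2 ^ #D * q.descFactorial #D := by gcongr; exact Nat.pow_sub_le_descFactorial _ _
  calc q ^ Fintype.card α = q ^ #D * q ^ (Fintype.card α - #D) := by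
        rw [← pow_add, Nat.add_sub_cancel' (card_le_univ D)]
    _ ≤ 2 ^ #D * q.descFactorial #D * q ^ (Fintype.card α - #D) := by gcongr
    _ = 2 ^ #D * #{h : α → γ | Set.InjOn h D} := by rw [card_injOn_eq, mul_assoc]

theorem card_not_injOn_le [DecidableEq α] [DecidableEq γ] {K : ℕ} (hK : 2 * K ≤ Fintype.card γ)
    {D : Finset α} (hD : #D ≤ K) :
    (#{h : α → γ | ¬ Set.InjOn h D} : ℝ) ≤ Fintype.card (α → γ) * (1 - 1 / 2 ^ K) := by
  have hcard : #{h : α → γ | Set.InjOn h D} + #{h : α → γ | ¬ Set.InjOn h D} =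
      Fintype.card (α → γ) := by
    rw [card_filter_add_card_filter_not, card_univ]
  have hinj : Fintype.card (α → γ) ≤ 2 ^ K * #{h : α → γ | Set.InjOn h D} :=
    calc Fintype.card (α → γ) = Fintype.card γ ^ Fintype.card α := Fintype.card_fun
      _ ≤ 2 ^ #D * #{h : α → γ | Set.InjOn h D} :=
        card_pow_le_two_pow_mul_card_injOn (by omega)
      _ ≤ 2 ^ K * #{h : α → γ | Set.InjOn h D} := by gcongr; exact one_le_two
  have hinj' : (Fintype.card (α → γ) : ℝ) / 2 ^ K ≤ #{h : α → γ | Set.InjOn h D} := by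
    rw [div_le_iff₀' (by positivity)]
    exact_mod_cast hinj
  calc (#{h : α → γ | ¬ Set.InjOn h D} : ℝ)
      = Fintype.card (α → γ) - #{h : α → γ | Set.InjOn h D} := by
        rw [← hcard, Nat.cast_add, add_sub_cancel_left]
    _ ≤ Fintype.card (α → γ) - Fintype.card (α → γ) / 2 ^ K := by gcongr
    _ = Fintype.card (α → γ) * (1 - 1 / 2 ^ K) := by ring

theorem exists_isPerfectHashFamily [Nonempty α] [Nonempty γ] {K : ℕ}
    (hK : 2 * K ≤ Fintype.card γ) :
    ∃ H : Fin (2 ^ K * Fintype.card α) → α → γ, IsPerfectHashFamily K H := by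
  classical
  set t := 2 ^ K * Fintype.card α
  set F : ℝ := (Fintype.card (α → γ) : ℝ)
  let small : Finset (Finset α) := {D | #D ≤ K}
  have hsmall : (#small : ℝ) ≤ 2 ^ Fintype.card α := by
    exact_mod_cast (card_le_univ small).trans_eq Fintype.card_finset
  have hunion : (∑ D ∈ small, #{h : α → γ | ¬ Set.InjOn h D} ^ t : ℝ) < F ^ t :=
    calc (∑ D ∈ small, #{h : α → γ | ¬ Set.InjOn h D} ^ t : ℝ)
        ≤ ∑ _D ∈ small, (F * (1 - 1 / 2 ^ K)) ^ t :=
          sum_le_sum fun D hD => pow_le_pow_left₀ (by positivity)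
            (card_not_injOn_le hK (mem_filter.1 hD).2) t
      _ = #small * (1 - 1 / 2 ^ K) ^ t * F ^ t := by
        rw [sum_const, nsmul_eq_mul, mul_pow]; ring
      _ ≤ 2 ^ Fintype.card α * (1 - 1 / 2 ^ K) ^ t * F ^ t := by
        have : 0 ≤ 1 - 1 / (2 : ℝ) ^ K :=
          sub_nonneg.2 (div_le_one_of_le₀ (one_le_pow₀ one_le_two) (by positivity))
        gcongr
      _ < F ^ t := mul_lt_of_lt_one_left (by positivity)
        (two_pow_mul_one_sub_inv_pow_lt_one K Fintype.card_ne_zero)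
  obtain ⟨H, hH⟩ := exists_forall_exists_notMem_of_sum_pow_lt small
    (fun D => {h : α → γ | ¬ Set.InjOn h D}) t (by
      simp only [F] at hunion
      exact_mod_cast hunion)
  refine ⟨H, fun D hD => ?_⟩
  simpa using hH D (by simpa [small] using hD)

end Hashing

section Splitting

variable {α β : Type*}

theorem exists_fiber_card_le [Fintype α] [Fintype β] [DecidableEq β] {r : ℕ}
    (h : Fintype.card α ≤ Fintype.card β * r) :
    ∃ f : α → β, ∀ y, #{x | f x = y} ≤ r := by
  obtain ⟨e⟩ : Nonempty (α ↪ β × Fin r) := Embedding.nonempty_of_card_le (by simpa using h)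
  refine ⟨fun x => (e x).1, fun y => ?_⟩
  calc #{x | (e x).1 = y} ≤ #(univ : Finset (Fin r)) :=
        card_le_card_of_injOn (fun x => (e x).2) (by simp) fun x hx x' hx' hxx' =>
          e.injective (Prod.ext (by simp_all) hxx')
    _ = r := card_fin r

/-- The labelling `l` cuts `S` into chunks, its fibres, each of size at most `Q` and contained in a
single fibre of `f`: the chunk with label `t` lies over `b t`. -/
structure IsChunking {δ : Type*} [DecidableEq δ] (f : α → β) (Q : ℕ) (S : Finset α) (l : α → δ)
    (b : δ → β) : Prop where
  base_eq : ∀ x ∈ S, b (l x) = f x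
  card_le : ∀ t, #{x ∈ S | l x = t} ≤ Q

namespace IsChunking

variable {δ δ' : Type*} [DecidableEq δ] [DecidableEq δ'] {f : α → β} {Q : ℕ} {S U : Finset α}
  {l : α → δ} {b : δ → β}

theorem comp_equiv (h : IsChunking f Q S l b) (e : δ ≃ δ') :
    IsChunking f Q S (e ∘ l) (b ∘ e.symm) where
  base_eq x hx := by simpa using h.base_eq x hx
  card_le t := by simpa [← Equiv.eq_symm_apply] using h.card_le (e.symm t)

theorem insert_chunk [DecidableEq α] (h : IsChunking f Q (S \ U) l b) {y : β}
    (hU : ∀ x ∈ U, f x = y) (hUQ : #U ≤ Q) :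
    IsChunking f Q S (fun x => if x ∈ U then none else some (l x)) (Option.elim · y b) where
  base_eq x hx := by
    by_cases hxU : x ∈ U
    · simp [hxU, hU x hxU]
    · simpa [hxU] using h.base_eq x (mem_sdiff.2 ⟨hx, hxU⟩)
  card_le
    | none => (card_le_card fun x hx => by simp_all).trans hUQ
    | some t => (card_le_card fun x hx => by
        by_cases hxU : x ∈ U <;> simp_all).trans (h.card_le t)

end IsChunking

theorem isChunking_of_fiber_card_le [DecidableEq β] [Nonempty β] {f : α → β} {Q : ℕ}
    {S : Finset α} (hS : ∀ y, #{x ∈ S | f x = y} ≤ Q) (j : ℕ) :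
    IsChunking f Q S (fun x => (Sum.inl (f x) : β ⊕ Fin j))
      (Sum.elim id fun _ => Classical.arbitrary β) where
  base_eq _ _ := rfl
  card_le
    | .inl y => by simpa using hS y
    | .inr _ => by simp

theorem exists_isChunking [DecidableEq β] [Nonempty β] (f : α → β) (Q : ℕ) {j : ℕ}
    {S : Finset α} (hS : #S ≤ j * Q) :
    ∃ (l : α → β ⊕ Fin j) (b : β ⊕ Fin j → β), IsChunking f Q S l b := by
  classical
  induction j generalizing S with
  | zero =>
    exact ⟨_, _, isChunking_of_fiber_card_le (fun y => (card_filter_le ..).trans (by omega)) 0⟩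
  | succ j ih =>
    by_cases! hlight : ∀ y, #{x ∈ S | f x = y} ≤ Q
    · exact ⟨_, _, isChunking_of_fiber_card_le hlight _⟩
    obtain ⟨y, hy⟩ := hlight
    obtain ⟨U, hUy, hUQ⟩ := exists_subset_card_eq hy.le
    have hrest : #(S \ U) ≤ j * Q := by
      rw [card_sdiff_of_subset (hUy.trans (filter_subset ..)), hUQ]
      exact Nat.sub_le_of_le_add (by rwa [← Nat.succ_mul])
    obtain ⟨l, b, h⟩ := ih hrest
    let e : Option (β ⊕ Fin j) ≃ β ⊕ Fin (j + 1) :=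
      (Equiv.optionEquivSumPUnit.{0} _).trans <| (Equiv.sumAssoc ..).trans <|
        (Equiv.refl β).sumCongr <| (Equiv.optionEquivSumPUnit _).symm.trans finSuccEquivLast.symm
    exact ⟨_, _, (h.insert_chunk (fun x hx => (mem_filter.1 (hUy hx)).2) hUQ.le).comp_equiv e⟩

end Splitting

section Rounding

variable {ι κ β : Type*} [Fintype ι]

section Marginals

variable [DecidableEq ι] [Fintype κ] [Nonempty κ] {M : Type*} [AddCommMonoid M] [Module ℚ≥0 M]

theorem expect_eval (i : ι) (F : κ → M) :
    𝔼 c : ι → κ, F (c i) = 𝔼 t, F t :=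
  calc 𝔼 c : ι → κ, F (c i) = 𝔼 p : κ × ({k // k ≠ i} → κ), F p.1 :=
        Fintype.expect_equiv (Equiv.funSplitAt i κ) _ _ fun _ => rfl
    _ = 𝔼 t, 𝔼 _d : {k // k ≠ i} → κ, F t := expect_product univ univ fun p => F p.1
    _ = 𝔼 t, F t := by simp only [Fintype.expect_const]

theorem expect_eval_pair {i j : ι} (hij : j ≠ i) (F : κ → κ → M) :
    𝔼 c : ι → κ, F (c i) (c j) = 𝔼 s, 𝔼 t, F s t :=
  calc 𝔼 c : ι → κ, F (c i) (c j) = 𝔼 p : κ × ({k // k ≠ i} → κ), F p.1 (p.2 ⟨j, hij⟩) :=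
        Fintype.expect_equiv (Equiv.funSplitAt i κ) _ _ fun _ => rfl
    _ = 𝔼 s, 𝔼 d : {k // k ≠ i} → κ, F s (d ⟨j, hij⟩) :=
        expect_product univ univ fun p : κ × ({k // k ≠ i} → κ) => F p.1 (p.2 ⟨j, hij⟩)
    _ = 𝔼 s, 𝔼 t, F s t := by simp only [expect_eval]

end Marginals

/-- When every agent `j` makes the choice `c j`, which puts a weight `w j (c j)` into the bin
`b j (c j)`, this is the weight that the other agents put into the bin chosen by `i`. -/
def rivalLoad [DecidableEq ι] [DecidableEq β] (b : ι → κ → β) (w : ι → κ → ℝ) (c : ι → κ)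
    (i : ι) : ℝ :=
  ∑ j ∈ univ.erase i, if b j (c j) = b i (c i) then w j (c j) else 0

variable [DecidableEq β] {b : ι → κ → β} {w x : ι → κ → ℝ} {Q : ℝ}

theorem expect_mul_rivalLoad_le [DecidableEq ι] [Fintype κ] [Nonempty κ]
    (hw : ∀ i t, 0 ≤ w i t) (hx : ∀ i t, 0 ≤ x i t)
    (hload : ∀ y, ∑ j, 𝔼 t, (if b j t = y then w j t else 0) ≤ Q / 2) (i : ι) :
    𝔼 c : ι → κ, x i (c i) * rivalLoad b w c i ≤ (𝔼 t, x i t) * (Q / 2) := by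
  let share (j : ι) (y : β) : ℝ := 𝔼 t, (if b j t = y then w j t else 0)
  have hshare (j : ι) (y : β) : 0 ≤ share j y :=
    expect_nonneg fun t _ => by split_ifs; exacts [hw j t, le_rfl]
  calc 𝔼 c : ι → κ, x i (c i) * rivalLoad b w c i
      = ∑ j ∈ univ.erase i, 𝔼 c : ι → κ,
          x i (c i) * (if b j (c j) = b i (c i) then w j (c j) else 0) := by
        simp only [rivalLoad, mul_sum, expect_sum_comm]
    _ = ∑ j ∈ univ.erase i, 𝔼 s, x i s * share j (b i s) := by
        refine sum_congr rfl fun j hj => ?_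
        rw [expect_eval_pair (ne_of_mem_erase hj)
          fun s t => x i s * (if b j t = b i s then w j t else 0)]
        simp only [share, mul_expect]
    _ = 𝔼 s, x i s * ∑ j ∈ univ.erase i, share j (b i s) := by
        simp only [mul_sum, expect_sum_comm]
    _ ≤ 𝔼 s, x i s * (Q / 2) := by
        gcongr with s
        · exact hx i s
        · exact (sum_le_sum_of_subset_of_nonneg (erase_subset ..) fun j _ _ => hshare j _).trans
            (hload _)
    _ = (𝔼 t, x i t) * (Q / 2) := (expect_mul ..).symm

theorem sum_weight_le_of_rivalLoad_le [DecidableEq ι] (hQ : 0 ≤ Q) (hw : ∀ i t, 0 ≤ w i t)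
    (hwQ : ∀ i t, w i t ≤ Q) {c : ι → κ} {S : Finset ι} (hS : ∀ i ∈ S, rivalLoad b w c i ≤ Q)
    (y : β) :
    ∑ i ∈ S with b i (c i) = y, w i (c i) ≤ 2 * Q := by
  rcases {i ∈ S | b i (c i) = y}.eq_empty_or_nonempty with hempty | ⟨i, hi⟩
  · rw [hempty, sum_empty]
    positivity
  obtain ⟨hiS, rfl⟩ := mem_filter.1 hi
  have hrest : ∑ j ∈ {j ∈ S | b j (c j) = b i (c i)}.erase i, w j (c j) ≤ rivalLoad b w c i := by
    rw [rivalLoad, ← sum_filter]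
    refine sum_le_sum_of_subset_of_nonneg (fun j hj => ?_) fun j _ _ => hw _ _
    simp_all
  rw [← add_sum_erase _ _ hi]
  linarith [hwQ i (c i), hS i hiS]

theorem exists_choice_sum_weight_le [Fintype κ] [Nonempty κ] (hQ : 0 < Q) (hw : ∀ i t, 0 ≤ w i t)
    (hwQ : ∀ i t, w i t ≤ Q) (hx : ∀ i t, 0 ≤ x i t)
    (hload : ∀ y, ∑ j, 𝔼 t, (if b j t = y then w j t else 0) ≤ Q / 2) :
    ∃ (c : ι → κ) (S : Finset ι), (∀ y, ∑ i ∈ S with b i (c i) = y, w i (c i) ≤ 2 * Q) ∧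
      ∑ i, 𝔼 t, x i t ≤ 2 * ∑ i ∈ S, x i (c i) := by
  classical
  -- The discount costs at most half of the expected value, and it makes the contribution of every
  -- agent whose rivals put more than `Q` into the same bin nonpositive.
  let discounted (c : ι → κ) : ℝ := ∑ i, (x i (c i) - x i (c i) * rivalLoad b w c i / Q)
  have hexpect : (∑ i, 𝔼 t, x i t) / 2 ≤ 𝔼 c, discounted c := by
    simp only [discounted, expect_sum_comm, sum_div]
    refine sum_le_sum fun i _ => ?_
    have hrival : (𝔼 c, x i (c i) * rivalLoad b w c i) / Q ≤ (𝔼 t, x i t) / 2 := by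
      rw [div_le_iff₀ hQ]
      linarith [expect_mul_rivalLoad_le hw hx hload i]
    rw [expect_sub_distrib, expect_eval i (x i), ← expect_div]
    linarith
  obtain ⟨c, -, hc⟩ := exists_le_of_le_expect univ_nonempty hexpect
  let S : Finset ι := {i | rivalLoad b w c i ≤ Q}
  refine ⟨c, S, sum_weight_le_of_rivalLoad_le hQ.le hw hwQ fun i hi => (mem_filter.1 hi).2, ?_⟩
  have hrival (i : ι) : 0 ≤ rivalLoad b w c i :=
    sum_nonneg fun j _ => by split_ifs; exacts [hw _ _, le_rfl]
  have hsurvive : discounted c ≤ ∑ i ∈ S, x i (c i) := by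
    rw [sum_filter]
    refine sum_le_sum fun i _ => ?_
    split_ifs with hi
    · exact sub_le_self _ (div_nonneg (mul_nonneg (hx _ _) (hrival i)) hQ.le)
    · rw [sub_nonpos, le_div_iff₀ hQ]
      exact mul_le_mul_of_nonneg_left (not_le.1 hi).le (hx _ _)
  linarith

end Rounding

section Valuations

variable {α ι κ : Type*}

/-- Monotone subadditive valuations of bundles of items. The value of the empty bundle need not be
zero. -/
structure IsSubadditiveValuation [DecidableEq α] (v : Finset α → ℝ) : Prop where
  mono : Monotone v
  union_le : ∀ S T, v (S ∪ T) ≤ v S + v T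

namespace IsSubadditiveValuation

variable [DecidableEq α] {v : Finset α → ℝ}

theorem nonneg (hv : IsSubadditiveValuation v) (S : Finset α) : 0 ≤ v S := by
  have := hv.union_le S S
  rw [union_self] at this
  linarith

theorem biUnion_le (hv : IsSubadditiveValuation v) {s : Finset κ} (hs : s.Nonempty)
    (P : κ → Finset α) : v (s.biUnion P) ≤ ∑ t ∈ s, v (P t) := by
  classical
  induction hs using Nonempty.cons_induction with
  | singleton t => simp
  | cons t s ht _ ih =>
    rw [cons_eq_insert, biUnion_insert, sum_insert ht]
    exact (hv.union_le ..).trans (by gcongr)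

theorem le_card_mul_expect_fiber (hv : IsSubadditiveValuation v) [Fintype κ] [Nonempty κ]
    [DecidableEq κ] (S : Finset α) (l : α → κ) :
    v S ≤ Fintype.card κ * 𝔼 t, v {x ∈ S | l x = t} :=
  calc v S = v (univ.biUnion fun t => {x ∈ S | l x = t}) := by
        rw [biUnion_filter_eq_of_maps_to fun _ _ => mem_univ _]
    _ ≤ ∑ t, v {x ∈ S | l x = t} := hv.biUnion_le univ_nonempty _
    _ = Fintype.card κ * 𝔼 t, v {x ∈ S | l x = t} := by
        rw [Fintype.expect_eq_sum_div_card, mul_div_cancel₀ _ (by simp)]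

end IsSubadditiveValuation

theorem ncard_setOf_bundle_le {𝒜 : Set (ι → Finset α)} {𝓕 : Finset (Finset α)}
    (h : ∀ A ∈ 𝒜, ∀ i, A i ∈ 𝓕) : {S | ∃ A ∈ 𝒜, ∃ i, A i = S}.ncard ≤ #𝓕 := by
  rw [← Set.ncard_coe_finset]
  refine Set.ncard_le_ncard ?_
  rintro _ ⟨A, hA, i, rfl⟩
  exact h A hA i

/-- A family `𝓕` of bundles is a `ρ`-approximate menu if, whatever the valuations of the bidders,
some allocation handing out bundles of `𝓕` only attains a `1 / ρ` fraction of the welfare of every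
allocation. -/
def IsApproxMenu (ι : Type*) [Fintype ι] [DecidableEq α] (𝓕 : Finset (Finset α)) (ρ : ℝ) : Prop :=
  ∀ v : ι → Finset α → ℝ, (∀ i, IsSubadditiveValuation (v i)) →
    ∀ T : ι → Finset α, Pairwise (Disjoint on T) →
      ∃ A : ι → Finset α, Pairwise (Disjoint on A) ∧ (∀ i, A i ∈ 𝓕) ∧
        ∑ i, v i (T i) ≤ ρ * ∑ i, v i (A i)

theorem IsApproxMenu.mono [Fintype ι] [DecidableEq α] {𝓕 : Finset (Finset α)} {ρ σ : ℝ}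
    (h : IsApproxMenu ι 𝓕 ρ) (hρσ : ρ ≤ σ) : IsApproxMenu ι 𝓕 σ := fun v hv T hT => by
  obtain ⟨A, hA, hA𝓕, hle⟩ := h v hv T hT
  exact ⟨A, hA, hA𝓕, hle.trans <|
    mul_le_mul_of_nonneg_right hρσ (sum_nonneg fun i _ => (hv i).nonneg _)⟩

theorem sum_card_le_card_of_pairwise_disjoint {T : ι → Finset α} (hT : Pairwise (Disjoint on T))
    (s : Finset ι) {U : Finset α} (hU : ∀ i ∈ s, T i ⊆ U) : ∑ i ∈ s, #(T i) ≤ #U := by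
  classical
  rw [← card_biUnion fun i _ j _ hij => hT hij]
  exact card_le_card (biUnion_subset.2 hU)

theorem card_filter_lt_card_le [Fintype α] [Fintype ι] {T : ι → Finset α}
    (hT : Pairwise (Disjoint on T)) {N s : ℕ} (hα : Fintype.card α ≤ N * s) :
    #{i | s < #(T i)} ≤ N := by
  refine Nat.le_of_mul_le_mul_right ?_ s.succ_pos
  calc #{i | s < #(T i)} * (s + 1) ≤ ∑ i with s < #(T i), #(T i) := by
        rw [← smul_eq_mul]
        exact card_nsmul_le_sum _ _ _ fun i hi => (mem_filter.1 hi).2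
    _ ≤ Fintype.card α := sum_card_le_card_of_pairwise_disjoint hT _ fun _ _ => subset_univ _
    _ ≤ N * (s + 1) := hα.trans (Nat.mul_le_mul_left _ s.le_succ)

theorem exists_allocation_to_winner [Fintype α] [DecidableEq α] [Fintype ι] {v : ι → Finset α → ℝ}
    (hv : ∀ i, IsSubadditiveValuation (v i)) (Z : Finset ι) (T : ι → Finset α) :
    ∃ A : ι → Finset α, Pairwise (Disjoint on A) ∧ (∀ i, A i = ∅ ∨ A i = univ) ∧
      ∑ i ∈ Z, v i (T i) ≤ #Z * ∑ i, v i (A i) := by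
  classical
  rcases Z.eq_empty_or_nonempty with rfl | hZ
  · exact ⟨fun _ => ∅, fun _ _ _ => disjoint_empty_left _, fun _ => .inl rfl, by simp⟩
  obtain ⟨a, -, hmax⟩ := exists_max_image Z (fun i => v i (T i)) hZ
  let A : ι → Finset α := update (fun _ => ∅) a univ
  have hwinner : v a (T a) ≤ ∑ i, v i (A i) :=
    calc v a (T a) ≤ v a univ := (hv a).mono (subset_univ _)
      _ = v a (A a) := by simp only [A, update_self]
      _ ≤ ∑ i, v i (A i) := single_le_sum (fun i _ => (hv i).nonneg (A i)) (mem_univ a)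
  refine ⟨A, fun i j hij => ?_, fun i => ?_, ?_⟩
  · rcases eq_or_ne i a with rfl | hi
    · simp [onFun, A, update_of_ne hij.symm]
    · simp [onFun, A, update_of_ne hi]
  · rcases eq_or_ne i a with rfl | hi
    · simp [A]
    · simp [A, hi]
  · calc ∑ i ∈ Z, v i (T i) ≤ #Z * v a (T a) := by
          simpa only [nsmul_eq_mul] using sum_le_card_nsmul _ _ _ hmax
      _ ≤ #Z * ∑ i, v i (A i) := by gcongr

end Valuations

section SmallBidders

variable {α β γ ι κ τ : Type*} [Fintype α] [Fintype ι] [Fintype β] [DecidableEq β]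

theorem expected_load_le [Nonempty β] [Fintype κ] [DecidableEq κ] {f : α → β} {Q : ℕ}
    (hf : ∀ y, #{x | f x = y} ≤ Fintype.card β * Q) {T : ι → Finset α}
    (hT : Pairwise (Disjoint on T)) (hκ : Fintype.card κ = 2 * Fintype.card β) {l : ι → α → κ}
    {b : ι → κ → β} (hl : ∀ i, ∀ x ∈ T i, b i (l i x) = f x) (y : β) :
    ∑ i, 𝔼 t, (if b i t = y then (#{x ∈ T i | l i x = t} : ℝ) else 0) ≤ (Q : ℝ) / 2 := by
  have hchunks (i : ι) :
      ∑ t, (if b i t = y then #{x ∈ T i | l i x = t} else 0) = #{x ∈ T i | f x = y} := by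
    rw [card_eq_sum_card_fiberwise (f := l i) (t := univ) fun _ _ => mem_univ _]
    refine sum_congr rfl fun t _ => ?_
    split_ifs with ht
    · refine congrArg card (Finset.ext fun x => ?_)
      simp only [mem_filter, and_assoc, and_congr_right_iff]
      intro hx
      exact ⟨fun hxt => ⟨by rw [← hl i x hx, hxt, ht], hxt⟩, And.right⟩
    · refine (card_eq_zero.2 (filter_eq_empty_iff.2 fun x hx hxt => ?_)).symm
      obtain ⟨hxT, hxy⟩ := mem_filter.1 hx
      exact ht (by rw [← hxt, hl i x hxT, hxy])
  have htotal : ∑ i, #{x ∈ T i | f x = y} ≤ Fintype.card β * Q :=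
    (sum_card_le_card_of_pairwise_disjoint (T := fun i => {x ∈ T i | f x = y})
      (fun i j hij => (hT hij).mono (filter_subset ..) (filter_subset ..)) univ
      fun i _ => filter_subset_filter _ (subset_univ _)).trans (hf y)
  calc ∑ i, 𝔼 t, (if b i t = y then (#{x ∈ T i | l i x = t} : ℝ) else 0)
      = ((∑ i, #{x ∈ T i | f x = y} : ℕ) : ℝ) / Fintype.card κ := by
        simp only [Fintype.expect_eq_sum_div_card, ← sum_div, ← hchunks]
        push_cast
        rfl
    _ ≤ ((Fintype.card β * Q : ℕ) : ℝ) / Fintype.card κ := by gcongr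
    _ = (Q : ℝ) / 2 := by
        rw [hκ]
        push_cast
        field_simp

variable [DecidableEq α]

theorem exists_subset_of_fiber_card_le [Nonempty β] {f : α → β} {Q : ℕ} (hQ : 0 < Q)
    (hf : ∀ y, #{x | f x = y} ≤ Fintype.card β * Q) {v : ι → Finset α → ℝ}
    (hv : ∀ i, IsSubadditiveValuation (v i)) {T : ι → Finset α} (hT : Pairwise (Disjoint on T))
    (hTcard : ∀ i, #(T i) ≤ Fintype.card β * Q) :
    ∃ (D : ι → Finset α) (bin : ι → β), (∀ i, D i ⊆ T i) ∧ (∀ i, ∀ x ∈ D i, f x = bin i) ∧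
      (∀ y, ∑ i with bin i = y, #(D i) ≤ 2 * Q) ∧
      ∑ i, v i (T i) ≤ 4 * Fintype.card β * ∑ i, v i (D i) := by
  classical
  choose l b hl using fun i => exists_isChunking f Q (hTcard i)
  let chunk (i : ι) (t : β ⊕ Fin (Fintype.card β)) : Finset α := {x ∈ T i | l i x = t}
  have hκ : Fintype.card (β ⊕ Fin (Fintype.card β)) = 2 * Fintype.card β := by simp [two_mul]
  obtain ⟨c, S, hweight, hvalue⟩ := exists_choice_sum_weight_le
    (w := fun i t => #(chunk i t)) (x := fun i t => v i (chunk i t)) (Nat.cast_pos.2 hQ)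
    (fun _ _ => Nat.cast_nonneg _) (fun i t => Nat.cast_le.2 ((hl i).card_le t))
    (fun i _ => (hv i).nonneg _) (expected_load_le hf hT hκ fun i => (hl i).base_eq)
  let D (i : ι) : Finset α := if i ∈ S then chunk i (c i) else ∅
  have hDchunk (i : ι) : D i ⊆ chunk i (c i) := by
    by_cases hi : i ∈ S <;> simp [D, hi]
  have hDvalue : ∑ i ∈ S, v i (chunk i (c i)) ≤ ∑ i, v i (D i) :=
    calc ∑ i ∈ S, v i (chunk i (c i)) = ∑ i ∈ S, v i (D i) :=
          sum_congr rfl fun i hi => by simp only [D, if_pos hi]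
      _ ≤ ∑ i, v i (D i) :=
          sum_le_sum_of_subset_of_nonneg (subset_univ S) fun i _ _ => (hv i).nonneg _
  refine ⟨D, fun i => b i (c i), fun i => (hDchunk i).trans (filter_subset ..), ?_, fun y => ?_, ?_⟩
  · intro i x hx
    obtain ⟨hxT, hxc⟩ := mem_filter.1 (hDchunk i hx)
    exact ((hl i).base_eq x hxT).symm.trans (congrArg (b i) hxc)
  · calc ∑ i with b i (c i) = y, #(D i) = ∑ i ∈ S with b i (c i) = y, #(chunk i (c i)) := by
          simp only [D, apply_ite card, card_empty, sum_ite_mem, filter_inter, univ_inter]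
      _ ≤ 2 * Q := by exact_mod_cast hweight y
  · calc ∑ i, v i (T i) ≤ ∑ i, 2 * Fintype.card β * 𝔼 t, v i (chunk i t) :=
          sum_le_sum fun i _ => by
            simpa only [hκ, Nat.cast_mul, Nat.cast_ofNat] using
              (hv i).le_card_mul_expect_fiber (T i) (l i)
      _ = 2 * Fintype.card β * ∑ i, 𝔼 t, v i (chunk i t) := (mul_sum ..).symm
      _ ≤ 2 * Fintype.card β * (2 * ∑ i, v i (D i)) := by gcongr; linarith
      _ = 4 * Fintype.card β * ∑ i, v i (D i) := by ring

/-- The bundles `{x | f x = y ∧ H s x ∈ G}` cut out of the fibres of `f` by a family `H` of hash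
functions and all sets `G` of hash values. -/
def hashBundles [Fintype τ] [Fintype γ] [DecidableEq γ] (f : α → β) (H : τ → α → γ) :
    Finset (Finset α) :=
  univ.image fun p : β × τ × Finset γ => ({x | f x = p.1 ∧ H p.2.1 x ∈ p.2.2} : Finset α)

variable [Fintype τ] [Fintype γ] [DecidableEq γ]

theorem card_hashBundles_le (f : α → β) (H : τ → α → γ) :
    #(hashBundles f H) ≤ Fintype.card β * Fintype.card τ * 2 ^ Fintype.card γ := by
  refine card_image_le.trans_eq ?_
  simp [mul_assoc]

theorem empty_mem_hashBundles [Nonempty β] [Nonempty τ] (f : α → β) (H : τ → α → γ) :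
    ∅ ∈ hashBundles f H :=
  mem_image.2 ⟨(Classical.arbitrary β, Classical.arbitrary τ, ∅), mem_univ _, by simp⟩

theorem exists_hashBundles_superset {f : α → β} {H : τ → α → γ} {K : ℕ}
    (hH : IsPerfectHashFamily K H) {D : ι → Finset α} (hD : Pairwise (Disjoint on D)) {bin : ι → β}
    (hbin : ∀ i, ∀ x ∈ D i, f x = bin i) (hK : ∀ y, ∑ i with bin i = y, #(D i) ≤ K) :
    ∃ A : ι → Finset α, Pairwise (Disjoint on A) ∧ (∀ i, A i ∈ hashBundles f H) ∧
      ∀ i, D i ⊆ A i := by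
  choose s hs using fun y =>
    hH (({i | bin i = y} : Finset ι).biUnion D) (card_biUnion_le.trans (hK y))
  let A (i : ι) : Finset α := {x | f x = bin i ∧ H (s (bin i)) x ∈ (D i).image (H (s (bin i)))}
  refine ⟨A, fun i j hij => disjoint_left.2 fun x hxi hxj => ?_, fun i => ?_, fun i x hx => ?_⟩
  · simp only [A, mem_filter, mem_univ, true_and, mem_image] at hxi hxj
    obtain ⟨hi, x₁, hx₁, heq₁⟩ := hxi
    obtain ⟨hj, x₂, hx₂, heq₂⟩ := hxj
    have hbins : bin j = bin i := hj.symm.trans hi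
    rw [hbins] at heq₂
    have hx₁₂ : x₁ = x₂ := hs (bin i) (mem_biUnion.2 ⟨i, by simp, hx₁⟩)
      (mem_biUnion.2 ⟨j, by simp [hbins], hx₂⟩) (heq₁.trans heq₂.symm)
    exact disjoint_left.1 (hD hij) hx₁ (hx₁₂ ▸ hx₂)
  · exact mem_image.2 ⟨(bin i, s (bin i), (D i).image (H (s (bin i)))), mem_univ _, rfl⟩
  · exact mem_filter.2 ⟨mem_univ _, hbin i x hx, mem_image_of_mem _ hx⟩

theorem exists_hashBundles_allocation [Nonempty β] {f : α → β} {H : τ → α → γ} {Q : ℕ}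
    (hQ : 0 < Q) (hf : ∀ y, #{x | f x = y} ≤ Fintype.card β * Q)
    (hH : IsPerfectHashFamily (2 * Q) H) {v : ι → Finset α → ℝ}
    (hv : ∀ i, IsSubadditiveValuation (v i)) {T : ι → Finset α} (hT : Pairwise (Disjoint on T))
    (hTcard : ∀ i, #(T i) ≤ Fintype.card β * Q) :
    ∃ A : ι → Finset α, Pairwise (Disjoint on A) ∧ (∀ i, A i ∈ hashBundles f H) ∧
      ∑ i, v i (T i) ≤ 4 * Fintype.card β * ∑ i, v i (A i) := by
  obtain ⟨D, bin, hDT, hbin, hDcard, hvalue⟩ := exists_subset_of_fiber_card_le hQ hf hv hT hTcard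
  obtain ⟨A, hA, hA𝓕, hDA⟩ := exists_hashBundles_superset hH
    (fun i j hij => (hT hij).mono (hDT i) (hDT j)) hbin hDcard
  refine ⟨A, hA, hA𝓕, hvalue.trans ?_⟩
  gcongr with i
  exact (hv i).mono (hDA i)

end SmallBidders

section Menu

variable {α β γ ι τ : Type*} [Fintype α] [DecidableEq α] [Fintype ι]

theorem isApproxMenu_insert_univ_hashBundles [Fintype β] [DecidableEq β] [Nonempty β] [Fintype γ]
    [DecidableEq γ] [Fintype τ] [Nonempty τ] {f : α → β} {H : τ → α → γ} {Q : ℕ} (hQ : 0 < Q)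
    (hα : Fintype.card α ≤ Fintype.card β * (Fintype.card β * Q))
    (hf : ∀ y, #{x | f x = y} ≤ Fintype.card β * Q) (hH : IsPerfectHashFamily (2 * Q) H) :
    IsApproxMenu ι (insert univ (hashBundles f H)) (8 * Fintype.card β) := by
  intro v hv T hT
  set N := Fintype.card β
  have hsplit := sum_filter_add_sum_filter_not univ (fun i => N * Q < #(T i)) fun i => v i (T i)
  rcases le_total (∑ i with N * Q < #(T i), v i (T i))
    (∑ i with ¬ N * Q < #(T i), v i (T i)) with hsmall | hlarge
  · let T' (i : ι) : Finset α := if N * Q < #(T i) then ∅ else T i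
    have hT'T (i : ι) : T' i ⊆ T i := by
      dsimp only [T']
      split_ifs
      exacts [empty_subset _, subset_rfl]
    have hT'card (i : ι) : #(T' i) ≤ N * Q := by
      dsimp only [T']
      split_ifs with hi
      exacts [Nat.zero_le _, not_lt.1 hi]
    have hT'value : ∑ i with ¬ N * Q < #(T i), v i (T i) ≤ ∑ i, v i (T' i) :=
      calc ∑ i with ¬ N * Q < #(T i), v i (T i) = ∑ i with ¬ N * Q < #(T i), v i (T' i) :=
            sum_congr rfl fun i hi => by simp only [T', if_neg (mem_filter.1 hi).2]
        _ ≤ ∑ i, v i (T' i) :=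
            sum_le_sum_of_subset_of_nonneg (filter_subset ..) fun i _ _ => (hv i).nonneg _
    obtain ⟨A, hA, hA𝓕, hvalue⟩ := exists_hashBundles_allocation hQ hf hH hv
      (fun i j hij => (hT hij).mono (hT'T i) (hT'T j)) hT'card
    exact ⟨A, hA, fun i => mem_insert_of_mem (hA𝓕 i), by linarith⟩
  · obtain ⟨A, hA, hA𝓕, hvalue⟩ := exists_allocation_to_winner hv {i | N * Q < #(T i)} T
    refine ⟨A, hA, fun i => ?_, ?_⟩
    · rcases hA𝓕 i with h | h <;> rw [h]
      exacts [mem_insert_of_mem (empty_mem_hashBundles f H), mem_insert_self ..]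
    · have hW : 0 ≤ ∑ i, v i (A i) := sum_nonneg fun i _ => (hv i).nonneg _
      have hcard : (#{i | N * Q < #(T i)} : ℝ) ≤ N := by
        exact_mod_cast card_filter_lt_card_le hT hα
      calc ∑ i, v i (T i) ≤ 2 * (#{i | N * Q < #(T i)} * ∑ i, v i (A i)) := by linarith
        _ ≤ 8 * (N * ∑ i, v i (A i)) := by gcongr; norm_num
        _ = 8 * N * ∑ i, v i (A i) := (mul_assoc ..).symm

theorem exists_isApproxMenu [Nonempty α] {N Q : ℕ} (hN : 0 < N) (hQ : 0 < Q)
    (hα : Fintype.card α ≤ N * (N * Q)) :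
    ∃ 𝓕 : Finset (Finset α),
      #𝓕 ≤ N * (2 ^ (2 * Q) * Fintype.card α) * 2 ^ (4 * Q) + 1 ∧ IsApproxMenu ι 𝓕 (8 * N) := by
  have : NeZero N := ⟨hN.ne'⟩
  have : NeZero (4 * Q) := ⟨by omega⟩
  have : NeZero (2 ^ (2 * Q) * Fintype.card α) := ⟨by simp⟩
  obtain ⟨f, hf⟩ := exists_fiber_card_le (α := α) (β := Fin N) (r := N * Q) (by simpa using hα)
  obtain ⟨H, hH⟩ := exists_isPerfectHashFamily (α := α) (γ := Fin (4 * Q)) (K := 2 * Q)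
    (by rw [Fintype.card_fin]; omega)
  refine ⟨insert univ (hashBundles f H), (card_insert_le ..).trans ?_, ?_⟩
  · simpa using card_hashBundles_le f H
  · simpa using isApproxMenu_insert_univ_hashBundles (β := Fin N) (f := f) hQ
      (by simpa using hα) (by simpa using hf) hH

theorem isApproxMenu_univ : IsApproxMenu ι (univ : Finset (Finset α)) 1 :=
  fun _ _ T hT => ⟨T, hT, fun _ => mem_univ _, (one_mul _).ge⟩

theorem exists_nat_le_mul_sq_and_mul_le_sqrt {x : ℝ} (hx : 256 ≤ x) :
    ∃ N : ℕ, 0 < N ∧ x ≤ 256 * (N : ℝ) ^ 2 ∧ 8 * N ≤ √x := by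
  have hsqrt : 16 ≤ √x := Real.le_sqrt_of_sq_le (by linarith)
  refine ⟨⌈√x / 16⌉₊, Nat.ceil_pos.2 (by positivity), ?_, ?_⟩
  · calc x = 256 * (√x / 16) ^ 2 := by rw [div_pow, Real.sq_sqrt (by linarith)]; ring
      _ ≤ 256 * (⌈√x / 16⌉₊ : ℝ) ^ 2 := by gcongr; exact Nat.le_ceil _
  · have := Nat.ceil_le_two_mul (a := √x / 16) (by linarith)
    linarith

theorem exists_isApproxMenu_of_mul_lt_card {k : ℕ} (hk : 0 < k)
    (hkα : 256 * k < Fintype.card α) (hαk : Fintype.card α ≤ 2 ^ k) :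
    ∃ 𝓕 : Finset (Finset α),
      #𝓕 ≤ 2 ^ (2048 * k) ∧ IsApproxMenu ι 𝓕 √((Fintype.card α : ℝ) / k) := by
  have : Nonempty α := Fintype.card_pos_iff.1 (by omega)
  set m := Fintype.card α
  have hk' : (0 : ℝ) < k := Nat.cast_pos.2 hk
  obtain ⟨N, hN, hmN, hNsqrt⟩ := exists_nat_le_mul_sq_and_mul_le_sqrt (x := (m : ℝ) / k)
    ((le_div_iff₀ hk').2 (by exact_mod_cast hkα.le))
  have hbins : m ≤ N * (N * (256 * k)) := by
    rw [div_le_iff₀ hk'] at hmN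
    exact_mod_cast hmN.trans_eq (by ring : _ = (N : ℝ) * (N * (256 * k)))
  have hNm : N ≤ m := by
    have hx1 : 1 ≤ (m : ℝ) / k := (one_le_div hk').2 (by exact_mod_cast (by omega : k ≤ m))
    have : (N : ℝ) ≤ m :=
      calc (N : ℝ) ≤ √((m : ℝ) / k) := by linarith
        _ ≤ m / k := Real.sqrt_le_iff.2 ⟨by positivity, le_self_pow₀ hx1 two_ne_zero⟩
        _ ≤ m := div_le_self m.cast_nonneg (by exact_mod_cast hk)
    exact_mod_cast this
  obtain ⟨𝓕, hcard, h𝓕⟩ := exists_isApproxMenu (ι := ι) hN (by omega : 0 < 256 * k) hbins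
  refine ⟨𝓕, hcard.trans ?_, h𝓕.mono hNsqrt⟩
  calc N * (2 ^ (2 * (256 * k)) * m) * 2 ^ (4 * (256 * k)) + 1
      ≤ 2 ^ k * (2 ^ (2 * (256 * k)) * 2 ^ k) * 2 ^ (4 * (256 * k)) + 1 := by
        gcongr
        exact hNm.trans hαk
    _ = 2 ^ (1538 * k) + 1 := by ring
    _ ≤ 2 ^ (1538 * k + 1) := by rw [pow_succ]; linarith [Nat.one_le_two_pow (n := 1538 * k)]
    _ ≤ 2 ^ (2048 * k) := Nat.pow_le_pow_right two_pos (by omega)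

theorem exists_isApproxMenu_sqrt {k : ℕ} (hk : 0 < k) (hkα : k ≤ Fintype.card α)
    (hαk : Fintype.card α ≤ 2 ^ k) :
    ∃ 𝓕 : Finset (Finset α),
      #𝓕 ≤ 2 ^ (2048 * k) ∧ IsApproxMenu ι 𝓕 √((Fintype.card α : ℝ) / k) := by
  rcases le_or_gt (Fintype.card α) (256 * k) with hfew | hmany
  · refine ⟨univ, ?_, isApproxMenu_univ.mono ?_⟩
    · rw [card_univ, Fintype.card_finset]
      exact Nat.pow_le_pow_right two_pos (by omega)
    · rw [Real.one_le_sqrt, one_le_div (Nat.cast_pos.2 hk)]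
      exact_mod_cast hkα
  · exact exists_isApproxMenu_of_mul_lt_card hk hmany hαk

end Menu

end SubadditiveAuction

/-- there are universal constants `c, C > 0` such that for every `m ≥ 2`, `n ≥ 1`,
and `C·log₂ m ≤ k ≤ m`, there is a bank `𝒜` of allocations in which at most `2^(c·k)` distinct
sets can ever be received by a bidder, and whose welfare-maximal element is a
`√(m/k)`-approximation to the optimal welfare for all monotone subadditive nonnegative
valuations. -/
theorem subadditive_mechanism_exists :
    ∃ c C : ℝ, 0 < c ∧ 0 < C ∧
      ∀ m n k : ℕ, 2 ≤ m → 1 ≤ n → C * Real.logb 2 m ≤ (k : ℝ) → k ≤ m →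
        ∃ 𝒜 : Set (Fin n → Finset (Fin m)),
          (∀ A ∈ 𝒜, ∀ i j : Fin n, i ≠ j → Disjoint (A i) (A j)) ∧
          ((({S : Finset (Fin m) | ∃ A ∈ 𝒜, ∃ i : Fin n, A i = S}).ncard : ℝ)
              ≤ (2 : ℝ) ^ (c * (k : ℝ))) ∧
          (∀ v : Fin n → Finset (Fin m) → ℝ,
            (∀ i S, 0 ≤ v i S) →
            (∀ i, ∀ S T : Finset (Fin m), S ⊆ T → v i S ≤ v i T) →
            (∀ i, ∀ S T : Finset (Fin m), v i (S ∪ T) ≤ v i S + v i T) →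
            ∀ A' : Fin n → Finset (Fin m),
              (∀ i j : Fin n, i ≠ j → Disjoint (A' i) (A' j)) →
              ∃ A ∈ 𝒜, Real.sqrt ((k : ℝ) / m) * ∑ i, v i (A' i) ≤ ∑ i, v i (A i)) := by
  refine ⟨2048, 1, by norm_num, one_pos, fun m n k hm _ hlog hkm => ?_⟩
  have hmk : m ≤ 2 ^ k := by
    rw [one_mul, Real.logb_le_iff_le_rpow one_lt_two (by positivity), Real.rpow_natCast] at hlog
    exact_mod_cast hlog
  have hk : 0 < k := Nat.pos_of_ne_zero fun h => by simp only [h, pow_zero] at hmk; omega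
  obtain ⟨𝓕, hcard, h𝓕⟩ := SubadditiveAuction.exists_isApproxMenu_sqrt (α := Fin m) (ι := Fin n) hk
    (by rwa [Fintype.card_fin]) (by rwa [Fintype.card_fin])
  rw [Fintype.card_fin] at h𝓕
  refine ⟨{A | (∀ i j, i ≠ j → Disjoint (A i) (A j)) ∧ ∀ i, A i ∈ 𝓕}, fun A hA => hA.1, ?_, ?_⟩
  · refine (Nat.cast_le.2 (SubadditiveAuction.ncard_setOf_bundle_le fun _ hA => hA.2)).trans ?_
    exact_mod_cast hcard
  · intro v _ hmono hunion T hT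
    obtain ⟨A, hA, hA𝓕, hle⟩ := h𝓕 v (fun i => ⟨hmono i, hunion i⟩) T hT
    refine ⟨A, ⟨hA, hA𝓕⟩, ?_⟩
    calc √((k : ℝ) / m) * ∑ i, v i (T i)
        ≤ √((k : ℝ) / m) * (√((m : ℝ) / k) * ∑ i, v i (A i)) := by gcongr
      _ = ∑ i, v i (A i) := by
        rw [← mul_assoc, ← Real.sqrt_mul (by positivity), div_mul_div_cancel₀ (by positivity),
          div_self (by positivity), Real.sqrt_one, one_mul]
end

section
/- There exist universal constants c, C > 0 such that the following holds. Let m, k be integers with C · log₂(m) ≤ k ≤ m/2, let n = ⌈3·√(m/k)⌉, and let 𝒜 be a set of allocations of the m items to the n bidders such that for every profile of monotone submodular valuations v₁,…,vₙ : 2^[m] → ℝ≥0, max_{A ∈ 𝒜} Σᵢ vᵢ(Aᵢ) ≥ √(k/m) · OPT(v⃗). Then there exists S ⊆ [m] with |S| ≥ c · √(m·k)/ln(m/k) such that 𝒜 2-shatters (S, [n]): for every item j ∈ S there is a set T_j ⊆ [n] with |T_j| = 2 such that for every function g on S with g(j) ∈ T_j for all j ∈ S, there exists an allocation A ∈ 𝒜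 in which each item j ∈ S is allocated to bidder g(j). -/
/-!
Given an assignment `σ : α → β` of items to bidders, let bidder `i` value a set of items by how many
of them `σ` gives to `i`. The optimal welfare is `m`, so the bank contains an allocation agreeing
with `σ` on at least `√(k/m) · m = √(mk)` items. Take `q = ⌈√(mk)⌉` of these items. There are
`n ^ m` assignments and only `m.choose q` sets of `q` items, so some `q`-set `R` serves at least
`n ^ m / m.choose q` assignments, which have at least `n ^ q / m.choose q` distinct restrictions to
`R`. As `n q ≥ 3 m` and `3 > e`, this number is exponential in `q`. By a version of Natarajan's
lemma, so many functions on `R` must 2-shatter a set of about `q / log n` items, and every pattern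
these functions realize on a subset of `R` is also realized by an allocation in the bank.
-/

section Shattering

open Finset Function

variable {α β γ : Type*}

/-- Natarajan shattering: on `S`, the functions in `F` realize every selection from some assignment
of two-element sets `T j`. Values of `T` outside `S` are irrelevant. -/
def NatarajanShatters (F : Finset (α → β)) (S : Finset α) : Prop :=
  ∃ T : α → Finset β, (∀ j ∈ S, #(T j) = 2) ∧
    ∀ g : α → β, (∀ j ∈ S, g j ∈ T j) → ∃ f ∈ F, ∀ j ∈ S, f j = g j

/-- The bank `𝒜` 2-shatters `(S, β)`: for some two-element sets `T j` of bidders, every way of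
giving each item `j ∈ S` to a bidder in `T j` is realized by an allocation in `𝒜`. An element of
`𝒜` is any tuple of bundles, possibly overlapping. -/
def TwoShatters (𝒜 : Set (β → Finset α)) (S : Finset α) : Prop :=
  ∃ T : α → Finset β, (∀ j ∈ S, #(T j) = 2) ∧
    ∀ g : α → β, (∀ j ∈ S, g j ∈ T j) → ∃ A ∈ 𝒜, ∀ j ∈ S, j ∈ A (g j)

theorem natarajanShatters_empty {F : Finset (α → β)} (hF : F.Nonempty) :
    NatarajanShatters F ∅ :=
  ⟨fun _ ↦ ∅, by simp, fun _ _ ↦ hF.imp fun _ hf ↦ ⟨hf, by simp⟩⟩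

theorem twoShatters_empty {𝒜 : Set (β → Finset α)} (h𝒜 : 𝒜.Nonempty) : TwoShatters 𝒜 ∅ :=
  ⟨fun _ ↦ ∅, by simp, fun _ _ ↦ h𝒜.imp fun _ hA ↦ ⟨hA, by simp⟩⟩

theorem NatarajanShatters.of_image_update [DecidableEq α] [DecidableEq (α → β)]
    {F : Finset (α → β)} {S : Finset α} {a : α} {b : β}
    (h : NatarajanShatters (F.image (update · a b)) S) (ha : a ∉ S) : NatarajanShatters F S := by
  obtain ⟨T, hT, hF⟩ := h
  refine ⟨T, hT, fun g hg ↦ ?_⟩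
  obtain ⟨_, hf', hfg⟩ := hF g hg
  obtain ⟨f, hf, rfl⟩ := mem_image.mp hf'
  refine ⟨f, hf, fun j hj ↦ ?_⟩
  rw [← hfg j hj, update_of_ne (ne_of_mem_of_not_mem hj ha)]

theorem NatarajanShatters.insert [DecidableEq α] {F G : Finset (α → β)} {S : Finset α} {a : α}
    {p : Finset β} (h : NatarajanShatters G S) (ha : a ∉ S) (hp : #p = 2)
    (hG : ∀ f ∈ G, ∀ i ∈ p, update f a i ∈ F) : NatarajanShatters F (insert a S) := by
  obtain ⟨T, hT, hF⟩ := h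
  have ne_a {j : α} (hj : j ∈ S) : j ≠ a := ne_of_mem_of_not_mem hj ha
  refine ⟨update T a p, fun j hj ↦ ?_, fun g hg ↦ ?_⟩
  · obtain rfl | hj := mem_insert.mp hj
    · rwa [update_self]
    · rw [update_of_ne (ne_a hj), hT j hj]
  · obtain ⟨f, hf, hfg⟩ := hF g fun j hj ↦ by
      simpa [update_of_ne (ne_a hj)] using hg j (mem_insert_of_mem hj)
    have hga : g a ∈ p := by simpa using hg a (mem_insert_self a S)
    refine ⟨update f a (g a), hG f hf _ hga, fun j hj ↦ ?_⟩
    obtain rfl | hj := mem_insert.mp hj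
    · rw [update_self]
    · rw [update_of_ne (ne_a hj), hfg j hj]

theorem TwoShatters.of_embedding [Nonempty γ] (e : γ ↪ β) {𝒜 : Set (β → Finset α)} {S : Finset α}
    (h : TwoShatters ((· ∘ e) '' 𝒜) S) : TwoShatters 𝒜 S := by
  obtain ⟨T, hT, h𝒜⟩ := h
  refine ⟨fun j ↦ (T j).map e, fun j hj ↦ by rw [card_map, hT j hj], fun g hg ↦ ?_⟩
  have hg' (j) (hj : j ∈ S) : invFun e (g j) ∈ T j ∧ e (invFun e (g j)) = g j := by
    obtain ⟨i, hi, hij⟩ := mem_map.mp (hg j hj)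
    rw [← hij, leftInverse_invFun e.injective i]
    exact ⟨hi, rfl⟩
  obtain ⟨_, ⟨A, hA, rfl⟩, hAg⟩ := h𝒜 (fun j ↦ invFun e (g j)) fun j hj ↦ (hg' j hj).1
  refine ⟨A, hA, fun j hj ↦ ?_⟩
  rw [← (hg' j hj).2]
  exact hAg j hj

end Shattering

section Natarajan

open Finset Function

variable {α β : Type*}

theorem le_one_add_choose_two (t : ℕ) : t ≤ 1 + t.choose 2 := by
  obtain _ | t := t
  · simp
  · rw [Nat.choose_succ_succ' t 1, Nat.choose_one_right]
    lia

theorem card_le_sum_card_image_update [DecidableEq α] [DecidableEq (α → β)] [Fintype β]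
    (F : Finset (α → β)) (a : α) (b : β) :
    #F ≤ ∑ h ∈ F.image (update · a b), #{i | update h a i ∈ F} := by
  rw [card_eq_sum_card_image (update · a b) F]
  refine sum_le_sum fun h _ ↦ card_le_card_of_injOn (· a) (fun f hf ↦ ?_) fun f hf f' hf' hff' ↦ ?_
  · obtain ⟨hfF, rfl⟩ := mem_filter.mp hf
    simpa using hfF
  · have heq : update f a b = update f' a b := (mem_filter.mp hf).2.trans (mem_filter.mp hf').2.symm
    calc
      f = update (update f a b) a (f a) := by simp
      _ = update (update f' a b) a (f' a) := congr_arg₂ (update · a) heq hff'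
      _ = f' := by simp

theorem card_le_card_image_update_add_sum [DecidableEq α] [DecidableEq (α → β)] [Fintype β]
    (F : Finset (α → β)) (a : α) (b : β) :
    #F ≤ #(F.image (update · a b)) + ∑ p ∈ powersetCard 2 (univ : Finset β),
      #{h ∈ F.image (update · a b) | ∀ i ∈ p, update h a i ∈ F} := by
  set U := F.image (update · a b)
  have card_pairs (h : α → β) : (#{i | update h a i ∈ F}).choose 2 =
      #{p ∈ powersetCard 2 (univ : Finset β) | ∀ i ∈ p, update h a i ∈ F} := by
    rw [← card_powersetCard]
    congr 1
    ext p
    simp [mem_powersetCard, subset_iff, and_comm]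
  calc
    #F ≤ ∑ h ∈ U, #{i | update h a i ∈ F} := card_le_sum_card_image_update F a b
    _ ≤ ∑ h ∈ U, (1 + (#{i | update h a i ∈ F}).choose 2) :=
      sum_le_sum fun _ _ ↦ le_one_add_choose_two _
    _ = #U + ∑ h ∈ U, #{p ∈ powersetCard 2 (univ : Finset β) | ∀ i ∈ p, update h a i ∈ F} := by
      simp only [sum_add_distrib, card_pairs, sum_const, smul_eq_mul, mul_one]
    _ = _ := congr_arg _ <|
      sum_card_bipartiteAbove_eq_sum_card_bipartiteBelow fun h p ↦ ∀ i ∈ p, update h a i ∈ F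

theorem lt_card_image_update_or_exists_lt_card [DecidableEq α] [DecidableEq (α → β)] [Fintype β]
    {F : Finset (α → β)} {a : α} (b : β) {X Y : ℝ}
    (h : X + (Fintype.card β).choose 2 * Y < #F) :
    X < #(F.image (update · a b)) ∨
      ∃ p : Finset β, #p = 2 ∧ Y < #{h ∈ F.image (update · a b) | ∀ i ∈ p, update h a i ∈ F} := by
  set U := F.image (update · a b)
  by_contra! ⟨hX, hY⟩
  have hsplit : (#F : ℝ) ≤ #U +
      ∑ p ∈ powersetCard 2 univ, (#{h ∈ U | ∀ i ∈ p, update h a i ∈ F} : ℝ) :=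
    mod_cast card_le_card_image_update_add_sum F a b
  have hpairs := sum_le_card_nsmul (powersetCard 2 univ) _ _ fun p hp ↦
    hY p (mem_powersetCard.mp hp).2
  rw [card_powersetCard, card_univ, nsmul_eq_mul] at hpairs
  linarith

/-- The free parameter `y` makes the bound satisfy the recursion of the induction on `R` with
equality, since `y ^ (D + 1) * (N / y) = N * y ^ D`. -/
theorem exists_natarajanShatters_of_lt_card [Fintype β] {y : ℝ} (hy : 1 ≤ y) (f₀ : α → β)
    {R : Finset α} {D : ℕ} {F : Finset (α → β)} (hF : ∀ f ∈ F, ∀ j ∉ R, f j = f₀ j)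
    (hcard : y ^ D * (1 + (Fintype.card β).choose 2 / y) ^ #R < #F) :
    ∃ S ⊆ R, #S = D ∧ NatarajanShatters F S := by
  have := Classical.decEq α
  have := Classical.decEq (α → β)
  have : 0 < y := one_pos.trans_le hy
  induction R using Finset.induction_on generalizing D F with
  | empty =>
    have hF₁ : #F ≤ 1 := card_le_one.mpr fun f hf g hg ↦ funext fun j ↦ by
      rw [hF f hf j (by simp), hF g hg j (by simp)]
    have hF₁' : (#F : ℝ) ≤ 1 := mod_cast hF₁
    rw [card_empty, pow_zero, mul_one] at hcard
    linarith [one_le_pow₀ hy (n := D)]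
  | insert a R ha ih =>
    obtain _ | D := D
    · have hF₀ : (0 : ℝ) < #F := lt_of_le_of_lt (by positivity) hcard
      exact ⟨∅, empty_subset _, card_empty, natarajanShatters_empty (card_pos.mp (mod_cast hF₀))⟩
    set N := (Fintype.card β).choose 2
    set U := F.image (update · a (f₀ a))
    have hU : ∀ h ∈ U, ∀ j ∉ R, h j = f₀ j := by
      intro h hh j hj
      obtain ⟨f, hf, rfl⟩ := mem_image.mp hh
      obtain rfl | hja := eq_or_ne j a
      · exact update_self ..
      · rw [update_of_ne hja, hF f hf j (by simp [hja, hj])]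
    have hrec : y ^ (D + 1) * (1 + N / y) ^ #(insert a R) =
        y ^ (D + 1) * (1 + N / y) ^ #R + N * (y ^ D * (1 + N / y) ^ #R) := by
      rw [card_insert_of_notMem ha, pow_succ (1 + N / y : ℝ), pow_succ y]
      field_simp
    obtain hlt | ⟨p, hp, hlt⟩ := lt_card_image_update_or_exists_lt_card (f₀ a) (hrec ▸ hcard)
    · obtain ⟨S, hSR, hSD, hS⟩ := ih hU hlt
      exact ⟨S, hSR.trans (subset_insert a R), hSD, hS.of_image_update fun haS ↦ ha (hSR haS)⟩
    · obtain ⟨S, hSR, hSD, hS⟩ := ih (fun h hh ↦ hU h (mem_filter.mp hh).1) hlt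
      have haS : a ∉ S := fun haS ↦ ha (hSR haS)
      refine ⟨insert a S, insert_subset_insert a hSR, by rw [card_insert_of_notMem haS, hSD], ?_⟩
      exact hS.insert haS hp fun h hh ↦ (mem_filter.mp hh).2

end Natarajan

section Counting

open Finset

variable {α β : Type*} [Fintype α] [Fintype β] [DecidableEq α]

theorem card_le_mul_card_image_piecewise [DecidableEq β] (s : Finset (α → β)) (R : Finset α)
    (f₀ : α → β) :
    #s ≤ Fintype.card β ^ (Fintype.card α - #R) * #(s.image (R.piecewise · f₀)) := by
  refine card_le_mul_card_image s _ fun f _ ↦ ?_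
  have hsub : {σ ∈ s | R.piecewise σ f₀ = f} ⊆
      Fintype.piFinset fun j ↦ if j ∈ R then {f j} else univ := by
    intro σ hσ
    obtain ⟨-, rfl⟩ := mem_filter.mp hσ
    refine Fintype.mem_piFinset.mpr fun j ↦ ?_
    by_cases hj : j ∈ R <;> simp [hj]
  refine (card_le_card hsub).trans_eq ?_
  simp [Fintype.card_piFinset, apply_ite card, prod_ite, filter_not, card_univ_sdiff]

theorem exists_lt_card_image_piecewise [DecidableEq β] [Nonempty β] {q : ℕ} {X : ℝ}
    (P : (α → β) → Finset α) (hP : ∀ σ, #(P σ) = q) (f₀ : α → β)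
    (hX : (Fintype.card α).choose q * X < Fintype.card β ^ q) :
    ∃ R, #R = q ∧ X < #((univ.filter (P · = R)).image (R.piecewise · f₀)) := by
  set m := Fintype.card α
  set n := Fintype.card β
  have hqm : q ≤ m := hP f₀ ▸ card_le_univ _
  have hn : (0 : ℝ) < (n : ℝ) ^ (m - q) := pow_pos (mod_cast Fintype.card_pos) _
  have hsum : #(powersetCard q (univ : Finset α)) • ((n : ℝ) ^ (m - q) * X) <
      #(univ : Finset (α → β)) := by
    calc
      #(powersetCard q (univ : Finset α)) • ((n : ℝ) ^ (m - q) * X)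
          = n ^ (m - q) * (m.choose q * X) := by
        rw [card_powersetCard, card_univ, nsmul_eq_mul]
        ring
      _ < n ^ (m - q) * n ^ q := by gcongr
      _ = #(univ : Finset (α → β)) := by
        rw [← pow_add, Nat.sub_add_cancel hqm, card_univ, Fintype.card_fun, Nat.cast_pow]
  obtain ⟨R, hR, hlt⟩ := exists_lt_card_fiber_of_nsmul_lt_card_of_maps_to
    (fun σ _ ↦ mem_powersetCard.mpr ⟨subset_univ (P σ), hP σ⟩) hsum
  have hRq : #R = q := (mem_powersetCard.mp hR).2
  refine ⟨R, hRq, lt_of_mul_lt_mul_left (hlt.trans_le ?_) hn.le⟩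
  exact mod_cast hRq ▸ card_le_mul_card_image_piecewise _ R f₀

theorem exists_twoShatters_of_agreement [Nonempty β] {𝒜 : Set (β → Finset α)} {q D : ℕ} {y : ℝ}
    (hy : 1 ≤ y) (h𝒜 : ∀ σ : α → β, ∃ A ∈ 𝒜, q ≤ #{j | j ∈ A (σ j)})
    (hcount : (Fintype.card α).choose q * (y ^ D * (1 + (Fintype.card β).choose 2 / y) ^ q) <
      Fintype.card β ^ q) :
    ∃ S, #S = D ∧ TwoShatters 𝒜 S := by
  classical
  choose A hA hq using h𝒜
  choose P hPsub hPcard using fun σ ↦ exists_subset_card_eq (hq σ)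
  let f₀ : α → β := fun _ ↦ Classical.arbitrary β
  obtain ⟨R, hR, hlt⟩ := exists_lt_card_image_piecewise P hPcard f₀ hcount
  obtain ⟨S, hSR, hSD, T, hT, hF⟩ := exists_natarajanShatters_of_lt_card hy f₀
    (by simp +contextual [piecewise_eq_of_notMem]) (hR.symm ▸ hlt)
  refine ⟨S, hSD, T, hT, fun g hg ↦ ?_⟩
  obtain ⟨_, hf, hfg⟩ := hF g hg
  obtain ⟨σ, hσ, rfl⟩ := mem_image.mp hf
  refine ⟨A σ, hA σ, fun j hj ↦ ?_⟩
  have hσj : σ j = g j := by rw [← hfg j hj, piecewise_eq_of_mem _ _ _ (hSR hj)]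
  have hjP : j ∈ P σ := (mem_filter.mp hσ).2.symm ▸ hSR hj
  exact hσj ▸ (mem_filter.mp (hPsub σ hjP)).2

end Counting

section Additive

open Finset

variable {α β : Type*} [Fintype β]

/-- The bank `𝒜` achieves a `ρ` fraction of the optimal welfare on every profile of additive
valuations, where `w i j` is the value of item `j` for bidder `i`. The optimum is encoded by
comparing with every allocation `B`. -/
def IsAdditiveApprox (ρ : ℝ) (𝒜 : Set (β → Finset α)) : Prop :=
  ∀ w : β → α → ℝ, (∀ i j, 0 ≤ w i j) →
    ∀ B : β → Finset α, (∀ i i', i ≠ i' → Disjoint (B i) (B i')) →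
      ∃ A ∈ 𝒜, ρ * ∑ i, ∑ j ∈ B i, w i j ≤ ∑ i, ∑ j ∈ A i, w i j

theorem isAdditiveApprox_of_submodular [DecidableEq α] {ρ : ℝ} {𝒜 : Set (β → Finset α)}
    (h : ∀ v : β → Finset α → ℝ, (∀ i S, 0 ≤ v i S) → (∀ i S T, S ⊆ T → v i S ≤ v i T) →
      (∀ i S T, v i (S ∪ T) + v i (S ∩ T) ≤ v i S + v i T) →
      ∀ B : β → Finset α, (∀ i i', i ≠ i' → Disjoint (B i) (B i')) →
        ∃ A ∈ 𝒜, ρ * ∑ i, v i (B i) ≤ ∑ i, v i (A i)) :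
    IsAdditiveApprox ρ 𝒜 := fun w hw ↦
  h (fun i S ↦ ∑ j ∈ S, w i j) (fun i _ ↦ sum_nonneg fun j _ ↦ hw i j)
    (fun i _ _ hST ↦ sum_le_sum_of_subset_of_nonneg hST fun j _ _ ↦ hw i j)
    (fun _ _ _ ↦ sum_union_inter.le)

theorem IsAdditiveApprox.nonempty {ρ : ℝ} {𝒜 : Set (β → Finset α)} (h : IsAdditiveApprox ρ 𝒜) :
    𝒜.Nonempty := by
  obtain ⟨A, hA, -⟩ := h (fun _ _ ↦ 0) (fun _ _ ↦ le_rfl) (fun _ ↦ ∅) (by simp)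
  exact ⟨A, hA⟩

variable [Fintype α] [DecidableEq α]

theorem sum_sum_ite_eq_card_agreement [DecidableEq β] (σ : α → β) (A : β → Finset α) :
    ∑ i, ∑ j ∈ A i, (if σ j = i then 1 else 0 : ℝ) = #{j | j ∈ A (σ j)} := by
  calc
    ∑ i, ∑ j ∈ A i, (if σ j = i then 1 else 0 : ℝ)
        = ∑ i, ∑ j, if j ∈ A i then (if σ j = i then 1 else 0) else 0 := by
      simp_rw [sum_ite_mem, univ_inter]
    _ = ∑ j, ∑ i, if σ j = i then (if j ∈ A i then 1 else 0) else 0 := by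
      rw [sum_comm]
      exact sum_congr rfl fun j _ ↦ sum_congr rfl fun i _ ↦ by split_ifs <;> rfl
    _ = #{j | j ∈ A (σ j)} := by simp

theorem IsAdditiveApprox.exists_agreement {ρ : ℝ} {𝒜 : Set (β → Finset α)}
    (h : IsAdditiveApprox ρ 𝒜) (σ : α → β) :
    ∃ A ∈ 𝒜, ρ * Fintype.card α ≤ #{j | j ∈ A (σ j)} := by
  classical
  obtain ⟨A, hA, hle⟩ := h (fun i j ↦ if σ j = i then 1 else 0) (fun i j ↦ by positivity)
    (fun i ↦ {j | σ j = i}) fun i i' hii' ↦ disjoint_filter.mpr fun j _ hi hi' ↦ hii' (hi ▸ hi')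
  refine ⟨A, hA, ?_⟩
  rw [sum_sum_ite_eq_card_agreement, sum_sum_ite_eq_card_agreement] at hle
  simpa using hle

end Additive

section Numerics

open Real

theorem exp_mul_choose_le_pow {ε : ℝ} {m n q : ℕ} (h : exp (1 + ε) * m ≤ n * q) :
    exp (ε * q) * m.choose q ≤ n ^ q := by
  obtain rfl | hq := q.eq_zero_or_pos
  · simp
  have hq' : (0 : ℝ) < q := mod_cast hq
  have hexp : exp (ε * q) * exp q = exp (1 + ε) ^ q := by
    rw [← exp_add, ← exp_nat_mul]
    ring_nf
  refine le_of_mul_le_mul_right ?_ (pow_pos hq' q)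
  calc
    exp (ε * q) * m.choose q * q ^ q
        ≤ exp (ε * q) * (m ^ q / q.factorial) * q ^ q := by
      gcongr
      exact Nat.choose_le_pow_div q m
    _ = exp (ε * q) * (q ^ q / q.factorial) * m ^ q := by ring
    _ ≤ exp (ε * q) * exp q * m ^ q := by
      gcongr
      exact pow_div_factorial_le_exp q hq'.le q
    _ = (exp (1 + ε) * m) ^ q := by rw [hexp, mul_pow]
    _ ≤ (n * q) ^ q := by gcongr
    _ = n ^ q * q ^ q := mul_pow ..

theorem pow_mul_one_add_pow_le_exp {x y : ℝ} (hx : 0 ≤ 1 + x) (hy : 0 < y) (D q : ℕ) :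
    y ^ D * (1 + x) ^ q ≤ exp (D * log y + q * x) := by
  rw [exp_add, exp_nat_mul, exp_nat_mul, exp_log hy]
  gcongr
  linarith [add_one_le_exp x]

theorem sqrt_div_mul_self {x : ℝ} (hx : 0 ≤ x) (y : ℝ) : √(y / x) * x = √(x * y) := by
  obtain rfl | hx := hx.eq_or_lt
  · simp
  calc
    √(y / x) * x = √(y / x) * √(x ^ 2) := by rw [sqrt_sq hx.le]
    _ = √(y / x * x ^ 2) := (sqrt_mul' _ (sq_nonneg x)).symm
    _ = √(x * y) := by congr 1; field_simp

theorem sqrt_div_mul_sqrt_mul {x y : ℝ} (hx : 0 ≤ x) (hy : 0 < y) : √(x / y) * √(x * y) = x := by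
  rw [← sqrt_mul (by positivity), ← sqrt_sq hx]
  congr 1
  rw [sqrt_sq hx]
  field_simp

theorem log_mul_choose_two_le {x : ℝ} (hx : 2 ≤ x) {n : ℕ} (hn : 2 ≤ n) (hnx : n ≤ 4 * √x) :
    log (40 * n.choose 2) ≤ 10 * log x := by
  have hchoose_pos : (0 : ℝ) < n.choose 2 := mod_cast Nat.choose_pos hn
  have hchoose : (n.choose 2 : ℝ) ≤ 8 * x := by
    calc
      (n.choose 2 : ℝ) ≤ n ^ 2 / 2 := by simpa using Nat.choose_le_pow_div (α := ℝ) 2 n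
      _ ≤ (4 * √x) ^ 2 / 2 := by gcongr
      _ = 8 * x := by rw [mul_pow, sq_sqrt (by linarith)]; ring
  have hpow : 40 * (n.choose 2 : ℝ) ≤ x ^ 10 := by
    calc
      40 * (n.choose 2 : ℝ) ≤ 2 ^ 9 * x := by linarith
      _ ≤ x ^ 9 * x := by gcongr
      _ = x ^ 10 := by ring
  exact (log_le_log (by positivity) hpow).trans_eq (by simp)

theorem mul_log_div_le_sqrt_mul {C : ℝ} (hC : 0 ≤ C) {m k : ℕ} (hk : 0 < k) (hkm : k ≤ m)
    (hlog : C * logb 2 m ≤ k) : C * log (m / k) ≤ √(m * k) := by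
  have hk' : (1 : ℝ) ≤ k := mod_cast hk
  have hkm' : (k : ℝ) ≤ m := mod_cast hkm
  have hm : (1 : ℝ) ≤ m := hk'.trans hkm'
  calc
    C * log (m / k) ≤ C * log m := by
      gcongr
      exact div_le_self (by positivity) hk'
    _ ≤ C * logb 2 m := by
      gcongr
      exact le_div_self (log_nonneg hm) (log_pos one_lt_two) (by linarith [log_two_lt_d9])
    _ ≤ k := hlog
    _ ≤ √(m * k) := le_sqrt_of_sq_le (by nlinarith)

/-- The exponents compare as `log 3 - 1 > 0.09 > 0.06 + 0.025`: the first term is the gain of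
`(3 m / q) ^ q` over `m.choose q`, the second bounds `D * log (40 * N) / q`, and the third is
`1 / 40`. -/
theorem choose_mul_lt_pow {m k n q D : ℕ} (hk : 0 < k) (hkm : (k : ℝ) ≤ m / 2)
    (hlog : 1000 * log (m / k) ≤ √(m * k)) (hn₂ : 2 ≤ n) (hn : 3 * √(m / k) ≤ n)
    (hn' : n ≤ 4 * √(m / k)) (hq : √(m * k) ≤ q) (hqm : q ≤ m)
    (hD : D ≤ 1 / 200 * √(m * k) / log (m / k) + 1) :
    m.choose q * ((40 * n.choose 2) ^ D * (1 + n.choose 2 / (40 * n.choose 2)) ^ q) <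
      (n : ℝ) ^ q := by
  have hk' : (0 : ℝ) < k := mod_cast hk
  have hmk : 2 ≤ (m / k : ℝ) := by rw [le_div_iff₀ hk']; linarith
  have hL : 0 < log (m / k) := log_pos (by linarith)
  have : (0 : ℝ) < q := by linarith
  have hN : (0 : ℝ) < n.choose 2 := mod_cast Nat.choose_pos hn₂
  have hratio : (n.choose 2 / (40 * n.choose 2) : ℝ) = 1 / 40 := by field_simp
  have h_exponent : D * log (40 * n.choose 2) ≤ 0.06 * q := by
    calc
      D * log (40 * n.choose 2) ≤ D * (10 * log (m / k)) := by
        gcongr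
        exact log_mul_choose_two_le hmk hn₂ hn'
      _ ≤ (1 / 200 * √(m * k) / log (m / k) + 1) * (10 * log (m / k)) := by gcongr
      _ = 0.05 * √(m * k) + 10 * log (m / k) := by field_simp; ring
      _ ≤ 0.06 * q := by linarith
  have hnq : exp (1 + 0.09) * m ≤ n * q := by
    have hexp : exp (1 + 0.09) ≤ 3 :=
      (le_log_iff_exp_le three_pos).mp (by linarith [log_three_gt_d9])
    calc
      exp (1 + 0.09) * m ≤ 3 * m := by gcongr
      _ = 3 * √(m / k) * √(m * k) := by rw [mul_assoc, sqrt_div_mul_sqrt_mul (by positivity) hk']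
      _ ≤ n * q := by gcongr
  have hchoose : (0 : ℝ) < m.choose q := mod_cast Nat.choose_pos hqm
  calc
    m.choose q * ((40 * n.choose 2) ^ D * (1 + n.choose 2 / (40 * n.choose 2)) ^ q)
        ≤ m.choose q * exp (D * log (40 * n.choose 2) + q * (1 / 40)) := by
      rw [hratio]
      gcongr
      exact pow_mul_one_add_pow_le_exp (by norm_num) (by positivity) D q
    _ < m.choose q * exp (0.09 * q) := by
      gcongr
      linarith
    _ = exp (0.09 * q) * m.choose q := mul_comm _ _
    _ ≤ n ^ q := exp_mul_choose_le_pow hnq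

end Numerics

section TwoShattering

open Finset Real

variable {α β : Type*} [Fintype α] [Fintype β]

theorem exists_twoShatters_of_sqrt_mul_le_agreement [DecidableEq α] {k : ℕ}
    (hk : 0 < k) (hkm : (k : ℝ) ≤ Fintype.card α / 2)
    (hlog : 1000 * log (Fintype.card α / k) ≤ √(Fintype.card α * k))
    (hn : 3 * √(Fintype.card α / k) ≤ Fintype.card β)
    (hn' : Fintype.card β ≤ 4 * √(Fintype.card α / k)) {𝒜 : Set (β → Finset α)}
    (h𝒜 : ∀ σ : α → β, ∃ A ∈ 𝒜, √(Fintype.card α * k) ≤ #{j | j ∈ A (σ j)}) :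
    ∃ S : Finset α, 1 / 200 * √(Fintype.card α * k) / log (Fintype.card α / k) ≤ #S ∧
      TwoShatters 𝒜 S := by
  set m := Fintype.card α
  set n := Fintype.card β
  have hmk : 2 ≤ (m / k : ℝ) := by rw [le_div_iff₀ (mod_cast hk)]; linarith
  have hn₂ : (2 : ℝ) ≤ n := by linarith [one_le_sqrt.mpr (one_le_two.trans hmk)]
  have hn₂_nat : 2 ≤ n := mod_cast hn₂
  have : Nonempty β := Fintype.card_pos_iff.mp (two_pos.trans_le hn₂_nat)
  have hy : (1 : ℝ) ≤ 40 * n.choose 2 :=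
    mod_cast Nat.mul_pos (by norm_num : 0 < 40) (Nat.choose_pos hn₂_nat)
  have hsm : √(m * k : ℝ) ≤ m := sqrt_le_iff.mpr ⟨by positivity, by nlinarith⟩
  have hL : 0 ≤ log (m / k : ℝ) := log_nonneg (one_le_two.trans hmk)
  have hcount := choose_mul_lt_pow hk hkm hlog hn₂_nat hn hn' (Nat.le_ceil _) (Nat.ceil_le.mpr hsm)
    (Nat.ceil_lt_add_one (by positivity)).le
  obtain ⟨S, hS_card, hS⟩ := exists_twoShatters_of_agreement hy
    (fun σ ↦ (h𝒜 σ).imp fun _ ↦ And.imp_right Nat.ceil_le.mpr) hcount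
  exact ⟨S, hS_card ▸ Nat.le_ceil _, hS⟩

theorem submodular_approx_implies_two_shattering_general {k : ℕ}
    (hlog : 1000 * logb 2 (Fintype.card α) ≤ k) (hkm : (k : ℝ) ≤ Fintype.card α / 2)
    (hn : 3 * √(Fintype.card α / k) ≤ Fintype.card β) {𝒜 : Set (β → Finset α)}
    (h𝒜 : IsAdditiveApprox √(k / Fintype.card α) 𝒜) :
    ∃ S : Finset α, 1 / 200 * √(Fintype.card α * k) / log (Fintype.card α / k) ≤ #S ∧
      TwoShatters 𝒜 S := by
  classical
  obtain rfl | hk := k.eq_zero_or_pos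
  · exact ⟨∅, by simp, twoShatters_empty h𝒜.nonempty⟩
  set m := Fintype.card α
  set n₀ := ⌈3 * √(m / k : ℝ)⌉₊
  have hkm₁ : (k : ℝ) ≤ m := by linarith [(Nat.cast_nonneg k : (0 : ℝ) ≤ k)]
  have hr : 1 ≤ √(m / k : ℝ) := one_le_sqrt.mpr ((one_le_div (mod_cast hk)).mpr hkm₁)
  have hn₀_lt : (n₀ : ℝ) < 3 * √(m / k) + 1 := Nat.ceil_lt_add_one (by positivity)
  have : Nonempty (Fin n₀) := ⟨0, Nat.ceil_pos.mpr (by positivity)⟩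
  obtain ⟨e⟩ : Nonempty (Fin n₀ ↪ β) :=
    Function.Embedding.nonempty_of_card_le (by rw [Fintype.card_fin]; exact Nat.ceil_le.mpr hn)
  obtain ⟨S, hS_card, hS⟩ := exists_twoShatters_of_sqrt_mul_le_agreement (𝒜 := (· ∘ e) '' 𝒜) hk
    hkm (mul_log_div_le_sqrt_mul (by norm_num) hk (mod_cast hkm₁) hlog)
    (by rw [Fintype.card_fin]; exact Nat.le_ceil _) (by rw [Fintype.card_fin]; linarith)
    fun σ ↦ by
      obtain ⟨A, hA, hle⟩ := h𝒜.exists_agreement (e ∘ σ)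
      rw [sqrt_div_mul_self (Nat.cast_nonneg m)] at hle
      exact ⟨A ∘ e, ⟨A, hA, rfl⟩, hle⟩
  exact ⟨S, hS_card, hS.of_embedding e⟩

end TwoShattering

/-- if an allocation bank `𝒜` for `n = ⌈3√(m/k)⌉` bidders is
`√(m/k)`-approximate for monotone submodular valuations, then it 2-shatters a pair `(S, [n])`
with `|S| ≥ c·√(mk)/ln(m/k)`. -/
theorem submodular_approx_implies_two_shattering :
    ∃ c C : ℝ, 0 < c ∧ 0 < C ∧
      ∀ m k n : ℕ, C * Real.logb 2 m ≤ (k : ℝ) → (k : ℝ) ≤ (m : ℝ) / 2 →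
        n = ⌈(3 : ℝ) * Real.sqrt ((m : ℝ) / (k : ℝ))⌉₊ →
        ∀ 𝒜 : Set (Fin n → Finset (Fin m)),
          (∀ A ∈ 𝒜, ∀ i j : Fin n, i ≠ j → Disjoint (A i) (A j)) →
          (∀ v : Fin n → Finset (Fin m) → ℝ,
            (∀ i S, 0 ≤ v i S) →
            (∀ i, ∀ S T : Finset (Fin m), S ⊆ T → v i S ≤ v i T) →
            (∀ i, ∀ S T : Finset (Fin m), v i (S ∪ T) + v i (S ∩ T) ≤ v i S + v i T) →
            ∀ A' : Fin n → Finset (Fin m),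
              (∀ i j : Fin n, i ≠ j → Disjoint (A' i) (A' j)) →
              ∃ A ∈ 𝒜, Real.sqrt ((k : ℝ) / m) * ∑ i, v i (A' i) ≤ ∑ i, v i (A i)) →
          ∃ S : Finset (Fin m),
            c * Real.sqrt ((m : ℝ) * k) / Real.log ((m : ℝ) / k) ≤ (S.card : ℝ) ∧
            ∃ T : Fin m → Finset (Fin n),
              (∀ j ∈ S, (T j).card = 2) ∧
              ∀ g : Fin m → Fin n, (∀ j ∈ S, g j ∈ T j) →
                ∃ A ∈ 𝒜, ∀ j ∈ S, j ∈ A (g j) := by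
  refine ⟨1 / 200, 1000, by norm_num, by norm_num, fun m k n hk hkm hn 𝒜 _ hA ↦ ?_⟩
  simpa only [Fintype.card_fin, TwoShatters] using submodular_approx_implies_two_shattering_general
    (α := Fin m) (β := Fin n) (by rwa [Fintype.card_fin]) (by rwa [Fintype.card_fin])
    (by rw [Fintype.card_fin, Fintype.card_fin, hn]; exact Nat.le_ceil _)
    (isAdditiveApprox_of_submodular (by simpa only [Fintype.card_fin] using hA))
end

section
/- There exist universal constants c₁, c₂ > 0 such that the following holds. Let s ≥ 2, t ≥ 2 be integers with t ≤ c₁ · s/ln(s), and for each j ∈ [s] let T_j ⊆ [t] be a set of exactly two bidders. Then there exist an integer z ≥ 2^{c₂·s/t}, functions B⁽¹⁾,…,B⁽ᶻ⁾ : [s] → [t] with B⁽ˡ⁾(j) ∈ T_j for all j and ℓ, and a set V ⊆ [t] with |V| ≥ 2, such that: (a) for every bidder i ∈ [t], the cardinality |(B⁽ˡ⁾)⁻¹(i)| is the same for all ℓ ∈ [z]; and (b) for every function f : V → [z], f is constant if and only if the sets (B^{(f(i))})⁻¹(i) for i ∈ V are pairwise disjoint. -/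
/-!
Regard the items as the edges of a multigraph on the bidders. Having more than `(s / t) (t - 1)`
edges, it has an induced submultigraph on some vertex set `V` all of whose cuts contain at least
`d = s / t` edges; allocations are orientations of its edges.

Prescribe in-degrees by orienting every edge at random, and for each label `l` force every edge,
independently, with probability `1 / 3` each to its first end, to its second end, or not at all.
Failure of Hall's condition at a vertex set, or of a nonconstant labelling `f : V → [z]` to meet an
edge that is forced to both its ends under the labels that `f` gives them, has probability at most
`q ^ k`, where `q < 1` is a constant and `k` is the number of bichromatic edges of the vertex
colouring in question. When there is no such failure, Hall's theorem extends the forced choices to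
orientations with the prescribed in-degrees.

The union bound is thus a sum over the nonconstant colourings of `V` of `q ^ k`, the partition
function of a Potts model without its constant colourings. It is bounded, essentially, by its value
on the cycle whose edges have multiplicity `d / 2`: summing over the contractions of single edges
gives a differential inequality in `q` for the partition function, and the bound follows by
induction on the number of vertices.
-/

section BipartiteMatching

open Finset

/-- Hall's theorem for the bipartite graph that joins `e` to the slots `i` with `o i ∈ A e`. -/
lemma exists_mem_card_fiber_eq {V E : Type*} [DecidableEq V] [Fintype E] (o : E → V)
    (A : E → Finset V) (h : ∀ S : Finset V, #{e | A e ⊆ S} ≤ #{e | o e ∈ S}) :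
    ∃ B : E → V, (∀ e, B e ∈ A e) ∧ ∀ v, #{e | B e = v} = #{e | o e = v} := by
  classical
  obtain ⟨φ, hφinj, hφ⟩ := (all_card_le_biUnion_card_iff_exists_injective
    fun e ↦ ({e' | o e' ∈ A e} : Finset E)).1 fun s ↦ by
      calc #s ≤ #{e | A e ⊆ s.biUnion A} :=
            card_le_card fun e he ↦ by simpa using subset_biUnion_of_mem A he
        _ ≤ #{e | o e ∈ s.biUnion A} := h _
        _ = #(s.biUnion fun e ↦ ({e' | o e' ∈ A e} : Finset E)) := by
            congr 1
            ext e
            simp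
  refine ⟨o ∘ φ, fun e ↦ by simpa using hφ e, fun v ↦ ?_⟩
  exact card_equiv (Equiv.ofBijective φ hφinj.bijective_of_finite) fun e ↦ by simp

end BipartiteMatching

section UniformExpectation

open Finset
open scoped BigOperators

variable {ι K : Type*} [Fintype ι] [DecidableEq ι] [Semifield K] [CharZero K]

lemma expect_prod_apply {κ : ι → Type*} [∀ i, Fintype (κ i)] (w : ∀ i, κ i → K) :
    𝔼 ω : ∀ i, κ i, ∏ i, w i (ω i) = ∏ i, 𝔼 x, w i x := by
  simp only [Fintype.expect_eq_sum_div_card, prod_div_distrib, prod_univ_sum,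
    Fintype.piFinset_univ, Fintype.card_pi, Nat.cast_prod]

variable {X : Type*} [Fintype X] [Nonempty X]

lemma expect_comp_apply (F : X → K) (i : ι) : 𝔼 ω : ι → X, F (ω i) = 𝔼 x, F x := by
  have h := expect_prod_apply fun (j : ι) (x : X) ↦ if j = i then F x else 1
  have hfactor (j : ι) :
      𝔼 x, (if j = i then F x else 1) = if j = i then 𝔼 x, F x else 1 := by
    split_ifs <;> simp
  simpa only [hfactor, prod_ite_eq', mem_univ, if_true] using h

lemma expect_comp_apply_mul_comp_apply (F G : X → K) {i j : ι} (hij : i ≠ j) :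
    𝔼 ω : ι → X, F (ω i) * G (ω j) = (𝔼 x, F x) * 𝔼 x, G x := by
  have h := expect_prod_apply fun (k : ι) (x : X) ↦
    (if k = i then F x else 1) * (if k = j then G x else 1)
  have hfactor (k : ι) :
      𝔼 x, (if k = i then F x else 1) * (if k = j then G x else 1) =
        (if k = i then 𝔼 x, F x else 1) * (if k = j then 𝔼 x, G x else 1) := by
    split_ifs with hi hj
    · exact absurd (hi.symm.trans hj) hij
    all_goals simp
  simpa only [hfactor, prod_mul_distrib, prod_ite_eq', mem_univ, if_true] using h

end UniformExpectation

section RealInequalities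

lemma mul_natCast_mul_pow_pred {R : Type*} [CommSemiring R] (n : ℕ) (x : R) :
    x * (n * x ^ (n - 1)) = n * x ^ n := by
  cases n with
  | zero => simp
  | succ n => rw [Nat.add_sub_cancel, pow_succ]; ring

lemma nonneg_of_mul_deriv_le_mul {h h' : ℝ → ℝ} {M : ℝ}
    (hderiv : ∀ x ∈ Set.Ioc (0 : ℝ) 1, HasDerivAt h (h' x) x)
    (hle : ∀ x ∈ Set.Ioc (0 : ℝ) 1, x * h' x ≤ M * h x) (hone : 0 ≤ h 1)
    {x : ℝ} (hx : x ∈ Set.Ioc (0 : ℝ) 1) : 0 ≤ h x := by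
  have hsub : Set.Icc x 1 ⊆ Set.Ioc 0 1 := fun y hy ↦ ⟨hx.1.trans_le hy.1, hy.2⟩
  have hquot (y : ℝ) (hy : y ∈ Set.Ioc (0 : ℝ) 1) :
      HasDerivAt (fun y ↦ y ^ (-M) * h y) (y ^ (-M - 1) * (y * h' y - M * h y)) y := by
    refine ((Real.hasDerivAt_rpow_const (Or.inl hy.1.ne')).mul (hderiv y hy)).congr_deriv ?_
    have hpow : y ^ (-M) = y ^ (-M - 1) * y := by
      rw [Real.rpow_sub_one hy.1.ne', div_mul_cancel₀ _ hy.1.ne']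
    rw [hpow]
    ring
  have hanti : AntitoneOn (fun y ↦ y ^ (-M) * h y) (Set.Icc x 1) := by
    refine antitoneOn_of_deriv_nonpos (convex_Icc x 1)
      (fun y hy ↦ (hquot y (hsub hy)).continuousAt.continuousWithinAt)
      (fun y hy ↦ (hquot y (hsub (interior_subset hy))).differentiableAt.differentiableWithinAt)
      fun y hy ↦ ?_
    have hy := hsub (interior_subset hy)
    rw [(hquot y hy).deriv]
    exact mul_nonpos_of_nonneg_of_nonpos (Real.rpow_nonneg hy.1.le _)
      (sub_nonpos.2 (hle y hy))
  have hcompare := hanti (Set.left_mem_Icc.2 hx.2) (Set.right_mem_Icc.2 hx.2) hx.2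
  simp only [Real.one_rpow, one_mul] at hcompare
  exact nonneg_of_mul_nonneg_right (hone.trans hcompare) (Real.rpow_pos_of_pos hx.1 _)

lemma one_add_pow_le_one_add_two_mul {n : ℕ} {y : ℝ} (hy : 0 ≤ y) (hny : n * y ≤ 1) :
    (1 + y) ^ n ≤ 1 + 2 * (n * y) := by
  have hexp : (1 + y) ^ n ≤ Real.exp (n * y) := by
    rw [Real.exp_nat_mul]
    gcongr
    linarith [Real.add_one_le_exp y]
  have hny0 : 0 ≤ n * y := by positivity
  have habs := Real.abs_exp_sub_one_le (x := n * y) (by rwa [abs_of_nonneg hny0])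
  rw [abs_of_nonneg hny0] at habs
  linarith [le_abs_self (Real.exp (n * y) - 1)]

end RealInequalities

/-- A finite multigraph, loops allowed, given by the two ends of each edge; the order of the two
ends carries no meaning. Items are the edges and bidders the vertices: item `j` joins the two
bidders of `T_j`. -/
structure Multigraph (V E : Type*) where
  /-- The ends of each edge. -/
  endpt : E → Bool → V

namespace Multigraph

open Finset
open scoped BigOperators

variable {V W E C : Type*} (G : Multigraph V E)

/-- The multigraph obtained by identifying vertices along `π`, keeping all edges. -/
def map (π : V → W) : Multigraph W E := ⟨fun e ↦ π ∘ G.endpt e⟩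

/-- The submultigraph induced on the vertex set `U`. -/
def induce (U : Finset V) : Multigraph U {e // ∀ b, G.endpt e b ∈ U} :=
  ⟨fun e b ↦ ⟨G.endpt e b, e.2 b⟩⟩

section Collapse

variable [DecidableEq V]

/-- The projection of the vertex set that identifies `w` with `u`. -/
def collapse {u w : V} (h : u ≠ w) (v : V) : {v // v ≠ w} :=
  if hv : v = w then ⟨u, h⟩ else ⟨v, hv⟩

lemma collapse_coe {u w : V} (h : u ≠ w) (v : {v // v ≠ w}) : collapse h v = v := by
  simp [collapse, v.2]

lemma coe_comp_collapse {u w : V} (h : u ≠ w) {f : V → C} (hf : f u = f w) :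
    (fun v : {v // v ≠ w} ↦ f v) ∘ collapse h = f := by
  funext v
  by_cases hv : v = w <;> simp [collapse, hv, hf]

lemma sum_comp_collapse [Fintype V] [Fintype C] [DecidableEq C] {M : Type*} [AddCommMonoid M]
    {u w : V} (h : u ≠ w) (F : (V → C) → M) :
    ∑ g : {v // v ≠ w} → C, F (g ∘ collapse h) = ∑ f : V → C with f u = f w, F f := by
  refine sum_nbij' (fun g ↦ g ∘ collapse h) (fun f v ↦ f v) ?_ ?_ ?_ ?_ ?_
  · simp [collapse, h]
  · simp
  · intro g _
    funext v
    simp [collapse_coe]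
  · intro f hf
    exact coe_comp_collapse h (by simpa using hf)
  · simp

end Collapse

section Cuts

variable [Fintype E] [DecidableEq C]

/-- The set of bichromatic edges of a vertex colouring. In particular `G.cut id` is the set of
edges that are not loops. -/
def cut (f : V → C) : Finset E := {e | f (G.endpt e false) ≠ f (G.endpt e true)}

@[simp]
lemma mem_cut {f : V → C} {e : E} :
    e ∈ G.cut f ↔ f (G.endpt e false) ≠ f (G.endpt e true) := by
  simp [cut]

lemma cut_eq_empty {f : V → C} (hf : ∀ v w, f v = f w) : G.cut f = ∅ :=
  filter_eq_empty_iff.2 fun _ _ h ↦ h (hf _ _)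

/-- Every nontrivial cut of the multigraph contains at least `d` edges. -/
def EdgeConnected (d : ℝ) : Prop :=
  ∀ g : V → Bool, (∃ v w, g v ≠ g w) → d ≤ #(G.cut g)

variable {G} in
lemma EdgeConnected.map {d : ℝ} (hG : G.EdgeConnected d) {π : V → W}
    (hπ : Function.Surjective π) : (G.map π).EdgeConnected d := by
  rintro g ⟨v, w, hvw⟩
  obtain ⟨v, rfl⟩ := hπ v
  obtain ⟨w, rfl⟩ := hπ w
  exact hG (g ∘ π) ⟨v, w, hvw⟩

section Contraction

variable [DecidableEq V]

/-- The contraction of an edge that is not a loop. -/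
def contract {e : E} (he : e ∈ G.cut id) : Multigraph {v // v ≠ G.endpt e true} E :=
  G.map (collapse (G.mem_cut.1 he))

variable {G} in
lemma EdgeConnected.contract {d : ℝ} (hG : G.EdgeConnected d) {e : E} (he : e ∈ G.cut id) :
    (G.contract he).EdgeConnected d :=
  hG.map fun v ↦ ⟨v, collapse_coe _ v⟩

end Contraction

section PottsModel

variable [Fintype V] [DecidableEq V]

lemma sum_card_cut_singleton :
    ∑ v, #(G.cut fun w ↦ decide (w = v)) = 2 * #(G.cut id) := by
  classical
  have hends (e : E) :
      #{v | e ∈ G.cut fun w ↦ decide (w = v)} = if e ∈ G.cut id then 2 else 0 := by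
    split_ifs with he
    · rw [← card_pair (G.mem_cut.1 he)]
      congr 1
      ext v
      simp only [mem_cut, id, mem_filter, mem_univ, true_and, mem_insert, mem_singleton] at he ⊢
      grind
    · simp only [mem_cut, id, not_not] at he
      simp [he]
  calc ∑ v, #(G.cut fun w ↦ decide (w = v))
      = ∑ e, #{v | e ∈ G.cut fun w ↦ decide (w = v)} := by
        simpa only [bipartiteAbove, bipartiteBelow, filter_univ_mem] using
          sum_card_bipartiteAbove_eq_sum_card_bipartiteBelow
            (s := univ) (t := univ) fun (v : V) e ↦ e ∈ G.cut fun w ↦ decide (w = v)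
    _ = 2 * #(G.cut id) := by
        simp only [hends, sum_ite_mem, univ_inter, sum_const, smul_eq_mul, mul_comm]

variable {G} in
lemma EdgeConnected.card_mul_le [Nontrivial V] {d : ℝ} (hG : G.EdgeConnected d) :
    Fintype.card V * d ≤ 2 * #(G.cut id) := by
  have hstar (v : V) : d ≤ #(G.cut fun w ↦ decide (w = v)) := by
    obtain ⟨w, hw⟩ := exists_ne v
    exact hG _ ⟨v, w, by simp [hw]⟩
  calc Fintype.card V * d = ∑ _v : V, d := by simp
    _ ≤ ∑ v, (#(G.cut fun w ↦ decide (w = v)) : ℝ) := sum_le_sum fun v _ ↦ hstar v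
    _ = 2 * #(G.cut id) := by exact_mod_cast G.sum_card_cut_singleton

variable [Fintype C]

variable (C) in
/-- The partition function of the Potts model with colour set `C`, in which each bichromatic
edge has weight `q`. -/
noncomputable def pottsSum (q : ℝ) : ℝ := ∑ f : V → C, q ^ #(G.cut f)

lemma pottsSum_contract {e : E} (he : e ∈ G.cut id) (q : ℝ) :
    (G.contract he).pottsSum C q =
      ∑ f : V → C with f (G.endpt e false) = f (G.endpt e true), q ^ #(G.cut f) :=
  sum_comp_collapse (G.mem_cut.1 he) fun f ↦ q ^ #(G.cut f)

lemma sum_attach_pottsSum_contract (q : ℝ) :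
    ∑ e ∈ (G.cut id).attach, (G.contract e.2).pottsSum C q =
      #(G.cut id) * G.pottsSum C q - ∑ f : V → C, #(G.cut f) * q ^ #(G.cut f) := by
  have hmono (f : V → C) :
      (#{e ∈ G.cut id | f (G.endpt e false) = f (G.endpt e true)} : ℝ) =
        #(G.cut id) - #(G.cut f) := by
    have hcut : {e ∈ G.cut id | ¬ f (G.endpt e false) = f (G.endpt e true)} = G.cut f := by
      ext e
      simp only [mem_filter, mem_cut, id, ne_eq, and_iff_right_iff_imp]
      exact fun hf h ↦ hf (congrArg f h)
    rw [← card_filter_add_card_filter_not (s := G.cut id)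
      fun e ↦ f (G.endpt e false) = f (G.endpt e true), hcut]
    push_cast
    ring
  calc ∑ e ∈ (G.cut id).attach, (G.contract e.2).pottsSum C q
      = ∑ e ∈ G.cut id, ∑ f : V → C,
          if f (G.endpt e false) = f (G.endpt e true) then q ^ #(G.cut f) else 0 := by
        simp only [pottsSum_contract, sum_filter]
        exact sum_attach (G.cut id) fun e ↦ ∑ f : V → C,
          if f (G.endpt e false) = f (G.endpt e true) then q ^ #(G.cut f) else 0
    _ = ∑ f : V → C, (#(G.cut id) - #(G.cut f)) * q ^ #(G.cut f) := by
        rw [sum_comm]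
        simp only [← hmono, ← sum_filter, sum_const, nsmul_eq_mul]
    _ = _ := by simp only [pottsSum, sub_mul, sum_sub_distrib, mul_sum]

lemma hasDerivAt_pottsSum (q : ℝ) :
    HasDerivAt (G.pottsSum C) (∑ f : V → C, #(G.cut f) * q ^ (#(G.cut f) - 1)) q :=
  HasDerivAt.fun_sum fun f _ ↦ hasDerivAt_pow #(G.cut f) q

/-- The bound on the Potts partition function with `z` colours of a multigraph with `n` vertices
all of whose cuts have size at least `d`. Up to the factor `(1 - q ^ (d / 2)) ^ n` missing from
its last term, it is the partition function of the cycle whose edges have multiplicity `d / 2`. -/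
noncomputable def pottsBound (z d : ℝ) (n : ℕ) (q : ℝ) : ℝ :=
  (1 + (z - 1) * q ^ (d / 2)) ^ n + (z - 1)

lemma hasDerivAt_pottsBound_succ (z d : ℝ) (n : ℕ) {q : ℝ} (hq : 0 < q) :
    HasDerivAt (pottsBound z d (n + 1))
      ((n + 1) * (1 + (z - 1) * q ^ (d / 2)) ^ n * ((z - 1) * (d / 2 * q ^ (d / 2 - 1)))) q := by
  have hbase := ((Real.hasDerivAt_rpow_const (p := d / 2) (Or.inl hq.ne')).const_mul
    (z - 1)).const_add 1
  exact ((hbase.pow (n + 1)).add_const (z - 1)).congr_deriv (by simp)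

variable {G} in
/-- Contracting the edges gives the differential inequality
`q * deriv (φ - Z) q ≤ #(G.cut id) * (φ - Z) q` for the partition function `Z` and its bound
`φ`. -/
lemma EdgeConnected.pottsSum_le_of_contract [Nontrivial V] [Nonempty C] {d : ℝ}
    (hG : G.EdgeConnected d) {n : ℕ} (hn : Fintype.card V = n + 1)
    (hcontract : ∀ e, ∀ he : e ∈ G.cut id, ∀ q ∈ Set.Ioc (0 : ℝ) 1,
      (G.contract he).pottsSum C q ≤ pottsBound (Fintype.card C) d n q)
    {q : ℝ} (hq : q ∈ Set.Ioc (0 : ℝ) 1) :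
    G.pottsSum C q ≤ pottsBound (Fintype.card C) d (n + 1) q := by
  have hz : (0 : ℝ) ≤ Fintype.card C - 1 := by
    rw [sub_nonneg]
    exact_mod_cast Fintype.card_pos (α := C)
  refine sub_nonneg.1 (nonneg_of_mul_deriv_le_mul (M := #(G.cut id))
    (h := fun q ↦ pottsBound (Fintype.card C) d (n + 1) q - G.pottsSum C q)
    (fun q hq ↦ (hasDerivAt_pottsBound_succ _ d n hq.1).sub (G.hasDerivAt_pottsSum q)) ?_ ?_ hq)
  · intro q hq
    have hX : q * (d / 2 * q ^ (d / 2 - 1)) = d / 2 * q ^ (d / 2) := by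
      rw [Real.rpow_sub_one hq.1.ne', mul_left_comm, mul_div_cancel₀ _ hq.1.ne']
    have hZ : q * ∑ f : V → C, #(G.cut f) * q ^ (#(G.cut f) - 1) =
        ∑ f : V → C, #(G.cut f) * q ^ #(G.cut f) := by
      simp only [mul_sum, mul_natCast_mul_pow_pred]
    have hsum : #(G.cut id) * G.pottsSum C q - ∑ f : V → C, #(G.cut f) * q ^ #(G.cut f) ≤
        #(G.cut id) * pottsBound (Fintype.card C) d n q := by
      rw [← sum_attach_pottsSum_contract, ← nsmul_eq_mul, ← card_attach]
      exact sum_le_card_nsmul _ _ _ fun e _ ↦ hcontract e e.2 q hq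
    have hdegree : (n + 1) * (d / 2) ≤ #(G.cut id) := by
      have := hG.card_mul_le
      rw [hn] at this
      push_cast at this
      linarith
    have hmain := mul_le_mul_of_nonneg_right hdegree
      (by have := Real.rpow_nonneg hq.1.le (d / 2); positivity :
        0 ≤ (1 + (Fintype.card C - 1) * q ^ (d / 2)) ^ n *
          ((Fintype.card C - 1) * q ^ (d / 2)))
    rw [mul_sub, hZ]
    unfold pottsBound at hsum ⊢
    linear_combination hmain + hsum +
      (n + 1) * (1 + (Fintype.card C - 1) * q ^ (d / 2)) ^ n * (Fintype.card C - 1 : ℝ) * hX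
  · simp [pottsSum, pottsBound, hn, hz]

variable {G} in
lemma pottsSum_le_of_subsingleton [Subsingleton V] [Nonempty C] (d : ℝ) {q : ℝ} (hq : 0 ≤ q) :
    G.pottsSum C q ≤ pottsBound (Fintype.card C) d (Fintype.card V) q := by
  have hz : (0 : ℝ) ≤ Fintype.card C - 1 := by
    rw [sub_nonneg]
    exact_mod_cast Fintype.card_pos (α := C)
  have hsum : G.pottsSum C q = Fintype.card C ^ Fintype.card V := by
    simp [pottsSum, cut_eq_empty G fun v w ↦ congrArg _ (Subsingleton.elim v w)]
  have hX := mul_nonneg hz (Real.rpow_nonneg hq (d / 2))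
  have hcard : Fintype.card V ≤ 1 := Fintype.card_le_one_iff_subsingleton.2 ‹_›
  rw [hsum, pottsBound]
  interval_cases Fintype.card V
  · simpa using hz
  · linarith

end PottsModel

universe u

theorem EdgeConnected.pottsSum_le {V : Type u} [Fintype V] [DecidableEq V] {G : Multigraph V E}
    [Fintype C] [Nonempty C] {d : ℝ} (hG : G.EdgeConnected d) {q : ℝ}
    (hq : q ∈ Set.Ioc (0 : ℝ) 1) :
    G.pottsSum C q ≤ pottsBound (Fintype.card C) d (Fintype.card V) q := by
  obtain ⟨n, hn⟩ : ∃ n, Fintype.card V = n := ⟨_, rfl⟩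
  induction n generalizing V q with
  | zero =>
    have := Fintype.card_eq_zero_iff.1 hn
    exact pottsSum_le_of_subsingleton d hq.1.le
  | succ n ih =>
    rcases subsingleton_or_nontrivial V with _ | _
    · exact pottsSum_le_of_subsingleton d hq.1.le
    rw [hn]
    refine hG.pottsSum_le_of_contract hn (fun e he q hq ↦ ?_) hq
    have hcard : Fintype.card {v // v ≠ G.endpt e true} = n := by
      rw [Fintype.card_subtype_compl, hn]
      simp
    simpa only [hcard] using ih (hG.contract he) hq hcard

lemma expect_prod_le_pow_card_cut [DecidableEq E] {X : Type*} [Fintype X] {q : ℝ} {f : V → C}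
    {w : E → X → ℝ} (hw : ∀ e x, 0 ≤ w e x)
    (hexpect : ∀ e, 𝔼 x, w e x ≤ if e ∈ G.cut f then q else 1) :
    𝔼 ω : E → X, ∏ e, w e (ω e) ≤ q ^ #(G.cut f) := by
  rw [expect_prod_apply]
  calc ∏ e, 𝔼 x, w e x ≤ ∏ e, if e ∈ G.cut f then q else 1 :=
        prod_le_prod (fun e _ ↦ expect_nonneg fun x _ ↦ hw e x) fun e _ ↦ hexpect e
    _ = q ^ #(G.cut f) := by rw [prod_ite_mem, univ_inter, prod_const]

section NonconstantColourings

variable [Fintype V] [DecidableEq V] [Nonempty V] [Fintype C] [Nonempty C]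

variable {G} in
lemma EdgeConnected.sum_nonconstant_le {d : ℝ} (hG : G.EdgeConnected d) {q : ℝ}
    (hq : q ∈ Set.Ioc (0 : ℝ) 1) :
    ∑ f : V → C with ∃ v w, f v ≠ f w, q ^ #(G.cut f) ≤
      (1 + (Fintype.card C - 1) * q ^ (d / 2)) ^ Fintype.card V - 1 := by
  have hcut (c : C) : G.cut (Function.const V c) = ∅ := G.cut_eq_empty fun _ _ ↦ rfl
  have hconst : (Fintype.card C : ℝ) ≤
      ∑ f : V → C with ¬ ∃ v w, f v ≠ f w, q ^ #(G.cut f) := by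
    calc (Fintype.card C : ℝ)
        = ∑ f ∈ (univ : Finset C).map ⟨Function.const V, Function.const_injective⟩,
            q ^ #(G.cut f) := by
          simp [sum_map, hcut]
      _ ≤ _ := by
          refine sum_le_sum_of_subset_of_nonneg (fun f hf ↦ ?_) fun f _ _ ↦ pow_nonneg hq.1.le _
          obtain ⟨c, -, rfl⟩ := mem_map.1 hf
          simp
  have htotal := hG.pottsSum_le (C := C) hq
  rw [pottsSum, pottsBound, ← sum_filter_add_sum_filter_not univ
    fun f : V → C ↦ ∃ v w, f v ≠ f w] at htotal
  linarith

variable {G} in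
lemma EdgeConnected.sum_nonconstant_le_two_mul {d : ℝ} (hG : G.EdgeConnected d) {q : ℝ}
    (hq : q ∈ Set.Ioc (0 : ℝ) 1)
    (hsmall : Fintype.card V * ((Fintype.card C - 1) * q ^ (d / 2)) ≤ 1) :
    ∑ f : V → C with ∃ v w, f v ≠ f w, q ^ #(G.cut f) ≤
      2 * (Fintype.card V * ((Fintype.card C - 1) * q ^ (d / 2))) := by
  have hz : (0 : ℝ) ≤ Fintype.card C - 1 := by
    rw [sub_nonneg]
    exact_mod_cast Fintype.card_pos (α := C)
  have := one_add_pow_le_one_add_two_mul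
    (mul_nonneg hz (Real.rpow_nonneg hq.1.le (d / 2))) hsmall
  linarith [hG.sum_nonconstant_le (C := C) hq]

variable {G} in
lemma EdgeConnected.expect_sum_prod_le [DecidableEq E] {X : Type*} [Fintype X] {d : ℝ}
    (hG : G.EdgeConnected d) {q : ℝ} (hq : q ∈ Set.Ioc (0 : ℝ) 1)
    (hsmall : Fintype.card V * ((Fintype.card C - 1) * q ^ (d / 2)) ≤ 1)
    {w : (V → C) → E → X → ℝ} (hw : ∀ f e x, 0 ≤ w f e x)
    (hexpect : ∀ f e, 𝔼 x, w f e x ≤ if e ∈ G.cut f then q else 1) :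
    𝔼 ω : E → X, ∑ f : V → C with ∃ v w, f v ≠ f w, ∏ e, w f e (ω e) ≤
      2 * (Fintype.card V * ((Fintype.card C - 1) * q ^ (d / 2))) := by
  rw [expect_sum_comm]
  exact (sum_le_sum fun f _ ↦ G.expect_prod_le_pow_card_cut (hw f) (hexpect f)).trans
    (hG.sum_nonconstant_le_two_mul hq hsmall)

end NonconstantColourings

end Cuts

section RandomOrientation

variable {L : Type*}

/-- The random data attached to an edge: the end that counts towards the prescribed in-degrees,
and for each label the end, if any, to which the edge must be assigned under that label. -/
abbrev EdgeSample (L : Type*) : Type _ := Bool × (L → Option Bool)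

/-- The indicator that an edge is not forced, for both of its ends `v`, to be assigned to `v`
under the label `f v`. -/
noncomputable def conflictWeight (f : V → L) (e : E) (x : EdgeSample L) : ℝ :=
  if ∀ b, x.2 (f (G.endpt e b)) = some b then 0 else 1

lemma conflictWeight_nonneg (f : V → L) (e : E) (x : EdgeSample L) :
    0 ≤ G.conflictWeight f e x := by
  unfold conflictWeight
  positivity

lemma exists_conflict_of_prod_conflictWeight_lt_one [Fintype E] {f : V → L}
    {ω : E → EdgeSample L} (h : ∏ e, G.conflictWeight f e (ω e) < 1) :
    ∃ e, ∀ b, (ω e).2 (f (G.endpt e b)) = some b := by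
  by_contra! hnone
  refine h.ne (prod_eq_one fun e _ ↦ if_neg ?_)
  push Not
  exact hnone e

lemma expect_conflictWeight_le [Fintype E] [DecidableEq E] [Fintype L] [DecidableEq L]
    (f : V → L) (e : E) :
    𝔼 x, G.conflictWeight f e x ≤ if e ∈ G.cut f then 35 / 36 else 1 := by
  split_ifs with he
  · have hprod (x : EdgeSample L) : G.conflictWeight f e x = 1 -
        (if x.2 (f (G.endpt e false)) = some false then 1 else 0) *
          (if x.2 (f (G.endpt e true)) = some true then 1 else 0) := by
      simp only [conflictWeight, Bool.forall_bool]
      split_ifs <;> simp_all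
    have hindep := expect_comp_apply_mul_comp_apply
      (fun c : Option Bool ↦ if c = some false then (1 : ℝ) else 0)
      (fun c ↦ if c = some true then 1 else 0) (G.mem_cut.1 he)
    simp only [hprod, expect_sub_distrib, Fintype.expect_const]
    rw [← univ_product_univ, expect_product]
    simp only [hindep, Fintype.expect_const]
    norm_num [Fintype.expect_eq_sum_div_card]
  · exact expect_le univ_nonempty fun x _ ↦ by unfold conflictWeight; split_ifs <;> norm_num

variable [DecidableEq V]

/-- The ends to which the edge `e` may be assigned: a fixed one, or both if none is fixed. -/
def allowed (e : E) : Option Bool → Finset V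
  | none => {G.endpt e false, G.endpt e true}
  | some b => {G.endpt e b}

lemma allowed_nonempty (e : E) (x : Option Bool) : (G.allowed e x).Nonempty := by
  cases x <;> simp [allowed]

lemma allowed_subset_range (e : E) (x : Option Bool) :
    (G.allowed e x : Set V) ⊆ Set.range (G.endpt e) := by
  cases x with
  | none => simp [allowed]
  | some b => simpa only [allowed, coe_singleton, Set.singleton_subset_iff] using ⟨b, rfl⟩

/-- The factor contributed by an edge to `(3 / 2) ^ (a - b)`, where `a` is the number of edges that
must be assigned under the label `l` to the colour class `true` of `g`, and `b` is the total
prescribed in-degree of that class. Its mean is `5 / 6 * (7 / 6)` for an edge in `G.cut g`, and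
`1` otherwise. -/
noncomputable def hallWeight (l : L) (g : V → Bool) (e : E) (x : EdgeSample L) : ℝ :=
  (if g (G.endpt e x.1) then 2 / 3 else 1) *
    (if ∀ v ∈ G.allowed e (x.2 l), g v then 3 / 2 else 1)

lemma hallWeight_nonneg (l : L) (g : V → Bool) (e : E) (x : EdgeSample L) :
    0 ≤ G.hallWeight l g e x := by
  unfold hallWeight
  positivity

variable [Fintype E]

lemma card_allowed_lt_of_prod_hallWeight_lt_one {l : L} {g : V → Bool} {ω : E → EdgeSample L}
    (h : ∏ e, G.hallWeight l g e (ω e) < 1) :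
    #{e | ∀ v ∈ G.allowed e ((ω e).2 l), g v} < #{e | g (G.endpt e (ω e).1)} := by
  by_contra! hle
  refine h.not_ge ?_
  simp only [hallWeight, prod_mul_distrib, prod_ite, prod_const, one_pow, mul_one]
  set a := #{e | ∀ v ∈ G.allowed e ((ω e).2 l), g v}
  set b := #{e | g (G.endpt e (ω e).1)}
  calc (1 : ℝ) = (2 / 3) ^ b * (3 / 2) ^ b := by rw [← mul_pow]; norm_num
    _ ≤ (2 / 3) ^ b * (3 / 2) ^ a := by gcongr; norm_num

variable [Fintype L]

lemma expect_hallWeight_le [DecidableEq E] [DecidableEq L] (l : L) (g : V → Bool) (e : E) :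
    𝔼 x, G.hallWeight l g e x ≤ if e ∈ G.cut g then 35 / 36 else 1 := by
  have hindep : 𝔼 x, G.hallWeight l g e x =
      (𝔼 b, if g (G.endpt e b) then 2 / 3 else 1) *
        𝔼 c, if ∀ v ∈ G.allowed e c, g v then (3 / 2 : ℝ) else 1 := by
    rw [← expect_comp_apply (fun c ↦ if ∀ v ∈ G.allowed e c, g v then (3 / 2 : ℝ) else 1) l,
      Fintype.expect_mul_expect, ← expect_product', univ_product_univ]
    rfl
  rw [hindep]
  simp only [Fintype.expect_eq_sum_div_card, Fintype.sum_option, Fintype.sum_bool,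
    Fintype.card_option, Fintype.card_bool, mem_cut]
  cases hu : g (G.endpt e false) <;> cases hv : g (G.endpt e true) <;>
    norm_num [allowed, hu, hv]

variable [Fintype V] [DecidableEq L]

/-- The weights of all nonconstant colourings added up. If this is less than `1`, then so is each
of the weights, and `ω` determines the desired orientations. -/
noncomputable def failureWeight (ω : E → EdgeSample L) : ℝ :=
  ∑ l, (∑ g : V → Bool with ∃ v w, g v ≠ g w, ∏ e, G.hallWeight l g e (ω e)) +
    ∑ f : V → L with ∃ v w, f v ≠ f w, ∏ e, G.conflictWeight f e (ω e)

lemma prod_hallWeight_le_failureWeight (ω : E → EdgeSample L) (l : L) {g : V → Bool}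
    (hg : ∃ v w, g v ≠ g w) : ∏ e, G.hallWeight l g e (ω e) ≤ G.failureWeight ω := by
  have hweight (l : L) (g : V → Bool) : 0 ≤ ∏ e, G.hallWeight l g e (ω e) :=
    prod_nonneg fun e _ ↦ G.hallWeight_nonneg l g e _
  have hlabel := single_le_sum (s := {g : V → Bool | ∃ v w, g v ≠ g w})
    (f := fun g ↦ ∏ e, G.hallWeight l g e (ω e)) (fun g _ ↦ hweight l g)
    (mem_filter.2 ⟨mem_univ _, hg⟩)
  have hlabels := single_le_sum (s := univ)
    (f := fun l ↦ ∑ g : V → Bool with ∃ v w, g v ≠ g w, ∏ e, G.hallWeight l g e (ω e))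
    (fun l _ ↦ sum_nonneg fun g _ ↦ hweight l g) (mem_univ l)
  exact (hlabel.trans hlabels).trans <| le_add_of_nonneg_right <|
    sum_nonneg fun f _ ↦ prod_nonneg fun e _ ↦ G.conflictWeight_nonneg f e _

lemma prod_conflictWeight_le_failureWeight (ω : E → EdgeSample L) {f : V → L}
    (hf : ∃ v w, f v ≠ f w) : ∏ e, G.conflictWeight f e (ω e) ≤ G.failureWeight ω := by
  have hlabelling := single_le_sum (s := {f : V → L | ∃ v w, f v ≠ f w})
    (f := fun f ↦ ∏ e, G.conflictWeight f e (ω e))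
    (fun f _ ↦ prod_nonneg fun e _ ↦ G.conflictWeight_nonneg f e _)
    (mem_filter.2 ⟨mem_univ _, hf⟩)
  exact hlabelling.trans <| le_add_of_nonneg_left <| sum_nonneg fun l _ ↦
    sum_nonneg fun g _ ↦ prod_nonneg fun e _ ↦ G.hallWeight_nonneg l g e _

variable {G} in
lemma EdgeConnected.expect_failureWeight_lt_one [DecidableEq E] [Nonempty V] [Nonempty L] {d : ℝ}
    (hG : G.EdgeConnected d)
    (hsmall : 4 * (Fintype.card V * (Fintype.card L * (35 / 36 : ℝ) ^ (d / 2))) < 1) :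
    𝔼 ω : E → EdgeSample L, G.failureWeight ω < 1 := by
  have hq : (35 / 36 : ℝ) ∈ Set.Ioc (0 : ℝ) 1 := by norm_num
  have hpos : 0 < Fintype.card V * (35 / 36 : ℝ) ^ (d / 2) := by positivity
  have hL : (1 : ℝ) ≤ Fintype.card L := by exact_mod_cast Fintype.card_pos (α := L)
  have hhall (l : L) : 𝔼 ω : E → EdgeSample L,
      ∑ g : V → Bool with ∃ v w, g v ≠ g w, ∏ e, G.hallWeight l g e (ω e) ≤
        2 * (Fintype.card V * (35 / 36 : ℝ) ^ (d / 2)) := by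
    refine (hG.expect_sum_prod_le hq ?_ (G.hallWeight_nonneg l)
      (G.expect_hallWeight_le l)).trans_eq ?_
    · norm_num
      nlinarith
    · norm_num
  have hhallSum := sum_le_card_nsmul univ _ _ fun l _ ↦ hhall l
  have hconflict : 𝔼 ω : E → EdgeSample L,
      ∑ f : V → L with ∃ v w, f v ≠ f w, ∏ e, G.conflictWeight f e (ω e) ≤
        2 * (Fintype.card V * ((Fintype.card L - 1) * (35 / 36 : ℝ) ^ (d / 2))) :=
    hG.expect_sum_prod_le hq (by nlinarith) G.conflictWeight_nonneg G.expect_conflictWeight_le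
  rw [nsmul_eq_mul, card_univ] at hhallSum
  simp only [failureWeight, expect_add_distrib]
  rw [expect_sum_comm]
  nlinarith

end RandomOrientation

section RigidFamily

variable [Fintype E] [DecidableEq V] {L : Type*}

/-- Orientations `B l` of `G` (`B l e` is the end to which the edge `e` is assigned) with common
in-degrees, such that under every labelling `f` that is nonconstant on `U` some edge joins two
vertices of `U` and is assigned to each of its ends `v` by `B (f v)`. -/
structure IsRigidFamily (U : Finset V) (B : L → E → V) : Prop where
  mem_range : ∀ l e, B l e ∈ Set.range (G.endpt e)
  card_fiber_eq : ∀ v l l', #{e | B l e = v} = #{e | B l' e = v}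
  exists_conflict : ∀ f : V → L, (∃ v ∈ U, ∃ w ∈ U, f v ≠ f w) →
    ∃ e, G.endpt e false ≠ G.endpt e true ∧
      ∀ b, G.endpt e b ∈ U ∧ B (f (G.endpt e b)) e = G.endpt e b

variable {G}

lemma IsRigidFamily.forall_eq_iff_pairwise_disjoint {U : Finset V} {B : L → E → V}
    (hB : G.IsRigidFamily U B) (f : V → L) :
    (∀ v ∈ U, ∀ w ∈ U, f v = f w) ↔ (U : Set V).Pairwise fun v w ↦
      Disjoint (univ.filter fun e ↦ B (f v) e = v) (univ.filter fun e ↦ B (f w) e = w) := by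
  constructor
  · intro hf v hv w hw hvw
    rw [hf v hv w hw]
    exact disjoint_filter.2 fun e _ hev hew ↦ hvw (hev.symm.trans hew)
  · intro hdisj
    by_contra! hf
    obtain ⟨e, hne, he⟩ := hB.exists_conflict f hf
    exact disjoint_left.1 (hdisj (he false).1 (he true).1 hne) (by simpa using (he false).2)
      (by simpa using (he true).2)

lemma IsRigidFamily.exists_of_induce {U : Finset V} {B : L → {e // ∀ b, G.endpt e b ∈ U} → U}
    (hB : (G.induce U).IsRigidFamily univ B) : ∃ B' : L → E → V, G.IsRigidFamily U B' := by
  classical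
  let B' (l : L) (e : E) : V := if h : ∀ b, G.endpt e b ∈ U then B l ⟨e, h⟩ else G.endpt e false
  have hB' (l : L) (e : {e // ∀ b, G.endpt e b ∈ U}) : B' l e = B l e := dif_pos e.2
  refine ⟨B', fun l e ↦ ?_, fun v l l' ↦ ?_, fun f hf ↦ ?_⟩
  · by_cases h : ∀ b, G.endpt e b ∈ U
    · obtain ⟨b, hb⟩ := hB.mem_range l ⟨e, h⟩
      exact ⟨b, by rw [hB' l ⟨e, h⟩, ← hb]; rfl⟩
    · exact ⟨false, (dif_neg h : B' l e = _).symm⟩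
  · have hinside : ∑ e : {e // ∀ b, G.endpt e b ∈ U}, (if B' l e = v then 1 else 0) =
        ∑ e : {e // ∀ b, G.endpt e b ∈ U}, if B' l' e = v then 1 else 0 := by
      simp only [hB', ← card_filter]
      by_cases hv : v ∈ U
      · simpa only [Subtype.ext_iff] using hB.card_fiber_eq ⟨v, hv⟩ l l'
      · have hne (l : L) (e : {e // ∀ b, G.endpt e b ∈ U}) : (B l e : V) ≠ v :=
          fun h ↦ hv (h ▸ (B l e).2)
        simp [hne]
    have houtside : ∑ e : {e // ¬ ∀ b, G.endpt e b ∈ U}, (if B' l e = v then 1 else 0) =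
        ∑ e : {e // ¬ ∀ b, G.endpt e b ∈ U}, if B' l' e = v then 1 else 0 :=
      sum_congr rfl fun e _ ↦ by simp only [B', dif_neg e.2]
    rw [card_filter, card_filter, ← Fintype.sum_subtype_add_sum_subtype
      (fun e ↦ ∀ b, G.endpt e b ∈ U), hinside, houtside]
    exact Fintype.sum_subtype_add_sum_subtype _ fun e ↦ if B' l' e = v then 1 else 0
  · obtain ⟨v, hv, w, hw, hvw⟩ := hf
    obtain ⟨e, hne, he⟩ := hB.exists_conflict (fun v ↦ f v)
      ⟨⟨v, hv⟩, mem_univ _, ⟨w, hw⟩, mem_univ _, hvw⟩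
    refine ⟨e, fun h ↦ hne (Subtype.ext h), fun b ↦ ⟨e.2 b, ?_⟩⟩
    rw [hB']
    exact congrArg Subtype.val (he b).2

end RigidFamily

section RandomFamily

variable [Fintype E] [DecidableEq V] {L : Type*} {G}

/-- The weight bound for `g` is Hall's condition for the colour class `true` of `g`. -/
lemma exists_card_fiber_eq_of_prod_hallWeight_lt_one {l : L} {ω : E → EdgeSample L}
    (h : ∀ g : V → Bool, (∃ v w, g v ≠ g w) → ∏ e, G.hallWeight l g e (ω e) < 1) :
    ∃ B : E → V, (∀ e, B e ∈ G.allowed e ((ω e).2 l)) ∧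
      ∀ v, #{e | B e = v} = #{e | G.endpt e (ω e).1 = v} := by
  refine exists_mem_card_fiber_eq _ _ fun S ↦ ?_
  by_cases hS : ∃ v w, decide (v ∈ S) ≠ decide (w ∈ S)
  · simpa [subset_iff] using (G.card_allowed_lt_of_prod_hallWeight_lt_one (h _ hS)).le
  · simp only [ne_eq, decide_eq_decide, not_exists, not_not] at hS
    refine card_le_card fun e he ↦ ?_
    obtain ⟨v, hv⟩ := G.allowed_nonempty e ((ω e).2 l)
    simp only [mem_filter, mem_univ, true_and] at he ⊢
    exact (hS _ _).1 (he hv)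

variable [Fintype V] [Nonempty V] [Fintype L] [Nonempty L]

theorem EdgeConnected.exists_isRigidFamily {d : ℝ} (hG : G.EdgeConnected d)
    (hsmall : 4 * (Fintype.card V * (Fintype.card L * (35 / 36 : ℝ) ^ (d / 2))) < 1) :
    ∃ B : L → E → V, G.IsRigidFamily univ B := by
  classical
  obtain ⟨ω, -, hω⟩ := exists_lt_of_expect_lt univ_nonempty (hG.expect_failureWeight_lt_one hsmall)
  choose B hallowed hfiber using fun l ↦
    exists_card_fiber_eq_of_prod_hallWeight_lt_one (ω := ω) (l := l) fun g hg ↦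
      (G.prod_hallWeight_le_failureWeight ω l hg).trans_lt hω
  refine ⟨B, fun l e ↦ G.allowed_subset_range e _ (hallowed l e),
    fun v l l' ↦ (hfiber l v).trans (hfiber l' v).symm, fun f hf ↦ ?_⟩
  obtain ⟨e, he⟩ := G.exists_conflict_of_prod_conflictWeight_lt_one
    ((G.prod_conflictWeight_le_failureWeight ω (by simpa using hf)).trans_lt hω)
  have hforced (b : Bool) : B (f (G.endpt e b)) e = G.endpt e b := by
    simpa [he b, allowed] using hallowed (f (G.endpt e b)) e
  refine ⟨e, fun h ↦ ?_, fun b ↦ ⟨mem_univ _, hforced b⟩⟩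
  have := (he false).symm.trans ((congrArg (fun v ↦ (ω e).2 (f v)) h).trans (he true))
  simp at this

end RandomFamily

section DenseSubgraph

variable [Fintype E] [DecidableEq V]

/-- The edges with both ends in `U`. -/
def edgesIn (U : Finset V) : Finset E := {e | ∀ b, G.endpt e b ∈ U}

@[simp]
lemma mem_edgesIn {U : Finset V} {e : E} : e ∈ G.edgesIn U ↔ ∀ b, G.endpt e b ∈ U := by
  simp [edgesIn]

lemma card_edgesIn_le_sum_add_card_cut {U : Finset V} (g : U → Bool) :
    #(G.edgesIn U) ≤ ∑ c, #(G.edgesIn (({v | g v = c} : Finset U).map (.subtype (· ∈ U)))) +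
        #((G.induce U).cut g) := by
  classical
  have hcover : G.edgesIn U ⊆
      univ.biUnion (fun c ↦ G.edgesIn (({v | g v = c} : Finset U).map (.subtype (· ∈ U)))) ∪
        ((G.induce U).cut g).map (.subtype _) := by
    intro e he
    rw [mem_edgesIn] at he
    by_cases hg : g ⟨_, he false⟩ = g ⟨_, he true⟩
    · refine mem_union_left _ (mem_biUnion.2 ⟨g ⟨_, he true⟩, mem_univ _, ?_⟩)
      simp [he, hg]
    · exact mem_union_right _ (mem_map.2 ⟨⟨e, he⟩, (mem_cut _).2 hg, rfl⟩)
  calc #(G.edgesIn U) ≤ _ := card_le_card hcover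
    _ ≤ _ := (card_union_le _ _).trans
      (Nat.add_le_add card_biUnion_le (card_map _).le)

lemma edgeConnected_induce_of_forall_ssubset {d : ℝ} {U : Finset V}
    (hU : d * (#U - 1) < #(G.edgesIn U))
    (hsub : ∀ W ⊂ U, W.Nonempty → #(G.edgesIn W) ≤ d * (#W - 1)) :
    (G.induce U).EdgeConnected d := by
  rintro g ⟨v, w, hvw⟩
  let colorClass (c : Bool) : Finset V := ({v | g v = c} : Finset U).map (.subtype (· ∈ U))
  have hclass (x y : U) (hxy : g x ≠ g y) :
      #(G.edgesIn (colorClass (g x))) ≤ d * (#(colorClass (g x)) - 1) := by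
    refine hsub _ ((ssubset_iff_of_subset ?_).2 ⟨y, y.2, ?_⟩) ⟨x, ?_⟩
    · exact map_subtype_subset _
    · simp [colorClass, hxy.symm]
    · simp [colorClass]
  have hclass_all (c : Bool) : #(G.edgesIn (colorClass c)) ≤ d * (#(colorClass c) - 1) := by
    by_cases hc : g v = c
    · exact hc ▸ hclass v w hvw
    · have hw : g w = c := (Bool.eq_not.2 hvw.symm).trans (Bool.eq_not.2 (Ne.symm hc)).symm
      exact hw ▸ hclass w v hvw.symm
  have hcard : #(colorClass true) + #(colorClass false) = #U := by
    simpa [colorClass] using card_filter_add_card_filter_not (s := (univ : Finset U)) (g · = true)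
  have hcover := G.card_edgesIn_le_sum_add_card_cut g
  rw [Fintype.sum_bool] at hcover
  have hcover' : (#(G.edgesIn U) : ℝ) ≤ #(G.edgesIn (colorClass true)) +
      #(G.edgesIn (colorClass false)) + #((G.induce U).cut g) := by exact_mod_cast hcover
  rw [← hcard] at hU
  push_cast at hU
  linarith [hclass_all true, hclass_all false]

lemma exists_edgeConnected_induce [Fintype V] [Nonempty V]
    (hloop : ∀ e, G.endpt e false ≠ G.endpt e true) {d : ℝ}
    (hd : d * (Fintype.card V - 1) < Fintype.card E) :
    ∃ U : Finset V, 2 ≤ #U ∧ (G.induce U).EdgeConnected d := by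
  have hex : ∃ U : Finset V, U.Nonempty ∧ d * (#U - 1) < #(G.edgesIn U) :=
    ⟨univ, univ_nonempty, by simpa [edgesIn] using hd⟩
  obtain ⟨U, hU⟩ := exists_minimal_of_wellFoundedLT
    (fun U : Finset V ↦ U.Nonempty ∧ d * (#U - 1) < #(G.edgesIn U)) hex
  refine ⟨U, ?_, G.edgeConnected_induce_of_forall_ssubset hU.prop.2 fun W hW hne ↦ ?_⟩
  · by_contra! hcard
    have hone : #U = 1 := by have := hU.prop.1.card_pos; lia
    have hinside := hU.prop.2
    rw [hone, Nat.cast_one, sub_self, mul_zero, Nat.cast_pos] at hinside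
    obtain ⟨e, he⟩ := card_pos.1 hinside
    rw [mem_edgesIn] at he
    exact hloop e (card_le_one.1 hone.le _ (he false) _ (he true))
  · by_contra! hW'
    exact hU.not_prop_of_lt hW ⟨hne, hW'⟩

end DenseSubgraph

lemma exists_loopless_range_endpt_subset {T : E → Finset V} (hT : ∀ e, #(T e) = 2) :
    ∃ G : Multigraph V E, (∀ e, G.endpt e false ≠ G.endpt e true) ∧
      ∀ e, Set.range (G.endpt e) ⊆ T e := by
  classical
  choose u v huv hT using fun e ↦ card_eq_two.1 (hT e)
  exact ⟨⟨fun e b ↦ if b then v e else u e⟩, by simpa using huv, fun e ↦ by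
    simp [hT]⟩

end Multigraph

section Numerics

lemma natCast_le_exp_of_le_mul_div_log {s t : ℕ} {c : ℝ} (hs : 2 ≤ s) (ht : 0 < t)
    (h : (t : ℝ) ≤ c * s / Real.log s) : (s : ℝ) ≤ Real.exp (c * (s / t)) := by
  have hlog : 0 < Real.log s := Real.log_pos (by exact_mod_cast hs)
  have ht' : (0 : ℝ) < t := by exact_mod_cast ht
  rw [← Real.log_le_iff_le_exp (by positivity), ← mul_div_assoc]
  rwa [le_div_iff₀ hlog, mul_comm, ← le_div_iff₀ ht'] at h

lemma rpow_half_le_exp {x : ℝ} (hx : 0 ≤ x) : (35 / 36 : ℝ) ^ (x / 2) ≤ Real.exp (-(x / 72)) := by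
  rw [Real.rpow_def_of_pos (by norm_num), Real.exp_le_exp]
  nlinarith [Real.log_le_sub_one_of_pos (x := 35 / 36) (by norm_num)]

lemma natCeil_two_rpow_le {y : ℝ} (hy : 0 ≤ y) : (⌈(2 : ℝ) ^ y⌉₊ : ℝ) ≤ 2 * Real.exp y := by
  have hone : (1 : ℝ) ≤ 2 ^ y := Real.one_le_rpow one_le_two hy
  have hexp : (2 : ℝ) ^ y ≤ Real.exp y := by
    rw [← Real.exp_one_rpow]
    gcongr
    linarith [Real.add_one_le_exp 1]
  linarith [Nat.ceil_lt_add_one (by positivity : (0 : ℝ) ≤ 2 ^ y)]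

/-- Since `432 = 6 * 72`, the decay `(35 / 36) ^ (s / t / 2)` is at most `y ^ (-6)` for
`y = exp (s / (432 * t))`, while `n` and the number of labels are at most `y` and `2 * y`. -/
lemma four_mul_mul_natCeil_mul_rpow_lt_one {s t n : ℕ} (hs : 2 ≤ s) (ht : 0 < t)
    (h : (t : ℝ) ≤ 1 / 432 * s / Real.log s) (hn : n ≤ t) :
    4 * (n * (⌈(2 : ℝ) ^ (1 / 432 * (s : ℝ) / t)⌉₊ * (35 / 36 : ℝ) ^ ((s / t : ℝ) / 2))) < 1 := by
  set y := Real.exp (1 / 432 * (s / t))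
  have hsy : (s : ℝ) ≤ y := natCast_le_exp_of_le_mul_div_log hs ht h
  have hs' : (2 : ℝ) ≤ s := by exact_mod_cast hs
  have hlog : 1 / 432 ≤ Real.log s := by
    linarith [Real.log_two_gt_d9, Real.log_le_log two_pos hs']
  have hts : (t : ℝ) ≤ s := h.trans <| by
    rw [div_le_iff₀ (by linarith)]
    nlinarith
  have hny : (n : ℝ) ≤ y := (Nat.cast_le.2 hn).trans (hts.trans hsy)
  have hceil : (⌈(2 : ℝ) ^ (1 / 432 * (s : ℝ) / t)⌉₊ : ℝ) ≤ 2 * y := by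
    rw [mul_div_assoc]
    exact natCeil_two_rpow_le (by positivity)
  have hdecay : (35 / 36 : ℝ) ^ ((s / t : ℝ) / 2) ≤ (y ^ 6)⁻¹ := by
    refine (rpow_half_le_exp (by positivity)).trans_eq ?_
    rw [← Real.exp_nat_mul, ← Real.exp_neg]
    congr 1
    push_cast
    ring
  have hy2 : 2 ≤ y := hs'.trans hsy
  calc 4 * (n * (⌈(2 : ℝ) ^ (1 / 432 * (s : ℝ) / t)⌉₊ * (35 / 36 : ℝ) ^ ((s / t : ℝ) / 2)))
      ≤ 4 * (y * (2 * y * (y ^ 6)⁻¹)) := by gcongr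
    _ = 8 / y ^ 4 := by field_simp; norm_num
    _ ≤ 8 / 2 ^ 4 := by gcongr
    _ < 1 := by norm_num

end Numerics

/-- Claim: structure inside 2-shattered pairs: given `t ≤ c₁·s/ln s` and pairs
`T_j` of bidders, there exist `z ≥ 2^(c₂·s/t)` allocations `B⁽ˡ⁾` consistent with the pairs,
with each bidder receiving sets of a fixed size across the list, and a set `V` of bidders
such that a selection `f : V → [z]` yields pairwise disjoint received sets iff `f` is constant. -/
theorem structure_in_two_shattered :
    ∃ c₁ c₂ : ℝ, 0 < c₁ ∧ 0 < c₂ ∧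
      ∀ s t : ℕ, 2 ≤ s → 2 ≤ t → (t : ℝ) ≤ c₁ * s / Real.log s →
        ∀ T : Fin s → Finset (Fin t), (∀ j, (T j).card = 2) →
          ∃ z : ℕ, (2 : ℝ) ^ (c₂ * (s : ℝ) / (t : ℝ)) ≤ (z : ℝ) ∧
            ∃ B : Fin z → Fin s → Fin t,
              (∀ ℓ j, B ℓ j ∈ T j) ∧
              ∃ V : Finset (Fin t), 2 ≤ V.card ∧
                (∀ i : Fin t, ∀ ℓ ℓ' : Fin z,
                  (Finset.univ.filter fun x => B ℓ x = i).card =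
                    (Finset.univ.filter fun x => B ℓ' x = i).card) ∧
                (∀ f : Fin t → Fin z,
                  ((∀ i ∈ V, ∀ i' ∈ V, f i = f i') ↔
                    (↑V : Set (Fin t)).Pairwise fun i i' =>
                      Disjoint (Finset.univ.filter fun x => B (f i) x = i)
                        (Finset.univ.filter fun x => B (f i') x = i'))) := by
  refine ⟨1 / 432, 1 / 432, by norm_num, by norm_num, fun s t hs ht hts T hT ↦
    ⟨⌈(2 : ℝ) ^ (1 / 432 * (s : ℝ) / t)⌉₊, Nat.le_ceil _, ?_⟩⟩
  have : Nonempty (Fin ⌈(2 : ℝ) ^ (1 / 432 * (s : ℝ) / t)⌉₊) :=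
    Fin.pos_iff_nonempty.1 (Nat.ceil_pos.2 (by positivity))
  have : Nonempty (Fin t) := ⟨⟨0, by lia⟩⟩
  obtain ⟨G, hloop, hGT⟩ := Multigraph.exists_loopless_range_endpt_subset hT
  have hdense : (s / t : ℝ) * (Fintype.card (Fin t) - 1) < Fintype.card (Fin s) := by
    rw [Fintype.card_fin, Fintype.card_fin, mul_sub, mul_one, div_mul_cancel₀ _ (by positivity)]
    exact sub_lt_self _ (by positivity)
  obtain ⟨V, hV, hconn⟩ := G.exists_edgeConnected_induce hloop hdense
  have : Nonempty V := (Finset.card_pos.1 (by lia)).to_subtype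
  have hVt : Fintype.card V ≤ t := by simpa using V.card_le_univ
  obtain ⟨B', hB'⟩ := hconn.exists_isRigidFamily
    (L := Fin ⌈(2 : ℝ) ^ (1 / 432 * (s : ℝ) / t)⌉₊)
    (by simpa only [Fintype.card_fin] using
      four_mul_mul_natCeil_mul_rpow_lt_one hs (by lia) hts hVt)
  obtain ⟨B, hB⟩ := hB'.exists_of_induce
  exact ⟨B, fun ℓ j ↦ hGT j (hB.mem_range ℓ j), V, hV, hB.card_fiber_eq,
    hB.forall_eq_iff_pairwise_disjoint⟩
end

section
/- There exist universal constants c₁, c₂ > 0 such that the following holds. Let s ≥ 2 and t ≥ 2 be integers with t ≤ c₁ · s/ln(s), for each j ∈ [s] let T_j ⊆ [t] have exactly two elements, let V ⊆ [t] with |V| ≥ 2 and E ⊆ [s] with T_j ⊆ V for all j ∈ E, and let 𝒜' be a nonempty finite set of functions B : E → [t] with B(j) ∈ T_j for all j ∈ E. Assume that for every partition of V into r ≥ 2 nonempty parts, letting C be the set of j ∈ E whose two endpoints lie in different parts: (i) |C| ≥ (r−1)·s/(50t), and (ii) for every g : C → [t] with g(j) ∈ T_j, the number of B ∈ 𝒜'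 with B|_C = g is at most 2^{−(24/25)|C|} · |𝒜'|. Then, with z := ⌊2^{c₂·s/t}⌋, there exist B⁽¹⁾,…,B⁽ᶻ⁾ ∈ 𝒜' such that for every function f : V → [z], f is constant if and only if the sets {x ∈ E : B^{(f(i))}(x) = i}, for i ∈ V, are pairwise disjoint. -/
/-!
Choose the `B⁽ℓ⁾` independently and uniformly from `𝒜'`, and view the items of `E` as the edges of
a multigraph on `V`. If the selection of `f` is disjoint, an edge cut by `f` cannot be allocated to
its end `i` by `B⁽ᶠ⁽ⁱ⁾⁾` for both ends `i`, which leaves three of the four patterns. A fixed pattern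
prescribes each `B⁽ℓ⁾` on the boundary of the colour class of `ℓ`; these boundaries cover the cut of
`f` twice, so the pattern has probability at most `δ ^ (2 |cut f|)`, where `δ = 2 ^ (-24/25)`.
Hence `f` is disjoint with probability at most `(3 δ²) ^ |cut f| ≤ exp (-τ |cut f|)`.

The sum of `exp (-τ |cut f|)` over all colourings `f` is a Potts partition function. Among
multigraphs of strength `k` on `n + 1` vertices it is largest for a tree all of whose edges have
multiplicity `k`, where it equals `q (1 + (q - 1) exp (-k τ)) ^ n`. This goes by induction on `n`:
a colouring that does not cut an edge is a colouring of the graph with that edge contracted, so the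
`τ`-derivative of the partition function is expressed through the partition functions of the
contractions, and Grönwall's inequality applies, with equality at `τ = 0`. The constant colourings
contribute exactly `q`, and what remains is less than `1`.
-/

open Finset

/-- The edges cut by the colouring `f`, that is, whose two ends get different colours. A
multigraph with edge set `ι` and vertex set `V` is given by the two ends `a x`, `b x` of each edge
`x`; the orientation is irrelevant. -/
def cutEdges {ι V κ : Type*} [Fintype ι] [DecidableEq κ] (a b : ι → V) (f : V → κ) : Finset ι :=
  {x | f (a x) ≠ f (b x)}

/-- The multigraph has strength at least `k` in the sense of Tutte and Nash-Williams: a partition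
of the vertices into `r ≥ 2` nonempty parts cuts at least `(r - 1) k` edges. -/
def HasStrength {ι V : Type*} [Fintype ι] (a b : ι → V) (k : ℝ) : Prop :=
  ∀ r : ℕ, 2 ≤ r → ∀ P : V → Fin r, Function.Surjective P → (r - 1) * k ≤ #(cutEdges a b P)

section Cut

variable {ι V W κ : Type*} [Fintype ι] {a b : ι → V}

theorem mem_cutEdges [DecidableEq κ] {f : V → κ} {x : ι} :
    x ∈ cutEdges a b f ↔ f (a x) ≠ f (b x) := by
  simp [cutEdges]

theorem cutEdges_eq_empty_of_const [DecidableEq κ] {f : V → κ} (hf : ∀ i j, f i = f j) :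
    cutEdges a b f = ∅ :=
  filter_false_of_mem fun _ _ h => h (hf _ _)

theorem cutEdges_comp_injective {κ' : Type*} [DecidableEq κ] [DecidableEq κ'] {e : κ → κ'}
    (he : e.Injective) (f : V → κ) : cutEdges a b (e ∘ f) = cutEdges a b f := by
  ext x
  simp [mem_cutEdges, he.eq_iff]

theorem card_monochromatic_add_card_cutEdges [DecidableEq V] [DecidableEq κ] (f : V → κ) :
    #{x ∈ cutEdges a b id | f (a x) = f (b x)} + #(cutEdges a b f) = #(cutEdges a b id) := by
  have hcut : cutEdges a b f = {x ∈ cutEdges a b id | ¬f (a x) = f (b x)} := by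
    ext x
    simpa [mem_cutEdges] using mt (congrArg f)
  rw [hcut, card_filter_add_card_filter_not]

theorem HasStrength.comp_surjective {k : ℝ} (hk : HasStrength a b k) {π : V → W}
    (hπ : π.Surjective) : HasStrength (π ∘ a) (π ∘ b) k :=
  fun r hr P hP => hk r hr (P ∘ π) (hP.comp hπ)

theorem HasStrength.mul_le_card_edges [Fintype V] [DecidableEq V] {k : ℝ} {n : ℕ}
    (hk : HasStrength a b k) (hV : Fintype.card V = n + 2) :
    (n + 1) * k ≤ #(cutEdges a b id) := by
  let e := Fintype.equivFinOfCardEq hV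
  have hcut := hk (n + 2) (by lia) e e.surjective
  rw [← Function.comp_id e, cutEdges_comp_injective e.injective] at hcut
  push_cast at hcut
  linarith

end Cut

section Contract

variable {V κ : Type*} [DecidableEq V] {u v : V}

/-- The contraction of an edge `uv`: the vertex `v` is identified with `u` and all other vertices
are kept. -/
def contract (huv : u ≠ v) (y : V) : {y // y ≠ v} :=
  if hy : y = v then ⟨u, huv⟩ else ⟨y, hy⟩

theorem contract_coe (huv : u ≠ v) (y : {y // y ≠ v}) : contract huv y = y :=
  dif_neg y.2

theorem contract_left (huv : u ≠ v) : contract huv u = ⟨u, huv⟩ :=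
  dif_neg huv

theorem contract_right (huv : u ≠ v) : contract huv v = ⟨u, huv⟩ :=
  dif_pos rfl

theorem contract_surjective (huv : u ≠ v) : (contract huv).Surjective :=
  fun y => ⟨y, contract_coe huv y⟩

theorem sum_comp_contract {M : Type*} [AddCommMonoid M] [Fintype V] [Fintype κ] [DecidableEq κ]
    (huv : u ≠ v) (F : (V → κ) → M) :
    ∑ g : {y // y ≠ v} → κ, F (g ∘ contract huv) = ∑ f with f u = f v, F f := by
  refine sum_nbij' (· ∘ contract huv) (· ∘ Subtype.val) ?_ (fun _ _ => mem_univ _) ?_ ?_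
    fun _ _ => rfl
  · intro g _
    simp [contract_left, contract_right]
  · intro g _
    funext y
    simp [contract_coe]
  · intro f hf
    funext y
    rcases eq_or_ne y v with rfl | hy
    · simpa [contract_right] using hf
    · exact congrArg (f ∘ Subtype.val) (contract_coe huv ⟨y, hy⟩)

end Contract

section PartitionFunction

variable {ι κ : Type*} [Fintype ι] [Fintype κ] [DecidableEq κ]

/-- The partition function at inverse temperature `τ` of the Potts model with state space `κ` on
the multigraph with ends `a`, `b`: each cut edge costs a factor `exp (-τ)`. -/
noncomputable def pottsPartition {V : Type*} [Fintype V] [DecidableEq V] (κ : Type*) [Fintype κ]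
    [DecidableEq κ] (a b : ι → V) (τ : ℝ) : ℝ :=
  ∑ f : V → κ, Real.exp (-τ * #(cutEdges a b f))

/-- The value at `τ` of the `q`-state Potts partition function of a tree with `n` edges of
multiplicity `k`, the extremal graph among those of strength `k` on `n + 1` vertices. -/
noncomputable def treePartition (q : ℕ) (k : ℝ) (n : ℕ) (τ : ℝ) : ℝ :=
  q * (1 + (q - 1) * Real.exp (-k * τ)) ^ n

theorem treePartition_le_succ (q : ℕ) (k : ℝ) (n : ℕ) (τ : ℝ) :
    treePartition q k n τ ≤ treePartition q k (n + 1) τ := by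
  rcases q.eq_zero_or_pos with rfl | hq
  · simp [treePartition]
  have hbase : 0 ≤ ((q : ℝ) - 1) * Real.exp (-k * τ) :=
    mul_nonneg (sub_nonneg.mpr (mod_cast hq)) (Real.exp_pos _).le
  unfold treePartition
  gcongr
  · linarith
  · lia

theorem hasDerivAt_treePartition_succ (q : ℕ) (k : ℝ) (n : ℕ) (τ : ℝ) :
    HasDerivAt (treePartition q k (n + 1))
      (-((n + 1) * k) * (treePartition q k (n + 1) τ - treePartition q k n τ)) τ := by
  have hexp : HasDerivAt (fun τ => Real.exp (-k * τ)) (Real.exp (-k * τ) * -k) τ := by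
    simpa using ((hasDerivAt_id τ).const_mul (-k)).exp
  refine ((((hexp.const_mul ((q : ℝ) - 1)).const_add 1).pow (n + 1)).const_mul
    (q : ℝ)).congr_deriv ?_
  simp only [treePartition, Nat.add_sub_cancel]
  push_cast
  ring

variable {V : Type*} [Fintype V] [DecidableEq V] {a b : ι → V}

theorem hasDerivAt_pottsPartition (a b : ι → V) (τ : ℝ) :
    HasDerivAt (pottsPartition κ a b)
      (∑ f : V → κ, Real.exp (-τ * #(cutEdges a b f)) * -#(cutEdges a b f)) τ := by
  refine HasDerivAt.fun_sum fun f _ => ?_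
  simpa using ((hasDerivAt_id τ).neg.mul_const (#(cutEdges a b f) : ℝ)).exp

theorem pottsPartition_contract {u v : V} (huv : u ≠ v) (a b : ι → V) (τ : ℝ) :
    pottsPartition κ (contract huv ∘ a) (contract huv ∘ b) τ =
      ∑ f : V → κ with f u = f v, Real.exp (-τ * #(cutEdges a b f)) :=
  sum_comp_contract huv fun f => Real.exp (-τ * #(cutEdges a b f))

theorem sum_edges_sum_monochromatic (a b : ι → V) (w : (V → κ) → ℝ) :
    ∑ x ∈ cutEdges a b id, ∑ f with f (a x) = f (b x), w f =
      ∑ f, w f * (#(cutEdges a b id) - #(cutEdges a b f)) := by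
  simp_rw [sum_filter]
  rw [sum_comm]
  refine sum_congr rfl fun f _ => ?_
  rw [← sum_filter, sum_const, nsmul_eq_mul, ← card_monochromatic_add_card_cutEdges f]
  push_cast
  ring

theorem sum_exp_mul_neg_card_cutEdges_le {τ M : ℝ}
    (hM : ∀ x (hx : a x ≠ b x), pottsPartition κ (contract hx ∘ a) (contract hx ∘ b) τ ≤ M) :
    ∑ f : V → κ, Real.exp (-τ * #(cutEdges a b f)) * -#(cutEdges a b f) ≤
      #(cutEdges a b id) * (M - pottsPartition κ a b τ) := by
  have hsum : ∑ x ∈ cutEdges a b id, ∑ f : V → κ with f (a x) = f (b x),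
      Real.exp (-τ * #(cutEdges a b f)) ≤ #(cutEdges a b id) * M := by
    rw [← nsmul_eq_mul]
    refine sum_le_card_nsmul _ _ _ fun x hx => ?_
    have hne : a x ≠ b x := mem_cutEdges.mp hx
    rw [← pottsPartition_contract hne]
    exact hM x hne
  rw [sum_edges_sum_monochromatic] at hsum
  simp only [mul_sub, sum_sub_distrib, ← sum_mul] at hsum
  rw [mul_sub, pottsPartition]
  simp only [mul_neg, sum_neg_distrib]
  linarith

theorem nonpos_of_hasDerivAt_le_mul {D D' : ℝ → ℝ} {K τ₀ : ℝ} (hD : ∀ τ, HasDerivAt D (D' τ) τ)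
    (h₀ : D τ₀ ≤ 0) (hD' : ∀ τ, τ₀ ≤ τ → D' τ ≤ K * D τ) {τ : ℝ} (hτ : τ₀ ≤ τ) : D τ ≤ 0 := by
  have hgronwall := le_gronwallBound_of_liminf_deriv_right_le (ε := 0) (b := τ)
    (fun σ _ => (hD σ).continuousAt.continuousWithinAt)
    (fun σ _ _ => (hD σ).hasDerivWithinAt.liminf_right_slope_le) h₀
    (fun σ hσ => by simpa using hD' σ hσ.1) τ ⟨hτ, le_rfl⟩
  rwa [gronwallBound_ε0_δ0] at hgronwall

theorem pottsPartition_zero (a b : ι → V) :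
    pottsPartition κ a b 0 = (Fintype.card κ : ℝ) ^ Fintype.card V := by
  simp [pottsPartition]

theorem treePartition_zero (q : ℕ) (k : ℝ) (n : ℕ) : treePartition q k n 0 = (q : ℝ) ^ (n + 1) := by
  simp [treePartition, pow_succ']

theorem pottsPartition_le_treePartition_succ {k : ℝ} {n : ℕ} (hk : HasStrength a b k)
    (hV : Fintype.card V = n + 2)
    (hcontract : ∀ τ, 0 ≤ τ → ∀ x (hx : a x ≠ b x),
      pottsPartition κ (contract hx ∘ a) (contract hx ∘ b) τ ≤
        treePartition (Fintype.card κ) k n τ)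
    {τ : ℝ} (hτ : 0 ≤ τ) :
    pottsPartition κ a b τ ≤ treePartition (Fintype.card κ) k (n + 1) τ := by
  refine sub_nonpos.mp (nonpos_of_hasDerivAt_le_mul (K := -#(cutEdges a b id))
    (D := fun τ => pottsPartition κ a b τ - treePartition (Fintype.card κ) k (n + 1) τ)
    (fun τ => (hasDerivAt_pottsPartition a b τ).sub (hasDerivAt_treePartition_succ _ k n τ))
    ?_ (fun τ hτ => ?_) hτ)
  · simp [pottsPartition_zero, treePartition_zero, hV]
  · have hpotts := sum_exp_mul_neg_card_cutEdges_le (hcontract τ hτ)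
    have htree := mul_le_mul_of_nonneg_right (hk.mul_le_card_edges hV)
      (sub_nonneg.mpr (treePartition_le_succ (Fintype.card κ) k n τ))
    linarith

end PartitionFunction

theorem pottsPartition_le_treePartition {ι V κ : Type*} [Fintype ι] [Fintype κ] [DecidableEq κ]
    [Fintype V] [DecidableEq V] {a b : ι → V} {k : ℝ} {n : ℕ} (hk : HasStrength a b k)
    (hV : Fintype.card V = n + 1) {τ : ℝ} (hτ : 0 ≤ τ) :
    pottsPartition κ a b τ ≤ treePartition (Fintype.card κ) k n τ := by
  induction n generalizing V τ with
  | zero =>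
    have hsub : Subsingleton V := Fintype.card_le_one_iff_subsingleton.mp hV.le
    have hcut (f : V → κ) : cutEdges a b f = ∅ :=
      cutEdges_eq_empty_of_const fun i j => congrArg f (Subsingleton.elim i j)
    simp [pottsPartition, treePartition, hcut, hV]
  | succ n ih =>
    refine pottsPartition_le_treePartition_succ hk hV (fun τ hτ x hx => ?_) hτ
    have hcard : Fintype.card {y // y ≠ b x} = n + 1 := by
      rw [Fintype.card_subtype_compl, Fintype.card_subtype_eq]
      lia
    exact ih (hk.comp_surjective (contract_surjective hx)) hcard hτ

section Counting

variable {ι V κ : Type*} {a b : ι → V}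

/-- Each edge `x` is allocated to one of its two ends; equivalently, `B` orients the multigraph. -/
def IsAllocation (a b B : ι → V) : Prop :=
  ∀ x, B x = a x ∨ B x = b x

/-- The selection `f`, which hands to each vertex `i` the set of edges that the allocation
`B (f i)` gives to `i`, hands out no edge twice. -/
def IsFeasible (B : κ → ι → V) (f : V → κ) : Prop :=
  Pairwise fun i j => Disjoint {x | B (f i) x = i} {x | B (f j) x = j}

/-- Among the allocations in `A`, prescribing the values on the cut of a bipartition costs at
least a factor `δ` per cut edge. -/
def IsCutSpread [Fintype ι] [DecidableEq V] (a b : ι → V) (A : Finset (ι → V)) (δ : ℝ) : Prop :=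
  ∀ P : V → Fin 2, ∀ B₀ ∈ A,
    (#{B ∈ A | ∀ x ∈ cutEdges a b P, B x = B₀ x} : ℝ) ≤ δ ^ #(cutEdges a b P) * #A

theorem isFeasible_of_const (B : κ → ι → V) {f : V → κ} (hf : ∀ i j, f i = f j) :
    IsFeasible B f := by
  intro i j hij
  rw [Set.disjoint_left]
  intro x hi hj
  rw [Set.mem_ofPred_eq, hf i j] at hi
  exact hij (hi.symm.trans hj)

theorem IsFeasible.ne_left_or_ne_right {B : κ → ι → V} {f : V → κ} (hB : IsFeasible B f) {x : ι}
    (hx : a x ≠ b x) : B (f (a x)) x ≠ a x ∨ B (f (b x)) x ≠ b x :=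
  not_and_or.mp fun h => Set.disjoint_left.mp (hB hx) h.1 h.2

variable [DecidableEq κ]

/-- The bipartition of the vertices into the colour class of `ℓ` and its complement. -/
def colourClass (f : V → κ) (ℓ : κ) (i : V) : Fin 2 :=
  if f i = ℓ then 0 else 1

theorem colourClass_ne_iff {f : V → κ} {ℓ : κ} {i j : V} :
    colourClass f ℓ i ≠ colourClass f ℓ j ↔ f i ≠ f j ∧ (ℓ = f i ∨ ℓ = f j) := by
  unfold colourClass
  split_ifs <;> grind

variable [Fintype ι]

theorem IsFeasible.mk_mem [DecidableEq V] {B : κ → ι → V} {f : V → κ} (hf : IsFeasible B f)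
    (hB : ∀ ℓ, IsAllocation a b (B ℓ)) {x : ι} (hx : x ∈ cutEdges a b f) :
    (B (f (a x)) x, B (f (b x)) x) ∈ ({(a x, a x), (b x, a x), (b x, b x)} : Finset (V × V)) := by
  have hne : a x ≠ b x := fun h => mem_cutEdges.mp hx (congrArg f h)
  have hfeasible := hf.ne_left_or_ne_right hne
  have hleft := hB (f (a x)) x
  have hright := hB (f (b x)) x
  simp only [mem_insert, mem_singleton, Prod.mk.injEq]
  tauto

variable [Fintype κ]

theorem sum_card_cutEdges_colourClass (a b : ι → V) (f : V → κ) :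
    ∑ ℓ, #(cutEdges a b (colourClass f ℓ)) = 2 * #(cutEdges a b f) := by
  have hclasses (x : ι) : #{ℓ | colourClass f ℓ (a x) ≠ colourClass f ℓ (b x)} =
      2 * if f (a x) ≠ f (b x) then 1 else 0 := by
    simp only [colourClass_ne_iff]
    split_ifs with hx
    · rw [mul_one, ← card_pair hx]
      congr 1
      ext ℓ
      simp [hx]
    · simp [hx]
  simp only [cutEdges, card_filter, mul_sum] at hclasses ⊢
  rw [sum_comm]
  exact sum_congr rfl fun x _ => hclasses x

variable [DecidableEq V] {A : Finset (ι → V)} {δ : ℝ}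

theorem IsCutSpread.card_filter_agree_le (hspread : IsCutSpread a b A δ) (f : V → κ)
    {B₀ : κ → ι → V} (hB₀ : ∀ ℓ, B₀ ℓ ∈ A) :
    (#{B ∈ Fintype.piFinset fun _ : κ => A | ∀ x ∈ cutEdges a b f,
        B (f (a x)) x = B₀ (f (a x)) x ∧ B (f (b x)) x = B₀ (f (b x)) x} : ℝ) ≤
      (δ ^ 2) ^ #(cutEdges a b f) * (#A : ℝ) ^ Fintype.card κ := by
  have hsub : {B ∈ Fintype.piFinset fun _ : κ => A | ∀ x ∈ cutEdges a b f,
        B (f (a x)) x = B₀ (f (a x)) x ∧ B (f (b x)) x = B₀ (f (b x)) x} ⊆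
      Fintype.piFinset fun ℓ =>
        {B ∈ A | ∀ x ∈ cutEdges a b (colourClass f ℓ), B x = B₀ ℓ x} := by
    intro B hB
    simp only [mem_filter, Fintype.mem_piFinset] at hB ⊢
    refine fun ℓ => ⟨hB.1 ℓ, fun x hx => ?_⟩
    obtain ⟨hne, rfl | rfl⟩ := colourClass_ne_iff.mp (mem_cutEdges.mp hx)
    · exact (hB.2 x (mem_cutEdges.mpr hne)).1
    · exact (hB.2 x (mem_cutEdges.mpr hne)).2
  calc _ ≤ ∏ ℓ, (#{B ∈ A | ∀ x ∈ cutEdges a b (colourClass f ℓ), B x = B₀ ℓ x} : ℝ) := by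
        rw [← Nat.cast_prod, ← Fintype.card_piFinset]
        exact_mod_cast card_le_card hsub
    _ ≤ ∏ ℓ, δ ^ #(cutEdges a b (colourClass f ℓ)) * (#A : ℝ) :=
        prod_le_prod (fun _ _ => Nat.cast_nonneg _)
          fun ℓ _ => hspread (colourClass f ℓ) (B₀ ℓ) (hB₀ ℓ)
    _ = (δ ^ 2) ^ #(cutEdges a b f) * (#A : ℝ) ^ Fintype.card κ := by
        rw [prod_mul_distrib, prod_pow_eq_pow_sum, sum_card_cutEdges_colourClass, pow_mul,
          prod_const, card_univ]

theorem IsCutSpread.card_isFeasible_le (hspread : IsCutSpread a b A δ)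
    (hA : ∀ B ∈ A, IsAllocation a b B) (f : V → κ)
    [DecidablePred fun B : κ → ι → V => IsFeasible B f] :
    (#{B ∈ Fintype.piFinset fun _ : κ => A | IsFeasible B f} : ℝ) ≤
      (3 * δ ^ 2) ^ #(cutEdges a b f) * (#A : ℝ) ^ Fintype.card κ := by
  let := Classical.decEq (cutEdges a b f)
  let pattern (B : κ → ι → V) (x : cutEdges a b f) : V × V := (B (f (a x)) x, B (f (b x)) x)
  let patterns : Finset (cutEdges a b f → V × V) :=
    Fintype.piFinset fun x => {(a x, a x), (b x, a x), (b x, b x)}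
  have hmaps : ∀ B ∈ {B ∈ Fintype.piFinset fun _ : κ => A | IsFeasible B f},
      pattern B ∈ patterns := by
    intro B hB
    rw [mem_filter, Fintype.mem_piFinset] at hB
    exact Fintype.mem_piFinset.mpr fun x => hB.2.mk_mem (fun ℓ => hA _ (hB.1 ℓ)) x.2
  have hcard : #patterns ≤ 3 ^ #(cutEdges a b f) := by
    rw [Fintype.card_piFinset, ← Fintype.card_coe (cutEdges a b f), ← card_univ]
    exact prod_le_pow_card _ _ _ fun x _ => card_le_three
  have hfiber : ∀ u ∈ patterns,
      (#{B ∈ {B ∈ Fintype.piFinset fun _ : κ => A | IsFeasible B f} | pattern B = u} : ℝ) ≤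
        (δ ^ 2) ^ #(cutEdges a b f) * (#A : ℝ) ^ Fintype.card κ := by
    intro u _
    obtain hempty | ⟨B₀, hB₀⟩ := eq_empty_or_nonempty
      {B ∈ {B ∈ Fintype.piFinset fun _ : κ => A | IsFeasible B f} | pattern B = u}
    · rw [hempty, card_empty, Nat.cast_zero]
      positivity
    simp only [mem_filter, Fintype.mem_piFinset] at hB₀
    refine le_trans (mod_cast card_le_card fun B hB => ?_)
      (hspread.card_filter_agree_le f hB₀.1.1)
    rw [mem_filter, mem_filter] at hB
    have hpattern := hB.2.trans hB₀.2.symm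
    exact mem_filter.mpr ⟨hB.1.1, fun x hx => Prod.mk.inj (congrFun hpattern ⟨x, hx⟩)⟩
  calc _ ≤ #patterns * ((δ ^ 2) ^ #(cutEdges a b f) * (#A : ℝ) ^ Fintype.card κ) := by
        rw [card_eq_sum_card_fiberwise hmaps, Nat.cast_sum, ← nsmul_eq_mul]
        exact sum_le_card_nsmul _ _ _ hfiber
    _ ≤ 3 ^ #(cutEdges a b f) *
          ((δ ^ 2) ^ #(cutEdges a b f) * (#A : ℝ) ^ Fintype.card κ) := by
        gcongr
        exact_mod_cast hcard
    _ = (3 * δ ^ 2) ^ #(cutEdges a b f) * (#A : ℝ) ^ Fintype.card κ := by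
        rw [mul_pow, mul_assoc]

end Counting

section Existence

variable {ι V κ : Type*} [Fintype ι] [Fintype V] [DecidableEq V] [Fintype κ]
  {a b : ι → V}

theorem card_add_sum_not_const_eq_pottsPartition [DecidableEq κ] [Nonempty V] (a b : ι → V)
    (τ : ℝ) :
    Fintype.card κ + ∑ f : V → κ with ¬∀ i j, f i = f j, Real.exp (-τ * #(cutEdges a b f)) =
      pottsPartition κ a b τ := by
  have hconst : ({f : V → κ | ∀ i j, f i = f j} : Finset (V → κ)) =
      univ.map ⟨Function.const V, Function.const_injective⟩ := by
    ext f
    simp only [mem_filter, mem_univ, true_and, mem_map, Function.Embedding.coeFn_mk]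
    refine ⟨fun hf => ⟨f (Classical.arbitrary V), funext fun i => hf _ i⟩, ?_⟩
    rintro ⟨ℓ, rfl⟩ _ _
    rfl
  have hweight : ∑ f : V → κ with ∀ i j, f i = f j, Real.exp (-τ * #(cutEdges a b f)) =
      Fintype.card κ := by
    rw [hconst, sum_map]
    simp [cutEdges]
  rw [← hweight, sum_filter_add_sum_filter_not, pottsPartition]

theorem exists_forall_isFeasible_imp_const [Nonempty V] {A : Finset (ι → V)} {k δ τ : ℝ}
    (hA₀ : A.Nonempty) (hA : ∀ B ∈ A, IsAllocation a b B) (hk : HasStrength a b k)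
    (hspread : IsCutSpread a b A δ) (hτ : 0 ≤ τ) (hδ : 3 * δ ^ 2 ≤ Real.exp (-τ))
    (hlt : treePartition (Fintype.card κ) k (Fintype.card V - 1) τ < Fintype.card κ + 1) :
    ∃ B : κ → ι → V, (∀ ℓ, B ℓ ∈ A) ∧ ∀ f, IsFeasible B f → ∀ i j, f i = f j := by
  classical
  have hweight : ∑ f : V → κ with ¬∀ i j, f i = f j, Real.exp (-τ * #(cutEdges a b f)) < 1 := by
    have hpotts := pottsPartition_le_treePartition (κ := κ) hk
      (Nat.sub_add_cancel Fintype.card_pos).symm hτ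
    linarith [card_add_sum_not_const_eq_pottsPartition (κ := κ) a b τ]
  have hfeasible (f : V → κ) : (#{B ∈ Fintype.piFinset fun _ : κ => A | IsFeasible B f} : ℝ) ≤
      Real.exp (-τ * #(cutEdges a b f)) * (#A : ℝ) ^ Fintype.card κ := by
    refine (hspread.card_isFeasible_le hA f).trans ?_
    rw [mul_comm (-τ), Real.exp_nat_mul]
    gcongr
  have hcard : #(({f : V → κ | ¬∀ i j, f i = f j} : Finset (V → κ)).biUnion fun f =>
      {B ∈ Fintype.piFinset fun _ : κ => A | IsFeasible B f}) <
        #(Fintype.piFinset fun _ : κ => A) := by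
    rw [Fintype.card_piFinset, prod_const, card_univ, ← Nat.cast_lt (α := ℝ), Nat.cast_pow]
    calc _ ≤ ∑ f : V → κ with ¬∀ i j, f i = f j,
          (#{B ∈ Fintype.piFinset fun _ : κ => A | IsFeasible B f} : ℝ) :=
          mod_cast card_biUnion_le
      _ ≤ ∑ f : V → κ with ¬∀ i j, f i = f j,
          Real.exp (-τ * #(cutEdges a b f)) * (#A : ℝ) ^ Fintype.card κ :=
          sum_le_sum fun f _ => hfeasible f
      _ < (#A : ℝ) ^ Fintype.card κ := by
          rw [← sum_mul]
          exact mul_lt_of_lt_one_left (by have := hA₀.card_pos; positivity) hweight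
  obtain ⟨B, hBA, hB⟩ := exists_mem_notMem_of_card_lt_card hcard
  refine ⟨B, Fintype.mem_piFinset.mp hBA, fun f hf => ?_⟩
  by_contra hconst
  exact hB (mem_biUnion.mpr
    ⟨f, mem_filter.mpr ⟨mem_univ f, hconst⟩, mem_filter.mpr ⟨hBA, hf⟩⟩)

end Existence

section Numerics

theorem three_mul_sq_two_rpow_le_exp :
    3 * ((2 : ℝ) ^ (-(24 / 25) : ℝ)) ^ 2 ≤ Real.exp (-(Real.log 2 / 4)) := by
  have hlog : Real.log 3 ≤ 8 / 5 * Real.log 2 := by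
    have hpow : Real.log (3 ^ 5) ≤ Real.log (2 ^ 8) := Real.log_le_log (by norm_num) (by norm_num)
    rw [Real.log_pow, Real.log_pow] at hpow
    push_cast at hpow
    linarith
  have hlog_pos : 0 < Real.log 2 := Real.log_pos one_lt_two
  calc 3 * ((2 : ℝ) ^ (-(24 / 25) : ℝ)) ^ 2
      = Real.exp (Real.log 3 - 48 / 25 * Real.log 2) := by
        rw [Real.rpow_def_of_pos two_pos, ← Real.exp_nat_mul, sub_eq_add_neg, Real.exp_add,
          Real.exp_log three_pos]
        ring_nf
    _ ≤ Real.exp (-(Real.log 2 / 4)) := Real.exp_le_exp.mpr (by linarith)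

theorem mul_one_add_pow_lt {q x : ℝ} {n : ℕ} (hq : 1 ≤ q) (hx : 0 ≤ x) (h : n * q ^ 2 * x < 1) :
    q * (1 + (q - 1) * x) ^ n < q + 1 := by
  set u := n * ((q - 1) * x) with hu
  have hpow : (1 + (q - 1) * x) ^ n ≤ Real.exp u := by
    rw [hu, Real.exp_nat_mul]
    refine pow_le_pow_left₀ (add_nonneg zero_le_one (mul_nonneg (sub_nonneg.mpr hq) hx)) ?_ n
    exact (add_comm _ _).trans_le (Real.add_one_le_exp _)
  have hinv : (1 - u) * Real.exp u ≤ 1 := by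
    rw [← le_div_iff₀ (Real.exp_pos u), one_div, ← Real.exp_neg]
    exact Real.one_sub_le_exp_neg u
  have hsmall : q < (q + 1) * (1 - u) := by
    have : (q + 1) * u ≤ n * q ^ 2 * x := by
      have : 0 ≤ n * x := by positivity
      rw [hu]
      linarith
    linarith
  calc q * (1 + (q - 1) * x) ^ n ≤ q * Real.exp u := by gcongr
    _ < (q + 1) * (1 - u) * Real.exp u := by gcongr
    _ ≤ q + 1 := by rw [mul_assoc]; exact mul_le_of_le_one_right (by linarith) hinv

theorem treePartition_lt_add_one {s t : ℝ} {q n : ℕ} (hs : 2 ≤ s) (ht : 0 < t)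
    (hst : t ≤ 1 / 3200 * s / Real.log s) (hn : n ≤ t)
    (hq : q ≤ (2 : ℝ) ^ (1 / 800 * s / t)) :
    treePartition q (s / (50 * t)) n (Real.log 2 / 4) < q + 1 := by
  rcases q.eq_zero_or_pos with rfl | hq₀
  · simp [treePartition]
  refine mul_one_add_pow_lt (mod_cast hq₀) (Real.exp_pos _).le ?_
  have hlog2 : 1 / 2 < Real.log 2 := by linarith [Real.log_two_gt_d9]
  have hlog : Real.log 2 ≤ Real.log s := Real.log_le_log two_pos hs
  have hratio : 3200 * Real.log s ≤ s / t := by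
    rw [le_div_iff₀ (by linarith)] at hst
    rw [le_div_iff₀ ht]
    linarith
  have hts : t < s := by
    rw [← one_lt_div ht]
    linarith
  calc n * (q : ℝ) ^ 2 * Real.exp (-(s / (50 * t)) * (Real.log 2 / 4))
      ≤ t * ((2 : ℝ) ^ (1 / 800 * s / t)) ^ 2 *
          Real.exp (-(s / (50 * t)) * (Real.log 2 / 4)) := by gcongr
    _ = t * Real.exp (-(Real.log 2 / 400 * (s / t))) := by
        -- `q ^ 2` uses up half of the decay: `1 / 200 - 2 / 800 = 1 / 400`.
        rw [Real.rpow_def_of_pos two_pos, ← Real.exp_nat_mul, mul_assoc, ← Real.exp_add]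
        congr 2
        field_simp
        ring
    _ ≤ t * Real.exp (-Real.log s) := by
        gcongr
        nlinarith
    _ = t / s := by rw [Real.exp_neg, Real.exp_log (by linarith), div_eq_mul_inv]
    _ < 1 := (div_lt_one (by linarith)).mpr hts

end Numerics

section Instance

variable {ι α : Type*}

/-- The items of `E` whose two possible recipients lie in different parts of the partition `P`. -/
def crossingItems {r : ℕ} (T : ι → Finset α) (E : Finset ι) (P : α → Fin r) : Finset ι :=
  E.filter fun j => ∃ a ∈ T j, ∃ b ∈ T j, P a ≠ P b

theorem crossingItems_eq_filter {r : ℕ} (T : ι → Finset α) (E : Finset ι) (P : α → Fin r)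
    [DecidablePred fun j => ∃ a ∈ T j, ∃ b ∈ T j, P a ≠ P b] :
    crossingItems T E P = E.filter fun j => ∃ a ∈ T j, ∃ b ∈ T j, P a ≠ P b := by
  unfold crossingItems
  congr

theorem exists_ends {T : ι → Finset α} {V : Finset α} {E : Finset ι} (hT : ∀ j ∈ E, #(T j) = 2)
    (hE : ∀ j ∈ E, T j ⊆ V) :
    ∃ a b : E → V, ∀ x, a x ≠ b x ∧ ∀ i, i ∈ T x ↔ i = a x ∨ i = b x := by
  have hends (x : E) : ∃ p : V × V, p.1 ≠ p.2 ∧ ∀ i, i ∈ T x ↔ i = p.1 ∨ i = p.2 := by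
    classical
    obtain ⟨u, v, huv, huvT⟩ := card_eq_two.mp (hT x x.2)
    have hsub : {u, v} ⊆ V := huvT ▸ hE x x.2
    exact ⟨⟨⟨u, hsub (by simp)⟩, ⟨v, hsub (by simp)⟩⟩, by simpa using huv, by simp [huvT]⟩
  choose p hp using hends
  exact ⟨fun x => (p x).1, fun x => (p x).2, hp⟩

theorem crossingItems_eq_map_cutEdges {T : ι → Finset α} {V : Finset α} {E : Finset ι}
    {a b : E → V} (hab : ∀ (x : E) i, i ∈ T x ↔ i = a x ∨ i = b x) {r : ℕ} (P : α → Fin r) :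
    crossingItems T E P =
      (cutEdges a b (P ∘ Subtype.val)).map (Function.Embedding.subtype (· ∈ E)) := by
  ext j
  simp only [crossingItems, mem_filter, mem_map, mem_cutEdges, Function.Embedding.coe_subtype,
    Subtype.exists, Function.comp_apply, exists_and_right, exists_eq_right]
  rw [← exists_prop]
  refine exists_congr fun hj => ?_
  simp only [hab ⟨j, hj⟩]
  grind

theorem ncard_eq_card_filter_coe_mem {V : Finset α} [Fintype ι] [DecidableEq ι]
    {S : Set (ι → α)} (hS : ∀ B ∈ S, ∀ x, B x ∈ V)
    [DecidablePred fun B : ι → V => (fun x => (B x : α)) ∈ S] :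
    S.ncard = #{B : ι → V | (fun x => (B x : α)) ∈ S} := by
  have hinj : Function.Injective fun (B : ι → V) x => (B x : α) :=
    Subtype.val_injective.comp_left
  have hrange : S ⊆ Set.range fun (B : ι → V) x => (B x : α) :=
    fun B hB => ⟨fun x => ⟨B x, hS B hB x⟩, rfl⟩
  rw [← Set.ncard_preimage_of_injective_subset_range hinj hrange, ← Set.ncard_coe_finset,
    coe_filter_univ]
  rfl

variable {T : ι → Finset α} {V : Finset α} {E : Finset ι} {a b : E → V}

theorem hasStrength_of_crossingItems (hab : ∀ (x : E) i, i ∈ T x ↔ i = a x ∨ i = b x) {k : ℝ}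
    (hcut : ∀ r : ℕ, 2 ≤ r → ∀ P : α → Fin r, (∀ p, ∃ i ∈ V, P i = p) →
      (r - 1) * k ≤ #(crossingItems T E P)) :
    HasStrength a b k := by
  intro r hr P hP
  have : Nonempty (Fin r) := ⟨⟨0, by lia⟩⟩
  obtain ⟨P, rfl⟩ := Subtype.val_injective.surjective_comp_right P
  have hk := hcut r hr P fun p => let ⟨i, hi⟩ := hP p; ⟨i, i.2, hi⟩
  rwa [crossingItems_eq_map_cutEdges hab, card_map] at hk

theorem eq_of_not_surjective_fin_two {β : Type*} {P : β → Fin 2} (hP : ¬P.Surjective) (i j : β) :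
    P i = P j := by
  simp only [Function.Surjective, not_forall, not_exists] at hP
  obtain ⟨p, hp⟩ := hP
  have hi := hp i
  have hj := hp j
  lia

theorem isCutSpread_of_crossingItems [DecidableEq ι] [DecidableEq α]
    (hab : ∀ (x : E) i, i ∈ T x ↔ i = a x ∨ i = b x) {𝒜 : Set (E → α)}
    (h𝒜 : ∀ B ∈ 𝒜, ∀ x : E, B x ∈ T x) {δ : ℝ}
    (hspread : ∀ P : α → Fin 2, (∀ p, ∃ i ∈ V, P i = p) →
      ∀ g : ι → α, (∀ j ∈ crossingItems T E P, g j ∈ T j) →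
        ({B ∈ 𝒜 | ∀ x : E, x.1 ∈ crossingItems T E P → B x = g x}.ncard : ℝ) ≤
          δ ^ #(crossingItems T E P) * 𝒜.ncard)
    [DecidablePred fun B : E → V => (fun x => (B x : α)) ∈ 𝒜] :
    IsCutSpread a b {B | (fun x => (B x : α)) ∈ 𝒜} δ := by
  intro P B₀ hB₀
  by_cases hP : P.Surjective
  swap
  · simp [cutEdges_eq_empty_of_const (eq_of_not_surjective_fin_two hP)]
  have hB₀T := h𝒜 _ (mem_filter.mp hB₀).2
  have hV𝒜 : ∀ B ∈ 𝒜, ∀ x, B x ∈ V := fun B hB x => by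
    obtain h | h := (hab x _).mp (h𝒜 B hB x) <;> simp [h]
  have : Nonempty α := ⟨(hP 0).choose⟩
  obtain ⟨g, hg⟩ := Subtype.val_injective.surjective_comp_right fun x : E => (B₀ x : α)
  have hgB₀ (x : E) : g x = B₀ x := congrFun hg x
  obtain ⟨P, rfl⟩ := Subtype.val_injective.surjective_comp_right P
  have hgT : ∀ j ∈ crossingItems T E P, g j ∈ T j := fun j hj => by
    have hjE := (mem_filter.mp hj).1
    exact (hgB₀ ⟨j, hjE⟩).symm ▸ hB₀T ⟨j, hjE⟩
  have hbound := hspread P (fun p => let ⟨i, hi⟩ := hP p; ⟨i, i.2, hi⟩) g hgT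
  classical
  rw [crossingItems_eq_map_cutEdges hab, card_map, ncard_eq_card_filter_coe_mem hV𝒜,
    ncard_eq_card_filter_coe_mem fun B hB => hV𝒜 B hB.1] at hbound
  convert hbound using 3
  ext B
  simp [hgB₀]

theorem isFeasible_iff_pairwise_disjoint {κ : Type*} (B : κ → ι → V) (f : α → κ) :
    IsFeasible B (f ∘ Subtype.val) ↔ (V : Set α).Pairwise fun i i' =>
      Disjoint {x | (B (f i) x : α) = i} {x | (B (f i') x : α) = i'} := by
  rw [← pairwise_subtype_iff_pairwise_set]
  simp only [IsFeasible, Subtype.ext_iff]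
  rfl

end Instance

theorem probabilistic_construction_general {ι α κ : Type*} [Fintype κ] {s t : ℝ} (hs : 2 ≤ s)
    (hst : t ≤ 1 / 3200 * s / Real.log s) {T : ι → Finset α} {V : Finset α} {E : Finset ι}
    (hT : ∀ j ∈ E, #(T j) = 2) (hV : V.Nonempty) (hVt : #V ≤ t) (hE : ∀ j ∈ E, T j ⊆ V)
    {𝒜 : Set (E → α)} (h𝒜₀ : 𝒜.Nonempty) (h𝒜 : ∀ B ∈ 𝒜, ∀ x : E, B x ∈ T x)
    (hcut : ∀ r : ℕ, 2 ≤ r → ∀ P : α → Fin r, (∀ p, ∃ i ∈ V, P i = p) →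
      (r - 1) * s / (50 * t) ≤ #(crossingItems T E P))
    (hspread : ∀ P : α → Fin 2, (∀ p, ∃ i ∈ V, P i = p) →
      ∀ g : ι → α, (∀ j ∈ crossingItems T E P, g j ∈ T j) →
        ({B ∈ 𝒜 | ∀ x : E, x.1 ∈ crossingItems T E P → B x = g x}.ncard : ℝ) ≤
          (2 : ℝ) ^ (-(24 / 25 : ℝ) * #(crossingItems T E P)) * 𝒜.ncard)
    (hκ : Fintype.card κ ≤ (2 : ℝ) ^ (1 / 800 * s / t)) :
    ∃ B : κ → E → α, (∀ ℓ, B ℓ ∈ 𝒜) ∧ ∀ f : α → κ, (∀ i ∈ V, ∀ i' ∈ V, f i = f i') ↔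
      (V : Set α).Pairwise fun i i' => Disjoint {x | B (f i) x = i} {x | B (f i') x = i'} := by
  classical
  obtain ⟨a, b, hends⟩ := exists_ends hT hE
  have hab (x : E) := (hends x).2
  have hstrength : HasStrength a b (s / (50 * t)) := hasStrength_of_crossingItems hab
    fun r hr P hP => (mul_div_assoc _ _ _).symm.trans_le (hcut r hr P hP)
  have hspread' : IsCutSpread a b {B | (fun x => (B x : α)) ∈ 𝒜} ((2 : ℝ) ^ (-(24 / 25) : ℝ)) :=
    isCutSpread_of_crossingItems hab h𝒜 fun P hP g hg => by
      simpa only [Real.rpow_mul_natCast zero_le_two] using hspread P hP g hg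
  have halloc : ∀ B ∈ ({B | (fun x => (B x : α)) ∈ 𝒜} : Finset (E → V)), IsAllocation a b B :=
    fun B hB x => by
      simpa only [Subtype.ext_iff] using (hab x _).mp (h𝒜 _ (mem_filter.mp hB).2 x)
  obtain ⟨B₀, hB₀⟩ := h𝒜₀
  have hnonempty : ({B | (fun x => (B x : α)) ∈ 𝒜} : Finset (E → V)).Nonempty :=
    ⟨fun x => ⟨B₀ x, hE x x.2 (h𝒜 B₀ hB₀ x)⟩, by simpa using hB₀⟩
  have : Nonempty V := hV.to_subtype
  have ht : 0 < t := (Nat.cast_pos.mpr hV.card_pos).trans_le hVt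
  have hnum := treePartition_lt_add_one (n := Fintype.card V - 1) hs ht hst
    (le_trans (by simp) hVt) hκ
  obtain ⟨B, hB𝒜, hB⟩ := exists_forall_isFeasible_imp_const (κ := κ) hnonempty halloc hstrength
    hspread' (by positivity) three_mul_sq_two_rpow_le_exp hnum
  refine ⟨fun ℓ x => B ℓ x, fun ℓ => (mem_filter.mp (hB𝒜 ℓ)).2, fun f => ?_⟩
  rw [← isFeasible_iff_pairwise_disjoint]
  exact ⟨fun h => isFeasible_of_const B fun i j => h i i.2 j j.2,
    fun h i hi j hj => hB _ h ⟨i, hi⟩ ⟨j, hj⟩⟩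

/-- probabilistic construction: if every partition of `V` into `r ≥ 2` nonempty
parts induces a large cut `C` (|C| ≥ (r−1)s/(50t)) and fixing the allocation of the items of `C`
keeps at most a `2^(-(24/25)|C|)` fraction of `𝒜'`, then with `z = ⌊2^(c₂·s/t)⌋` there exist
`B⁽¹⁾, …, B⁽ᶻ⁾ ∈ 𝒜'` such that a selection `f : V → [z]` yields pairwise disjoint
received-sets iff `f` is constant on `V`. -/
theorem probabilistic_construction :
    ∃ c₁ c₂ : ℝ, 0 < c₁ ∧ 0 < c₂ ∧
      ∀ s t : ℕ, 2 ≤ s → 2 ≤ t → (t : ℝ) ≤ c₁ * s / Real.log s →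
        ∀ T : Fin s → Finset (Fin t), (∀ j, (T j).card = 2) →
          ∀ (V : Finset (Fin t)) (E : Finset (Fin s)),
            2 ≤ V.card → (∀ j ∈ E, T j ⊆ V) →
            ∀ 𝒜' : Set ({x : Fin s // x ∈ E} → Fin t), 𝒜'.Nonempty →
              (∀ B ∈ 𝒜', ∀ x : {x : Fin s // x ∈ E}, B x ∈ T x.1) →
              (∀ (r : ℕ), 2 ≤ r → ∀ P : Fin t → Fin r,
                (∀ p : Fin r, ∃ i ∈ V, P i = p) →
                let C : Finset (Fin s) := E.filter fun j => ∃ a ∈ T j, ∃ b ∈ T j, P a ≠ P b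
                (((r : ℝ) - 1) * s / (50 * t) ≤ (C.card : ℝ)) ∧
                ∀ g : Fin s → Fin t, (∀ j ∈ C, g j ∈ T j) →
                  (({B ∈ 𝒜' | ∀ x : {x : Fin s // x ∈ E}, x.1 ∈ C → B x = g x.1}.ncard : ℝ)
                    ≤ (2 : ℝ) ^ (-(24 / 25 : ℝ) * (C.card : ℝ)) * (𝒜'.ncard : ℝ))) →
              ∀ z : ℕ, z = ⌊(2 : ℝ) ^ (c₂ * (s : ℝ) / (t : ℝ))⌋₊ →
                ∃ B : Fin z → ({x : Fin s // x ∈ E} → Fin t),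
                  (∀ ℓ : Fin z, B ℓ ∈ 𝒜') ∧
                  ∀ f : Fin t → Fin z,
                    ((∀ i ∈ V, ∀ i' ∈ V, f i = f i') ↔
                      (↑V : Set (Fin t)).Pairwise fun i i' =>
                        Disjoint {x : {x : Fin s // x ∈ E} | B (f i) x = i}
                          {x : {x : Fin s // x ∈ E} | B (f i') x = i'}) := by
  refine ⟨1 / 3200, 1 / 800, by norm_num, by norm_num, ?_⟩
  intro s t hs _ hst T hT V E hV hE 𝒜 h𝒜₀ h𝒜 h z hz
  have hVt : #V ≤ t := (card_le_univ V).trans_eq (Fintype.card_fin t)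
  have hκ : (Fintype.card (Fin z) : ℝ) ≤ (2 : ℝ) ^ (1 / 800 * s / t : ℝ) := by
    simpa [hz] using Nat.floor_le (by positivity : (0 : ℝ) ≤ 2 ^ (1 / 800 * s / t : ℝ))
  exact probabilistic_construction_general (mod_cast hs) hst (fun j _ => hT j)
    (card_pos.mp (two_pos.trans_le hV)) (mod_cast hVt) hE h𝒜₀ h𝒜
    (fun r hr P hP => by simpa only [crossingItems_eq_filter] using (h r hr P hP).1)
    (fun P hP => by simpa only [crossingItems_eq_filter] using (h 2 le_rfl P hP).2) hκ
end
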